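/- Let b>0 and B<3 be fixed real constants, and let m:ℕ→ℕ satisfy bn ≤ m(n) ≤ Bn for all sufficiently large n. Then there exists a constant α>0 (depending only on b and B) such that, for all sufficiently large n, the probability that P_{n,m(n)} has fewer than αn pendant edges is less than e^{−αn}. -/

import Mathlib

/-!
A pendant edge has at most two leaves (vertices of degree one), so it suffices that planar graphs
with at most `α n` leaves are exponentially rare. There are two regimes.

**Many edges, `m ≥ (1 + ε) n`.** Joining two connected planar graphs by a new edge shows that the
number of connected planar graphs, suitably normalised, is supermultiplicative in `(n, m)`. It is at
most exponential, since there are at most `C ^ n * n!` planar graphs, and at least exponential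
strictly inside the cone of possible densities. Fekete's lemma along rational directions then bounds
its ratio between `(n + k, m + k + j)` and `(n, m)` by `exp (K δ n)` for `j ≤ k ≤ δ n`, where `K`
does not depend on `δ`, and joining up components transfers this bound to all planar graphs. On the
other hand, attaching `k ≈ δ n` new pendant vertices to a graph with few leaves can be done in about
`n ^ k` ways up to relabelling, while any graph arises in at most `(3 δ n) ^ k` ways, because the
attached vertices are among its few leaves. So the proportion of graphs with few leaves is at most
`(3 δ) ^ k * exp (K δ n)`, which is exponentially small once `δ` is small.

**Few edges, `m ≤ 1.01 n`.** A graph with few leaves has linearly many isolated vertices, vertices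
of degree two with non-adjacent neighbours, or triangle components. Each of these allows a switching
that preserves planarity, `n` and `m` and creates at most four leaves, at least one of which marks
the place of the switching; so allowing four more leaves multiplies the number of graphs by a factor
of order `n / (δ n)`, and `δ n` rounds give an exponential factor.

All that is used of planarity is its closure under subgraphs, contractions and unions sharing at
most one vertex, a linear bound on the number of edges, and the existence of planar graphs with at
least `3 n - 9` edges.
-/

open SimpleGraph Filter Asymptotics

/-- `H` is a minor of `G`: to each vertex of `H` we can assign a connected nonempty
branch set in `G`, pairwise disjoint, with an edge of `G` between the branch sets of
any two adjacent vertices of `H`. -/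
def IsMinor {α β : Type*} (H : SimpleGraph α) (G : SimpleGraph β) : Prop :=
  ∃ f : α → Set β,
    (∀ a, (G.induce (f a)).Connected) ∧
    (∀ a b, a ≠ b → Disjoint (f a) (f b)) ∧
    (∀ a b, H.Adj a b → ∃ u ∈ f a, ∃ v ∈ f b, G.Adj u v)

/-- A graph is planar iff it has neither a `K₅`-minor nor a `K₃,₃`-minor
(Wagner's theorem). -/
def IsPlanar {V : Type*} (G : SimpleGraph V) : Prop :=
  ¬ IsMinor (completeGraph (Fin 5)) G ∧
    ¬ IsMinor (completeBipartiteGraph (Fin 3) (Fin 3)) G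

/-- The number of edges of a graph. -/
noncomputable def edgeCount {V : Type*} (G : SimpleGraph V) : ℕ :=
  G.edgeSet.ncard

/-- The degree of a vertex. -/
noncomputable def vertexDegree {V : Type*} (G : SimpleGraph V) (v : V) : ℕ :=
  (G.neighborSet v).ncard

/-- `𝒫(n,m)`: the set of labelled planar graphs on `{1,…,n}` with exactly `m` edges. -/
def planarSet (n m : ℕ) : Set (SimpleGraph (Fin n)) :=
  {G | IsPlanar G ∧ edgeCount G = m}

/-- The probability that the uniform random planar graph `P_{n,m}` satisfies `P`. -/
noncomputable def planarProb (n m : ℕ) (P : SimpleGraph (Fin n) → Prop) : ℝ :=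
  ({G ∈ planarSet n m | P G}.ncard : ℝ) / ((planarSet n m).ncard : ℝ)

/-- The number of pendant edges (edges incident to a vertex of degree 1). -/
noncomputable def pendantCount {V : Type*} (G : SimpleGraph V) : ℕ :=
  {e ∈ G.edgeSet | ∃ v ∈ e, vertexDegree G v = 1}.ncard

/-- The set of addable non-edges of `G`: non-edges whose addition keeps the graph planar. -/
def addableSet {V : Type*} (G : SimpleGraph V) : Set (Sym2 V) :=
  {e | ¬ e.IsDiag ∧ e ∉ G.edgeSet ∧ IsPlanar (G ⊔ SimpleGraph.fromEdgeSet {e})}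

/-- `add(n,m)`: the minimum number of addable non-edges over all graphs in `𝒫(n,m)`. -/
noncomputable def addMin (n m : ℕ) : ℕ :=
  sInf ((fun G => (addableSet G).ncard) '' planarSet n m)

/-- `W` carries an induced order-preserving copy of `H` in `G`: the increasing bijection
from `{1,…,h}` to `W` is an isomorphism between `H` and the induced subgraph `G[W]`. -/
def IsOrderCopy {h n : ℕ} (H : SimpleGraph (Fin h)) (G : SimpleGraph (Fin n))
    (W : Finset (Fin n)) : Prop :=
  ∃ hW : W.card = h,
    ∀ i j : Fin h,
      H.Adj i j ↔ G.Adj ((W.orderIsoOfFin hW i : Fin n)) ((W.orderIsoOfFin hW j : Fin n))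

/-- `W` is the vertex set of a connected component of `G`. -/
def IsComponent {V : Type*} (G : SimpleGraph V) (W : Finset V) : Prop :=
  (G.induce (W : Set V)).Connected ∧ ∀ v ∈ W, ∀ u, G.Adj v u → u ∈ W

/-- The number of components of `G` admitting an order-preserving isomorphism to `H`. -/
noncomputable def numOrderComponents {h n : ℕ} (H : SimpleGraph (Fin h))
    (G : SimpleGraph (Fin n)) : ℕ :=
  {W : Finset (Fin n) | IsComponent G W ∧ IsOrderCopy H G W}.ncard

/-- The number of distinct cycles (as subgraphs, identified with their edge sets) of
length at most `k` in `S`. -/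
noncomputable def cycleCountLe {V : Type*} (S : SimpleGraph V) (k : ℕ) : ℕ :=
  {E : Set (Sym2 V) | ∃ (v : V) (c : S.Walk v v),
    c.IsCycle ∧ c.length ≤ k ∧ {e | e ∈ c.edges} = E}.ncard

/-! ### Minors -/

theorem reachable_map_of_forall_adj {V W : Type*} {G : SimpleGraph V} {G' : SimpleGraph W}
    (φ : V → W) (hφ : ∀ x y, G.Adj x y → G'.Reachable (φ x) (φ y)) {x y : V}
    (h : G.Reachable x y) : G'.Reachable (φ x) (φ y) := by
  simp only [reachable_iff_reflTransGen] at h hφ ⊢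
  exact h.lift' φ hφ

theorem connected_induce_image {V W : Type*} {G : SimpleGraph V} {G' : SimpleGraph W} {s : Set V}
    (h : (G.induce s).Connected) (φ : V → W)
    (hφ : ∀ x ∈ s, ∀ y ∈ s, G.Adj x y → φ x = φ y ∨ G'.Adj (φ x) (φ y)) :
    (G'.induce (φ '' s)).Connected := by
  let ψ : s → φ '' s := fun x => ⟨φ x, x, x.2, rfl⟩
  have hψ : ∀ x y : s, (G.induce s).Adj x y → (G'.induce (φ '' s)).Reachable (ψ x) (ψ y) := by
    intro x y hxy
    rcases hφ x x.2 y y.2 hxy with heq | hadj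
    · rw [show ψ x = ψ y from Subtype.ext heq]
    · exact Adj.reachable (G := G'.induce (φ '' s)) hadj
  have : Nonempty (φ '' s) := h.nonempty.map ψ
  refine ⟨?_⟩
  rintro ⟨_, x, hx, rfl⟩ ⟨_, y, hy, rfl⟩
  exact reachable_map_of_forall_adj ψ hψ (h.preconnected ⟨x, hx⟩ ⟨y, hy⟩)

theorem connected_induce_preimage {V W : Type*} {G : SimpleGraph V} {φ : V → W} {t : Set W}
    (hφ : ∀ w, (G.induce (φ ⁻¹' {w})).Preconnected) (ht : ((G.map φ).induce t).Preconnected)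
    (hne : (φ ⁻¹' t).Nonempty) : (G.induce (φ ⁻¹' t)).Connected := by
  have fiber : ∀ x y (hx : φ x ∈ t) (hy : φ y ∈ t), φ x = φ y →
      (G.induce (φ ⁻¹' t)).Reachable ⟨x, hx⟩ ⟨y, hy⟩ := fun x y _ hy hxy =>
    have hsub : φ ⁻¹' {φ y} ⊆ φ ⁻¹' t := Set.preimage_mono (Set.singleton_subset_iff.2 hy)
    (hφ (φ y) ⟨x, hxy⟩ ⟨y, rfl⟩).map (induceHomOfLE G hsub).toHom
  have lift : ∀ p q : t, ((G.map φ).induce t).Reachable p q → ∀ x y (hx : φ x = p) (hy : φ y = q),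
      (G.induce (φ ⁻¹' t)).Reachable ⟨x, by simp [hx]⟩ ⟨y, by simp [hy]⟩ := by
    rintro p q ⟨w⟩
    induction w with
    | nil => exact fun x y hx hy => fiber x y _ _ (hx.trans hy.symm)
    | @cons p q r hpq _ ih =>
      intro x y hx hy
      obtain ⟨_, x', y', hxy, hx', hy'⟩ := hpq
      have hx't : x' ∈ φ ⁻¹' t := by simp only [Set.mem_preimage, hx']; exact p.2
      have hy't : y' ∈ φ ⁻¹' t := by simp only [Set.mem_preimage, hy']; exact q.2
      have hadj : (G.induce (φ ⁻¹' t)).Adj ⟨x', hx't⟩ ⟨y', hy't⟩ := hxy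
      exact ((fiber x x' _ hx't (hx.trans hx'.symm)).trans hadj.reachable).trans
        (ih y' y hy' hy)
  have : Nonempty (φ ⁻¹' t) := hne.to_subtype
  exact ⟨fun x y => lift _ _ (ht ⟨φ x, x.2⟩ ⟨φ y, y.2⟩) x y rfl rfl⟩

theorem exists_adj_of_connected_induce {V : Type*} {G : SimpleGraph V} {s S : Set V} {x y : V}
    (h : (G.induce s).Preconnected) (hx : x ∈ s) (hxS : x ∈ S) (hy : y ∈ s) (hyS : y ∉ S) :
    ∃ p ∈ s, ∃ q ∈ s, G.Adj p q ∧ p ∈ S ∧ q ∉ S := by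
  obtain ⟨w⟩ := h ⟨x, hx⟩ ⟨y, hy⟩
  obtain ⟨d, -, hd⟩ := w.exists_boundary_dart (Subtype.val ⁻¹' S) hxS hyS
  exact ⟨d.fst, d.fst.2, d.snd, d.snd.2, d.adj, hd⟩

theorem IsMinor.mono {α V : Type*} {H : SimpleGraph α} {G G' : SimpleGraph V}
    (h : IsMinor H G) (hG : G ≤ G') : IsMinor H G' := by
  obtain ⟨f, hconn, hdisj, hadj⟩ := h
  refine ⟨f, fun a => (hconn a).mono (comap_monotone _ hG), hdisj, fun a b hab => ?_⟩
  obtain ⟨u, hu, v, hv, huv⟩ := hadj a b hab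
  exact ⟨u, hu, v, hv, hG huv⟩

/-- A vertex outside the range of `φ` cannot be lifted; it is kept out of the branch sets by
giving every vertex of `H` a neighbour. -/
theorem IsMinor.of_map {α V W : Type*} {H : SimpleGraph α} {G : SimpleGraph V} {φ : V → W}
    (hH : ∀ a, ∃ b, H.Adj a b) (hφ : ∀ w, (G.induce (φ ⁻¹' {w})).Preconnected)
    (h : IsMinor H (G.map φ)) : IsMinor H G := by
  obtain ⟨f, hconn, hdisj, hadj⟩ := h
  have hlift : ∀ a b, H.Adj a b → ∃ x ∈ φ ⁻¹' f a, ∃ y ∈ φ ⁻¹' f b, G.Adj x y := by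
    intro a b hab
    obtain ⟨_, hu, _, hv, _, x, y, hxy, rfl, rfl⟩ := hadj a b hab
    exact ⟨x, hu, y, hv, hxy⟩
  refine ⟨fun a => φ ⁻¹' f a, fun a => connected_induce_preimage hφ (hconn a).preconnected ?_,
    fun a b hab => (hdisj a b hab).preimage φ, hlift⟩
  obtain ⟨b, hab⟩ := hH a
  obtain ⟨x, hx, -⟩ := hlift a b hab
  exact ⟨x, hx⟩

theorem IsMinor.of_comap {α V W : Type*} {H : SimpleGraph α} {G : SimpleGraph W} {e : V → W}
    (he : Function.Injective e) (h : IsMinor H (G.comap e)) : IsMinor H G := by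
  obtain ⟨f, hconn, hdisj, hadj⟩ := h
  refine ⟨fun a => e '' f a, fun a => connected_induce_image (hconn a) e fun _ _ _ _ => Or.inr,
    fun a b hab => (Set.disjoint_image_iff he).2 (hdisj a b hab), fun a b hab => ?_⟩
  obtain ⟨u, hu, v, hv, huv⟩ := hadj a b hab
  exact ⟨e u, ⟨u, hu, rfl⟩, e v, ⟨v, hv, rfl⟩, huv⟩

theorem subset_support_of_connected_induce {V : Type*} {G : SimpleGraph V} {s : Set V}
    (hs : (G.induce s).Preconnected) {u v : V} (hu : u ∈ s) (huv : G.Adj u v) : s ⊆ G.support := by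
  intro x hx
  by_cases hxu : x = u
  · exact ⟨v, hxu ▸ huv⟩
  · obtain ⟨p, -, q, -, hpq, rfl, -⟩ := exists_adj_of_connected_induce (S := {x}) hs hx rfl hu
      fun h => hxu (Set.mem_singleton_iff.1 h).symm
    exact ⟨q, hpq⟩

/-! ### Gluing along a vertex -/

/-- The graph stays connected after the deletion of at most one vertex, and every vertex has a
neighbour. The one-vertex deletions are encoded as deletions of subsingletons. -/
structure IsTwoConnected {α : Type*} (H : SimpleGraph α) : Prop where
  preconnected_induce_compl : ∀ P : Set α, P.Subsingleton → (H.induce Pᶜ).Preconnected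
  exists_adj : ∀ a, ∃ b, H.Adj a b

theorem isTwoConnected_completeGraph (r : ℕ) : IsTwoConnected (completeGraph (Fin (r + 2))) where
  preconnected_induce_compl P _ x y := by
    by_cases hxy : x = y
    · rw [hxy]
    · exact Adj.reachable (G := (completeGraph (Fin (r + 2))).induce Pᶜ)
        fun h => hxy (Subtype.ext h)
  exists_adj a := (exists_ne a).imp fun _ => Ne.symm

theorem isTwoConnected_completeBipartiteGraph (r s : ℕ) :
    IsTwoConnected (completeBipartiteGraph (Fin (r + 2)) (Fin (s + 2))) where
  preconnected_induce_compl P hP := by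
    have hl : ∃ i, Sum.inl i ∉ P := by
      by_contra! h
      simpa using hP (h 0) (h 1)
    have hr : ∃ j, Sum.inr j ∉ P := by
      by_contra! h
      simpa using hP (h 0) (h 1)
    obtain ⟨i₀, hi₀⟩ := hl
    obtain ⟨j₀, hj₀⟩ := hr
    let K := (completeBipartiteGraph (Fin (r + 2)) (Fin (s + 2))).induce Pᶜ
    have hadj : ∀ i j (hi : Sum.inl i ∈ Pᶜ) (hj : Sum.inr j ∈ Pᶜ),
        K.Adj ⟨Sum.inl i, hi⟩ ⟨Sum.inr j, hj⟩ := fun i j _ _ => by simp [K]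
    have hreach : ∀ x, K.Reachable ⟨Sum.inl i₀, hi₀⟩ x := by
      rintro ⟨i | j, hx⟩
      · exact (hadj i₀ j₀ hi₀ hj₀).reachable.trans (hadj i j₀ hx hj₀).symm.reachable
      · exact (hadj i₀ j hi₀ hx).reachable
    exact fun x y => (hreach x).symm.trans (hreach y)
  exists_adj := by
    rintro (i | j)
    · exact ⟨Sum.inr 0, by simp⟩
    · exact ⟨Sum.inl 0, by simp⟩

section OneSum

variable {V : Type*} {A B : SimpleGraph V} {S T : Set V}

theorem exists_mem_inter_of_connected_induce_sup (hA : A.support ⊆ S) (hB : B.support ⊆ T)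
    {s : Set V} (hs : ((A ⊔ B).induce s).Preconnected)
    (hsS : (s ∩ S).Nonempty) (hsT : (s ∩ T).Nonempty) : ∃ p ∈ s, p ∈ S ∩ T := by
  obtain ⟨x, hx, hxS⟩ := hsS
  obtain ⟨y, hy, hyT⟩ := hsT
  by_cases hyS : y ∈ S
  · exact ⟨y, hy, hyS, hyT⟩
  · obtain ⟨p, hp, q, -, hadj | hadj, hpS, hqS⟩ := exists_adj_of_connected_induce hs hx hxS hy hyS
    · exact absurd (hA ⟨p, hadj.symm⟩) hqS
    · exact ⟨p, hp, hpS, hB ⟨q, hadj⟩⟩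

/-- Retract the branch set onto `S` by sending everything outside `S` to the cut vertex. -/
theorem connected_induce_inter_of_sup (hA : A.support ⊆ S) (hB : B.support ⊆ T)
    (hST : S ∪ T = Set.univ) (hcut : (S ∩ T).Subsingleton) {s : Set V}
    (hs : ((A ⊔ B).induce s).Connected) (hsS : (s ∩ S).Nonempty) :
    (A.induce (s ∩ S)).Connected := by
  classical
  have hTS : ∀ x, x ∉ S → x ∈ T := fun x hx =>
    (hST ▸ Set.mem_univ x : x ∈ S ∪ T).resolve_left hx
  obtain ⟨q, ⟨hqs, hqS⟩, hqT⟩ : ∃ q ∈ s ∩ S, ∀ x ∈ s, x ∉ S → q ∈ T := by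
    by_cases hout : ∃ x ∈ s, x ∉ S
    · obtain ⟨x, hx, hxS⟩ := hout
      obtain ⟨q, hq, hqS, hqT⟩ := exists_mem_inter_of_connected_induce_sup hA hB
        hs.preconnected hsS ⟨x, hx, hTS x hxS⟩
      exact ⟨q, ⟨hq, hqS⟩, fun _ _ _ => hqT⟩
    · push Not at hout
      exact hsS.imp fun q hq => ⟨hq, fun x hx hxS => absurd (hout x hx) hxS⟩
  have hcross : ∀ x ∈ s, ∀ y ∈ s, (A ⊔ B).Adj x y → x ∈ S → y ∉ S → x = q := by
    rintro x - y hy (hxy | hxy) hxS hyS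
    · exact absurd (hA ⟨x, hxy.symm⟩) hyS
    · exact hcut ⟨hxS, hB ⟨y, hxy⟩⟩ ⟨hqS, hqT y hy hyS⟩
  have himage : (fun x => if x ∈ S then x else q) '' s = s ∩ S := by
    ext x
    constructor
    · rintro ⟨y, hy, rfl⟩
      by_cases hyS : y ∈ S <;> simp [hyS, hy, hqs, hqS]
    · rintro ⟨hx, hxS⟩
      exact ⟨x, hx, if_pos hxS⟩
  rw [← himage]
  refine connected_induce_image hs _ fun x hx y hy hxy => ?_
  by_cases hxS : x ∈ S <;> by_cases hyS : y ∈ S <;> simp only [hxS, hyS, if_true, if_false]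
  · rcases hxy with hxy | hxy
    · exact Or.inr hxy
    · exact Or.inl (hcut ⟨hxS, hB ⟨y, hxy⟩⟩ ⟨hyS, hB ⟨x, hxy.symm⟩⟩)
  · exact Or.inl (hcross x hx y hy hxy hxS hyS)
  · exact Or.inl (hcross y hy x hx hxy.symm hyS hxS).symm
  · exact Or.inl trivial

theorem isMinor_of_forall_inter_nonempty {α : Type*} {H : SimpleGraph α} {f : α → Set V}
    (hA : A.support ⊆ S) (hB : B.support ⊆ T) (hST : S ∪ T = Set.univ)
    (hcut : (S ∩ T).Subsingleton) (hconn : ∀ a, ((A ⊔ B).induce (f a)).Connected)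
    (hdisj : ∀ a b, a ≠ b → Disjoint (f a) (f b))
    (hadj : ∀ a b, H.Adj a b → ∃ u ∈ f a, ∃ v ∈ f b, (A ⊔ B).Adj u v)
    (hS : ∀ a, (f a ∩ S).Nonempty) : IsMinor H A := by
  refine ⟨fun a => f a ∩ S,
    fun a => connected_induce_inter_of_sup hA hB hST hcut (hconn a) (hS a),
    fun a b hab => (hdisj a b hab).mono Set.inter_subset_left Set.inter_subset_left,
    fun a b hab => ?_⟩
  obtain ⟨u, hu, v, hv, huv | huv⟩ := hadj a b hab
  · exact ⟨u, ⟨hu, hA ⟨v, huv⟩⟩, v, ⟨hv, hA ⟨u, huv.symm⟩⟩, huv⟩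
  · obtain ⟨p, hpa, hp⟩ := exists_mem_inter_of_connected_induce_sup hA hB
      (hconn a).preconnected (hS a) ⟨u, hu, hB ⟨v, huv⟩⟩
    obtain ⟨q, hqb, hq⟩ := exists_mem_inter_of_connected_induce_sup hA hB
      (hconn b).preconnected (hS b) ⟨v, hv, hB ⟨u, huv.symm⟩⟩
    exact absurd hqb (Set.disjoint_left.1 (hdisj a b hab.ne) (hcut hp hq ▸ hpa))

/-- At most one branch set meets both sides, and the others cannot lie on different sides because
deleting one vertex of `H` does not disconnect it. -/
theorem IsTwoConnected.isMinor_or_isMinor_of_sup {α : Type*} {H : SimpleGraph α}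
    (hH : IsTwoConnected H) (hcut : (A.support ∩ B.support).Subsingleton)
    (h : IsMinor H (A ⊔ B)) : IsMinor H A ∨ IsMinor H B := by
  obtain ⟨f, hconn, hdisj, hadj⟩ := h
  obtain ⟨S, hS⟩ : ∃ S, S = A.support ∪ B.supportᶜ := ⟨_, rfl⟩
  have hA : A.support ⊆ S := hS ▸ Set.subset_union_left
  have hST : S ∪ B.support = Set.univ := by
    rw [hS, Set.union_assoc, Set.compl_union_self, Set.union_univ]
  have hcut' : (S ∩ B.support).Subsingleton := by
    rwa [hS, Set.union_inter_distrib_right, Set.compl_inter_self, Set.union_empty]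
  by_contra! hnot
  have hleft : ∃ a, ¬ (f a ∩ S).Nonempty := by
    by_contra! hall
    exact hnot.1 (isMinor_of_forall_inter_nonempty hA subset_rfl hST hcut' hconn hdisj hadj hall)
  have hright : ∃ b, ¬ (f b ∩ B.support).Nonempty := by
    by_contra! hall
    refine hnot.2 (isMinor_of_forall_inter_nonempty (A := B) (B := A) subset_rfl hA
      (Set.union_comm _ _ ▸ hST) (Set.inter_comm _ _ ▸ hcut') ?_ hdisj ?_ hall)
    · simpa only [sup_comm B A] using hconn
    · simpa only [sup_comm B A] using hadj
  obtain ⟨a, ha⟩ := hleft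
  obtain ⟨b, hb⟩ := hright
  have hP : {c | (f c ∩ S).Nonempty ∧ (f c ∩ B.support).Nonempty}.Subsingleton := by
    rintro c ⟨hcS, hcT⟩ d ⟨hdS, hdT⟩
    obtain ⟨p, hpc, hp⟩ := exists_mem_inter_of_connected_induce_sup hA subset_rfl
      (hconn c).preconnected hcS hcT
    obtain ⟨q, hqd, hq⟩ := exists_mem_inter_of_connected_induce_sup hA subset_rfl
      (hconn d).preconnected hdS hdT
    by_contra hcd
    exact Set.disjoint_left.1 (hdisj c d hcd) hpc (hcut' hp hq ▸ hqd)
  have hbS : (f b ∩ S).Nonempty := by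
    obtain ⟨x, hx⟩ := (hconn b).nonempty
    exact ⟨x, hx, (hST ▸ Set.mem_univ x : x ∈ S ∪ B.support).resolve_right
      fun hxT => hb ⟨x, hx, hxT⟩⟩
  obtain ⟨c, hc, d, -, hcd, hcS, hdS⟩ := exists_adj_of_connected_induce
    (S := {c | (f c ∩ S).Nonempty}) (hH.preconnected_induce_compl _ hP)
    (x := b) (y := a) (fun h => hb h.2) hbS (fun h => ha h.1) ha
  obtain ⟨u, hu, v, hv, huv | huv⟩ := hadj c d hcd
  · exact hdS ⟨v, hv, hA ⟨u, huv.symm⟩⟩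
  · exact hc ⟨hcS, u, hu, v, huv⟩

end OneSum

/-! ### Operations preserving planarity -/

theorem IsPlanar.mono {V : Type*} {G G' : SimpleGraph V} (h : IsPlanar G') (hG : G ≤ G') :
    IsPlanar G :=
  ⟨fun h' => h.1 (h'.mono hG), fun h' => h.2 (h'.mono hG)⟩

theorem IsPlanar.map {V W : Type*} {G : SimpleGraph V} {φ : V → W} (h : IsPlanar G)
    (hφ : ∀ w, (G.induce (φ ⁻¹' {w})).Preconnected) : IsPlanar (G.map φ) :=
  ⟨fun h' => h.1 (h'.of_map (isTwoConnected_completeGraph 3).exists_adj hφ),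
    fun h' => h.2 (h'.of_map (isTwoConnected_completeBipartiteGraph 1 1).exists_adj hφ)⟩

theorem IsPlanar.map_of_injective {V W : Type*} {G : SimpleGraph V} {φ : V → W} (h : IsPlanar G)
    (hφ : Function.Injective φ) : IsPlanar (G.map φ) := by
  refine h.map fun w x y => ?_
  rw [Subtype.ext (hφ (x.2.trans y.2.symm) : (x : V) = y)]

theorem IsPlanar.comap {V W : Type*} {G : SimpleGraph W} {e : V → W} (h : IsPlanar G)
    (he : Function.Injective e) : IsPlanar (G.comap e) :=
  ⟨fun h' => h.1 (h'.of_comap he), fun h' => h.2 (h'.of_comap he)⟩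

theorem IsPlanar.sup {V : Type*} {A B : SimpleGraph V} (hA : IsPlanar A) (hB : IsPlanar B)
    (hcut : (A.support ∩ B.support).Subsingleton) : IsPlanar (A ⊔ B) :=
  ⟨fun h => ((isTwoConnected_completeGraph 3).isMinor_or_isMinor_of_sup hcut h).elim hA.1 hB.1,
    fun h => ((isTwoConnected_completeBipartiteGraph 1 1).isMinor_or_isMinor_of_sup hcut h).elim
      hA.2 hB.2⟩

theorem IsMinor.card_le_ncard_support {α V : Type*} [Finite V] {H : SimpleGraph α}
    {G : SimpleGraph V} (hH : ∀ a, ∃ b, H.Adj a b) (h : IsMinor H G) :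
    Nat.card α ≤ G.support.ncard := by
  obtain ⟨f, -, hdisj, hadj⟩ := h
  have hpick : ∀ a, ∃ x ∈ f a, x ∈ G.support := fun a => by
    obtain ⟨b, hab⟩ := hH a
    obtain ⟨u, hu, v, -, huv⟩ := hadj a b hab
    exact ⟨u, hu, v, huv⟩
  choose g hg hgG using hpick
  have hinj : Function.Injective g := fun a b hab => by
    by_contra hne
    exact Set.disjoint_left.1 (hdisj a b hne) (hg a) (hab ▸ hg b)
  rw [← Set.ncard_univ, ← Set.ncard_image_of_injective _ hinj]
  exact Set.ncard_le_ncard (by rintro _ ⟨a, -, rfl⟩; exact hgG a) (Set.toFinite _)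

theorem isPlanar_of_ncard_support_le_four {V : Type*} [Finite V] {G : SimpleGraph V}
    (h : G.support.ncard ≤ 4) : IsPlanar G := by
  constructor
  · intro h'
    have := h'.card_le_ncard_support (isTwoConnected_completeGraph 3).exists_adj
    simp only [Nat.card_eq_fintype_card, Fintype.card_fin] at this
    omega
  · intro h'
    have := h'.card_le_ncard_support (isTwoConnected_completeBipartiteGraph 1 1).exists_adj
    simp only [Nat.card_eq_fintype_card, Fintype.card_sum, Fintype.card_fin] at this
    omega

theorem support_edge_subset {V : Type*} (u v : V) : (edge u v).support ⊆ {u, v} := by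
  rintro x ⟨y, hxy⟩
  rcases ((edge_adj u v x y).1 hxy).1 with ⟨rfl, -⟩ | ⟨rfl, -⟩ <;> simp

theorem isPlanar_edge {V : Type*} [Finite V] (u v : V) : IsPlanar (edge u v) := by
  refine isPlanar_of_ncard_support_le_four ?_
  have := Set.ncard_le_ncard (support_edge_subset u v) (Set.toFinite _)
  have := Set.ncard_insert_le u {v}
  rw [Set.ncard_singleton] at this
  omega

theorem adj_spanningCoe_induce {V : Type*} {G : SimpleGraph V} {X : Set V} {x y : V} :
    (G.induce X).spanningCoe.Adj x y ↔ G.Adj x y ∧ x ∈ X ∧ y ∈ X := by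
  simp only [map_adj, comap_adj, Subtype.exists]
  constructor
  · rintro ⟨a, ha, b, hb, hab, rfl, rfl⟩
    exact ⟨hab, ha, hb⟩
  · rintro ⟨hxy, hx, hy⟩
    exact ⟨x, hx, y, hy, hxy, rfl, rfl⟩

theorem support_spanningCoe_induce_subset {V : Type*} (G : SimpleGraph V) (X : Set V) :
    (G.induce X).spanningCoe.support ⊆ X := by
  rintro x ⟨y, hxy⟩
  exact (adj_spanningCoe_induce.1 hxy).2.1

/-- Split `G` into the component of `u` and the rest; the new edge meets each of them in at most
one vertex. -/
theorem IsPlanar.sup_edge_of_not_reachable {V : Type*} [Finite V] {G : SimpleGraph V} {u v : V}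
    (hG : IsPlanar G) (huv : ¬ G.Reachable u v) : IsPlanar (G ⊔ edge u v) := by
  let C : Set V := {x | G.Reachable u x}
  have hsplit : G ⊔ edge u v =
      ((G.induce C).spanningCoe ⊔ edge u v) ⊔ (G.induce Cᶜ).spanningCoe := by
    refine le_antisymm (sup_le (fun x y hxy => ?_) (le_sup_right.trans le_sup_left))
      (sup_le (sup_le_sup_right (spanningCoe_induce_le G C) _)
        ((spanningCoe_induce_le G _).trans le_sup_left))
    by_cases hx : G.Reachable u x
    · exact Or.inl (Or.inl (adj_spanningCoe_induce.2 ⟨hxy, hx, hx.trans hxy.reachable⟩))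
    · exact Or.inr (adj_spanningCoe_induce.2
        ⟨hxy, hx, fun hy => hx (hy.trans hxy.symm.reachable)⟩)
  have hC := support_spanningCoe_induce_subset G C
  have hC' := support_spanningCoe_induce_subset G Cᶜ
  have hedge := support_edge_subset u v
  rw [hsplit]
  refine ((hG.mono (spanningCoe_induce_le _ _)).sup (isPlanar_edge u v) ?_).sup
    (hG.mono (spanningCoe_induce_le _ _)) ?_
  · refine Set.subsingleton_of_subset_singleton (a := u) fun x ⟨hx, hx'⟩ => ?_
    exact (hedge hx').resolve_right fun h => huv (h ▸ hC hx)
  · refine Set.subsingleton_of_subset_singleton (a := v) ?_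
    rintro x ⟨⟨y, hxy | hxy⟩, hx'⟩
    · exact absurd (hC ⟨y, hxy⟩) (hC' hx')
    · exact (hedge ⟨y, hxy⟩).resolve_left fun h => hC' hx' (h ▸ Reachable.refl u)

/-! ### Contraction -/

section Contract

variable {V : Type*} {G : SimpleGraph V} {u v : V}

open Classical in
/-- The contraction of `v` into `u`. The vertex type is kept: the edges of `v` are moved to `u` and
`v` becomes isolated. -/
noncomputable def contract (G : SimpleGraph V) (u v : V) : SimpleGraph V :=
  G.map (Function.update id v u)

theorem contract_adj (huv : u ≠ v) {x y : V} :
    (contract G u v).Adj x y ↔ x ≠ y ∧ x ≠ v ∧ y ≠ v ∧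
      (G.Adj x y ∨ (x = u ∧ G.Adj v y) ∨ (y = u ∧ G.Adj v x)) := by
  simp only [contract, map_adj', Function.update_apply, id]
  constructor
  · rintro ⟨hne, x', y', hxy, rfl, rfl⟩
    have := hxy.symm
    grind [SimpleGraph.irrefl]
  · rintro ⟨hne, hx, hy, h | ⟨rfl, h⟩ | ⟨rfl, h⟩⟩
    · exact ⟨hne, x, y, h, by simp [hx], by simp [hy]⟩
    · exact ⟨hne, v, y, h, by simp, by simp [hy]⟩
    · exact ⟨hne, x, v, h.symm, by simp [hx], by simp⟩

theorem preconnected_induce_update_preimage [DecidableEq V] (huv : G.Adj u v) (w : V) :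
    (G.induce (Function.update id v u ⁻¹' {w})).Preconnected := by
  rintro ⟨x, hx⟩ ⟨y, hy⟩
  have hxy : x = y ∨ G.Adj x y := by
    have := huv.symm
    simp only [Set.mem_preimage, Function.update_apply, id, Set.mem_singleton_iff] at hx hy
    grind
  rcases hxy with rfl | hxy
  · exact Reachable.refl _
  · exact Adj.reachable (G := G.induce _) hxy

theorem IsMinor.of_contract {α : Type*} {H : SimpleGraph α} (hH : ∀ a, ∃ b, H.Adj a b)
    (huv : G.Adj u v) (h : IsMinor H (contract G u v)) : IsMinor H G := by
  classical
  exact h.of_map hH (preconnected_induce_update_preimage huv)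

theorem IsPlanar.contract (h : IsPlanar G) (huv : G.Adj u v) : IsPlanar (contract G u v) := by
  classical
  exact h.map (preconnected_induce_update_preimage huv)

theorem support_contract_subset (huv : G.Adj u v) :
    (contract G u v).support ⊆ G.support \ {v} := by
  rintro x ⟨y, hxy⟩
  obtain ⟨-, hxv, -, h | ⟨rfl, -⟩ | ⟨-, h⟩⟩ := (contract_adj huv.ne).1 hxy
  · exact ⟨⟨y, h⟩, hxv⟩
  · exact ⟨⟨v, huv⟩, hxv⟩
  · exact ⟨⟨v, h.symm⟩, hxv⟩

theorem neighborSet_contract (huv : G.Adj u v) :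
    (contract G u v).neighborSet u = (G.neighborSet u ∪ G.neighborSet v) \ {u, v} := by
  ext y
  have := huv.ne
  simp only [mem_neighborSet, contract_adj huv.ne, Set.mem_sdiff, Set.mem_union,
    Set.mem_insert_iff, Set.mem_singleton_iff]
  grind

end Contract

/-! ### Counting moves -/

section Counting

variable {α β : Type*} [Finite α] [Finite β] (X : Set α) (D : α → Set β)

theorem ncard_setOf_mem_and_mem :
    {p : α × β | p.1 ∈ X ∧ p.2 ∈ D p.1}.ncard = ∑ a ∈ X.toFinite.toFinset, (D a).ncard := by
  classical
  have := Fintype.ofFinite α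
  have := Fintype.ofFinite β
  have h : {p : α × β | p.1 ∈ X ∧ p.2 ∈ D p.1} =
      ((X.toFinite.toFinset.sigma fun a => (D a).toFinite.toFinset).map
        (Equiv.sigmaEquivProd α β).toEmbedding : Finset (α × β)) := by
    ext ⟨a, b⟩
    simp
  rw [h, Set.ncard_coe_finset, Finset.card_map, Finset.card_sigma]
  exact Finset.sum_congr rfl fun a _ => (Set.ncard_eq_toFinset_card _ _).symm

theorem ncard_mul_le_ncard_setOf {F : ℕ} (hF : ∀ a ∈ X, F ≤ (D a).ncard) :
    X.ncard * F ≤ {p : α × β | p.1 ∈ X ∧ p.2 ∈ D p.1}.ncard := by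
  rw [ncard_setOf_mem_and_mem, Set.ncard_eq_toFinset_card X, ← smul_eq_mul]
  exact Finset.card_nsmul_le_sum _ _ _ fun a ha => hF a (by simpa using ha)

theorem ncard_setOf_le_ncard_mul {F : ℕ} (hF : ∀ a ∈ X, (D a).ncard ≤ F) :
    {p : α × β | p.1 ∈ X ∧ p.2 ∈ D p.1}.ncard ≤ X.ncard * F := by
  rw [ncard_setOf_mem_and_mem, Set.ncard_eq_toFinset_card X, ← smul_eq_mul]
  exact Finset.sum_le_card_nsmul _ _ _ fun a ha => hF a (by simpa using ha)

/-- A move `b ∈ D a` leads from `a ∈ X` to `φ a b ∈ Y`; it can be undone with the help of the code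
`ψ a b`, which takes few values once `φ a b` is known. -/
theorem ncard_mul_le_ncard_mul_of_moves {γ ε : Type*} [Finite γ] [Finite ε] (Y : Set γ)
    (E : γ → Set ε) (φ : α → β → γ) (ψ : α → β → ε) {F R : ℕ}
    (hF : ∀ a ∈ X, F ≤ (D a).ncard) (hE : ∀ c ∈ Y, (E c).ncard ≤ R)
    (hmaps : ∀ a ∈ X, ∀ b ∈ D a, φ a b ∈ Y ∧ ψ a b ∈ E (φ a b))
    (hinj : ∀ a ∈ X, ∀ b ∈ D a, ∀ a' ∈ X, ∀ b' ∈ D a', φ a b = φ a' b' → ψ a b = ψ a' b' →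
      a = a' ∧ b = b') :
    X.ncard * F ≤ Y.ncard * R := by
  refine (ncard_mul_le_ncard_setOf X D hF).trans
    (le_trans ?_ (ncard_setOf_le_ncard_mul Y E hE))
  refine Set.ncard_le_ncard_of_injOn (fun p => (φ p.1 p.2, ψ p.1 p.2)) ?_ ?_ (Set.toFinite _)
  · rintro ⟨a, b⟩ ⟨ha, hb⟩
    exact hmaps a ha b hb
  · rintro ⟨a, b⟩ ⟨ha, hb⟩ ⟨a', b'⟩ ⟨ha', hb'⟩ h
    rw [Prod.mk.injEq] at h
    obtain ⟨rfl, rfl⟩ := hinj a ha b hb a' ha' b' hb' h.1 h.2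
    rfl

end Counting

/-! ### Counting edges -/

section EdgeCount

variable {V : Type*} {G : SimpleGraph V}

theorem edgeCount_eq_card_edgeFinset [Fintype G.edgeSet] : edgeCount G = G.edgeFinset.card := by
  rw [edgeCount, Set.ncard_eq_toFinset_card']
  rfl

theorem vertexDegree_eq_degree (v : V) [Fintype (G.neighborSet v)] :
    vertexDegree G v = G.degree v := by
  rw [vertexDegree, Set.ncard_eq_toFinset_card', ← card_neighborFinset_eq_degree]
  rfl

theorem sum_vertexDegree [Fintype V] : ∑ v, vertexDegree G v = 2 * edgeCount G := by
  classical
  simp only [vertexDegree_eq_degree, edgeCount_eq_card_edgeFinset, sum_degrees_eq_twice_card_edges]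

variable [Finite V]

theorem ncard_setOf_adj : {p : V × V | G.Adj p.1 p.2}.ncard = 2 * edgeCount G := by
  have := Fintype.ofFinite V
  have h := ncard_setOf_mem_and_mem (Set.univ : Set V) G.neighborSet
  rw [← sum_vertexDegree]
  simpa [vertexDegree] using h

theorem ncard_mul_le_two_mul_edgeCount {S : Set V} {d : ℕ} (h : ∀ v ∈ S, d ≤ vertexDegree G v) :
    S.ncard * d ≤ 2 * edgeCount G := by
  rw [← ncard_setOf_adj]
  exact (ncard_mul_le_ncard_setOf S G.neighborSet h).trans
    (Set.ncard_le_ncard (fun p hp => hp.2) (Set.toFinite _))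

theorem edgeCount_deleteIncidenceSet_add (v : V) :
    edgeCount (G.deleteIncidenceSet v) + vertexDegree G v = edgeCount G := by
  classical
  have := Fintype.ofFinite V
  rw [edgeCount_eq_card_edgeFinset, edgeCount_eq_card_edgeFinset, vertexDegree_eq_degree,
    card_edgeFinset_deleteIncidenceSet]
  exact Nat.sub_add_cancel (G.card_incidenceFinset_eq_degree v ▸
    Finset.card_le_card (G.incidenceFinset_subset v))

/-- The edges at `v` whose images are not lost are those to vertices outside `u` and `N(u)`. -/
theorem edgeCount_le_edgeCount_contract_add {u v : V} (huv : G.Adj u v) :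
    edgeCount G ≤
      edgeCount (contract G u v) + ((G.neighborSet u ∩ G.neighborSet v).ncard + 1) := by
  set N := G.neighborSet v \ insert u (G.neighborSet u)
  have hdisj : Disjoint (G.deleteIncidenceSet v).edgeSet ((s(u, ·)) '' N) := by
    rw [Set.disjoint_left]
    rintro _ he ⟨y, hy, rfl⟩
    exact hy.2 (Or.inr (deleteIncidenceSet_le G v he))
  have hsub : (G.deleteIncidenceSet v).edgeSet ∪ (s(u, ·)) '' N ⊆
      (contract G u v).edgeSet := by
    rintro e (he | ⟨y, hy, rfl⟩)
    · induction e with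
      | _ x y =>
        obtain ⟨hxy, hx, hy⟩ := deleteIncidenceSet_adj.1 he
        exact (contract_adj huv.ne).2 ⟨hxy.ne, hx, hy, Or.inl hxy⟩
    · exact (contract_adj huv.ne).2 ⟨fun h => hy.2 (Or.inl h.symm), huv.ne,
        (G.ne_of_adj hy.1).symm, Or.inr (Or.inl ⟨rfl, hy.1⟩)⟩
  have hcontract : edgeCount (G.deleteIncidenceSet v) + N.ncard ≤ edgeCount (contract G u v) := by
    rw [← Set.ncard_image_of_injective N (fun x y h => Sym2.congr_right.1 h : (s(u, ·)).Injective)]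
    exact (Set.ncard_union_eq hdisj (Set.toFinite _) (Set.toFinite _)).symm.trans_le
      (Set.ncard_le_ncard hsub (Set.toFinite _))
  have hN : vertexDegree G v ≤ N.ncard + ((G.neighborSet u ∩ G.neighborSet v).ncard + 1) := by
    refine (Set.ncard_le_ncard (t := N ∪ insert u (G.neighborSet u ∩ G.neighborSet v)) ?_
      (Set.toFinite _)).trans ((Set.ncard_union_le _ _).trans ?_)
    · intro y hy
      by_cases hyu : y ∈ insert u (G.neighborSet u)
      · exact Or.inr (hyu.imp_right fun h => ⟨h, hy⟩)
      · exact Or.inl ⟨hy, hyu⟩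
    · exact Nat.add_le_add_left (Set.ncard_insert_le _ _) _
  have := edgeCount_deleteIncidenceSet_add (G := G) v
  omega

end EdgeCount

/-! ### Sparsity of planar graphs -/

theorem connected_induce_singleton {V : Type*} (G : SimpleGraph V) (v : V) :
    (G.induce {v}).Connected := by
  have : Nonempty ({v} : Set V) := ⟨⟨v, rfl⟩⟩
  exact ⟨fun x y => Subsingleton.elim x y ▸ Reachable.refl x⟩

theorem isMinor_completeGraph_two {V : Type*} {G : SimpleGraph V} {u v : V} (huv : G.Adj u v) :
    IsMinor (completeGraph (Fin 2)) G := by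
  refine ⟨![{u}, {v}], fun a => ?_, fun a b hab => ?_, fun a b hab => ?_⟩
  · fin_cases a
    · exact connected_induce_singleton G u
    · exact connected_induce_singleton G v
  all_goals fin_cases a <;> fin_cases b <;> simp_all [huv.ne, huv.ne.symm, huv.symm]

theorem IsMinor.completeGraph_succ_of_forall_adj {V : Type*} {r : ℕ} {G H : SimpleGraph V} {v : V}
    (h : IsMinor (completeGraph (Fin (r + 2))) H) (hHG : H ≤ G) (hv : ∀ x ∈ H.support, G.Adj v x) :
    IsMinor (completeGraph (Fin (r + 3))) G := by
  obtain ⟨f, hconn, hdisj, hadj⟩ := h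
  have hf : ∀ a, ∀ x ∈ f a, G.Adj v x := fun a x hx => by
    obtain ⟨b, hab⟩ := (isTwoConnected_completeGraph r).exists_adj a
    obtain ⟨u, hu, w, -, huw⟩ := hadj a b hab
    exact hv x (subset_support_of_connected_induce (hconn a).preconnected hu huw hx)
  have hvf : ∀ a, v ∉ f a := fun a ha => G.irrefl (hf a v ha)
  have hne : ∀ a, ∃ x ∈ f a, G.Adj v x := fun a => by
    obtain ⟨x, hx⟩ := (hconn a).nonempty
    exact ⟨x, hx, hf a x hx⟩
  refine ⟨Fin.cons {v} f, fun a => ?_, fun a b hab => ?_, fun a b hab => ?_⟩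
  · cases a using Fin.cases with
    | zero => exact connected_induce_singleton G v
    | succ a => exact (hconn a).mono (comap_monotone _ hHG)
  · cases a using Fin.cases <;> cases b using Fin.cases
    · exact absurd rfl hab
    · simpa using hvf _
    · simpa using hvf _
    · exact hdisj _ _ (fun h => hab (congrArg Fin.succ h))
  · cases a using Fin.cases <;> cases b using Fin.cases
    · exact absurd rfl hab
    · exact ⟨v, rfl, hne _⟩
    · obtain ⟨x, hx, hvx⟩ := hne _
      exact ⟨x, hx, v, rfl, hvx.symm⟩
    · obtain ⟨x, hx, y, hy, hxy⟩ := hadj _ _ (fun h => hab (congrArg Fin.succ h))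
      exact ⟨x, hx, y, hy, hHG hxy⟩

theorem exists_adj_of_edgeCount_pos {V : Type*} {G : SimpleGraph V} (h : 0 < edgeCount G) :
    ∃ u v, G.Adj u v := by
  obtain ⟨e, he⟩ := Set.nonempty_of_ncard_ne_zero h.ne'
  induction e with
  | _ u v => exact ⟨u, v, he⟩

theorem two_le_ncard_support {V : Type*} [Finite V] {G : SimpleGraph V} {u v : V}
    (huv : G.Adj u v) : 2 ≤ G.support.ncard := by
  rw [← Set.ncard_pair huv.ne]
  exact Set.ncard_le_ncard (Set.pair_subset ⟨v, huv⟩ ⟨u, huv.symm⟩) (Set.toFinite _)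

theorem ncard_neighborSet_mul_le_two_mul_edgeCount_induce {V : Type*} [Finite V]
    {G : SimpleGraph V} {v : V} {d : ℕ}
    (h : ∀ u, G.Adj u v → d ≤ (G.neighborSet u ∩ G.neighborSet v).ncard) :
    (G.neighborSet v).ncard * d ≤ 2 * edgeCount (G.induce (G.neighborSet v)).spanningCoe := by
  refine ncard_mul_le_two_mul_edgeCount fun u hu => (h u hu.symm).trans ?_
  refine Set.ncard_le_ncard (fun y hy => ?_) (Set.toFinite _)
  exact adj_spanningCoe_induce.2 ⟨hy.1, hu, hy.2⟩

/-- Contract an edge with few common neighbours as long as there is one; once there is none, every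
neighbourhood induces a graph that is dense enough for the next smaller complete graph. -/
theorem isMinor_completeGraph_of_le_edgeCount (r : ℕ) {V : Type*} [Finite V] (G : SimpleGraph V)
    (hpos : 0 < edgeCount G) (h : 2 ^ r * G.support.ncard ≤ edgeCount G) :
    IsMinor (completeGraph (Fin (r + 2))) G := by
  induction r generalizing G with
  | zero =>
    obtain ⟨u, v, huv⟩ := exists_adj_of_edgeCount_pos hpos
    exact isMinor_completeGraph_two huv
  | succ r ih =>
    induction hn : G.support.ncard using Nat.strong_induction_on generalizing G with
    | _ n ihn =>
    by_cases hfew : ∃ u v, G.Adj u v ∧ (G.neighborSet u ∩ G.neighborSet v).ncard < 2 ^ (r + 1)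
    · obtain ⟨u, v, huv, hlt⟩ := hfew
      have htwo := two_le_ncard_support huv
      have hsupp : (contract G u v).support.ncard ≤ n - 1 := by
        rw [← hn, ← Set.ncard_sdiff_singleton_of_mem (show v ∈ G.support from ⟨u, huv.symm⟩)]
        exact Set.ncard_le_ncard (support_contract_subset huv) (Set.toFinite _)
      have hedges : 2 ^ (r + 1) * (n - 1) ≤ edgeCount (contract G u v) := by
        have := edgeCount_le_edgeCount_contract_add huv
        rw [Nat.mul_sub_one, ← hn]
        omega
      refine IsMinor.of_contract (isTwoConnected_completeGraph _).exists_adj huv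
        (ihn _ (by omega) _ (lt_of_lt_of_le ?_ hedges)
          ((Nat.mul_le_mul_left _ hsupp).trans hedges) rfl)
      exact Nat.mul_pos (by positivity) (by omega)
    · push Not at hfew
      obtain ⟨u, v, huv⟩ := exists_adj_of_edgeCount_pos hpos
      have hdense : (G.neighborSet v).ncard * 2 ^ r ≤
          edgeCount (G.induce (G.neighborSet v)).spanningCoe := by
        have := ncard_neighborSet_mul_le_two_mul_edgeCount_induce (hfew · v)
        rw [pow_succ, ← mul_assoc] at this
        omega
      have hsupp := support_spanningCoe_induce_subset G (G.neighborSet v)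
      have hN : 0 < (G.neighborSet v).ncard := (Set.ncard_pos (Set.toFinite _)).2 ⟨u, huv.symm⟩
      refine (ih _ (lt_of_lt_of_le (by positivity) hdense) (le_trans ?_ hdense))
        |>.completeGraph_succ_of_forall_adj (spanningCoe_induce_le G _) fun x hx => hsupp hx
      rw [mul_comm]
      exact Nat.mul_le_mul_right _ (Set.ncard_le_ncard hsupp (Set.toFinite _))

theorem IsPlanar.edgeCount_le {V : Type*} [Finite V] {G : SimpleGraph V} {S : Set V}
    (h : IsPlanar G) (hS : G.support ⊆ S) : edgeCount G ≤ 8 * S.ncard := by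
  have hsupp := Set.ncard_le_ncard hS (Set.toFinite _)
  by_contra! hlt
  exact h.1 (isMinor_completeGraph_of_le_edgeCount 3 G (by omega) (by omega))

/-! ### Vertices with three neighbours in a small set -/

theorem not_isPlanar_of_forall_adj {V : Type*} {G : SimpleGraph V} {p q : Fin 3 → V}
    (hp : Function.Injective p) (hq : Function.Injective q) (h : ∀ i j, G.Adj (p i) (q j)) :
    ¬ IsPlanar G := by
  refine fun hG => hG.2 ⟨Sum.elim (fun i => {p i}) (fun j => {q j}), ?_, ?_, ?_⟩
  · rintro (a | a) <;> exact connected_induce_singleton G _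
  · rintro (a | a) (b | b) hab
    · simpa using fun h => hab (by rw [hp h])
    · simpa using (h a b).ne
    · simpa using (h b a).ne.symm
    · simpa using fun h => hab (by rw [hq h])
  · rintro (a | a) (b | b) hab
    · simp at hab
    · exact ⟨p a, rfl, q b, rfl, h a b⟩
    · exact ⟨q a, rfl, p b, rfl, (h b a).symm⟩
    · simp at hab

theorem injective_vecCons_three {V : Type*} {a b c : V} (hab : a ≠ b) (hac : a ≠ c) (hbc : b ≠ c) :
    Function.Injective ![a, b, c] := by
  intro i j
  fin_cases i <;> fin_cases j <;> simp [hab, hac, hbc, hab.symm, hac.symm, hbc.symm]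

section Planar

variable {V : Type*} [Finite V] {G : SimpleGraph V}

theorem IsPlanar.ncard_common_neighbors_le_two (hG : IsPlanar G) {x y z : V} (hxy : x ≠ y)
    (hxz : x ≠ z) (hyz : y ≠ z) : {v | G.Adj v x ∧ G.Adj v y ∧ G.Adj v z}.ncard ≤ 2 := by
  by_contra! h
  obtain ⟨a, b, c, ⟨hax, hay, haz⟩, ⟨hbx, hby, hbz⟩, ⟨hcx, hcy, hcz⟩, hab, hac, hbc⟩ :=
    (Set.two_lt_ncard_iff (Set.toFinite _)).1 h
  refine not_isPlanar_of_forall_adj (injective_vecCons_three hab hac hbc)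
    (injective_vecCons_three hxy hxz hyz) (fun i j => ?_) hG
  fin_cases i <;> fin_cases j <;> assumption

theorem IsPlanar.ncard_le_two_mul_sq (hG : IsPlanar G) {x : V} {T J : Set V} (hx : x ∉ T)
    (hJx : ∀ v ∈ J, G.Adj v x) (hJT : ∀ v ∈ J, 2 ≤ (G.neighborSet v ∩ T).ncard) :
    J.ncard ≤ T.ncard ^ 2 * 2 := by
  have hC : ∀ p ∈ T.offDiag, {v | G.Adj v x ∧ G.Adj v p.1 ∧ G.Adj v p.2}.ncard ≤ 2 := by
    rintro p ⟨hy, hz, hyz⟩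
    exact hG.ncard_common_neighbors_le_two (ne_of_mem_of_not_mem hy hx).symm
      (ne_of_mem_of_not_mem hz hx).symm hyz
  have hpairs := ncard_setOf_le_ncard_mul _ _ hC
  have hcover : J ⊆ Prod.snd '' {p : (V × V) × V | p.1 ∈ T.offDiag ∧
      p.2 ∈ {v | G.Adj v x ∧ G.Adj v p.1.1 ∧ G.Adj v p.1.2}} := by
    intro v hv
    obtain ⟨y, ⟨hvy, hy⟩, z, ⟨hvz, hz⟩, hyz⟩ := (Set.one_lt_ncard (Set.toFinite _)).1 (hJT v hv)
    exact ⟨((y, z), v), ⟨⟨hy, hz, hyz⟩, hJx v hv, hvy, hvz⟩, rfl⟩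
  have hprod := Set.ncard_le_ncard T.offDiag_subset_prod (Set.toFinite _)
  rw [Set.ncard_prod, ← sq] at hprod
  have := Set.ncard_le_ncard hcover (Set.toFinite _)
  exact this.trans ((Set.ncard_image_le (Set.toFinite _)).trans
    (hpairs.trans (Nat.mul_le_mul_right 2 hprod)))

theorem IsPlanar.exists_vertexDegree_le (hG : IsPlanar G) {X : Set V} (hX : X.Nonempty)
    (hsupp : G.support ⊆ X) : ∃ x ∈ X, vertexDegree G x ≤ 16 := by
  by_contra! hcon
  have hedges := ncard_mul_le_two_mul_edgeCount (d := 17) hcon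
  have := hG.edgeCount_le hsupp
  have := (Set.ncard_pos (Set.toFinite X)).2 hX
  omega

theorem edgeCount_induce_lt_contract {X : Set V} {v a b : V} (hv : v ∉ X) (ha : a ∈ X)
    (hb : b ∈ X) (hvb : G.Adj v b) (hab : a ≠ b) (hnab : ¬ G.Adj a b) :
    edgeCount (G.induce X).spanningCoe < edgeCount ((contract G a v).induce X).spanningCoe := by
  have hvX : ∀ x ∈ X, x ≠ v := fun x hx h => hv (h ▸ hx)
  refine Set.ncard_lt_ncard (edgeSet_ssubset_edgeSet.2 ?_) (Set.toFinite _)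
  refine lt_of_le_not_ge (fun x y hxy => ?_) fun hle => ?_
  · obtain ⟨hxy, hx, hy⟩ := adj_spanningCoe_induce.1 hxy
    exact adj_spanningCoe_induce.2
      ⟨(contract_adj (hvX a ha)).2 ⟨hxy.ne, hvX x hx, hvX y hy, Or.inl hxy⟩, hx, hy⟩
  · refine hnab (adj_spanningCoe_induce.1 (hle (v := a) (w := b) ?_)).1
    exact adj_spanningCoe_induce.2 ⟨(contract_adj (hvX a ha)).2
      ⟨hab, hvX a ha, hvX b hb, Or.inr (Or.inl ⟨rfl, hvb⟩)⟩, ha, hb⟩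

theorem edgeCount_induce_sdiff_singleton_add (X : Set V) (x : V) :
    edgeCount (G.induce (X \ {x})).spanningCoe + vertexDegree (G.induce X).spanningCoe x =
      edgeCount (G.induce X).spanningCoe := by
  rw [← edgeCount_deleteIncidenceSet_add (G := (G.induce X).spanningCoe) x]
  congr 2
  ext y z
  simp only [adj_spanningCoe_induce, deleteIncidenceSet_adj, Set.mem_sdiff,
    Set.mem_singleton_iff]
  tauto

theorem IsPlanar.exists_ncard_le_of_isClique (hG : IsPlanar G) {X I : Set V} (hX : X.Nonempty)
    (hI : ∀ v ∈ I, 3 ≤ (G.neighborSet v ∩ X).ncard)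
    (hclique : ∀ v ∈ I, G.IsClique (G.neighborSet v ∩ X)) :
    ∃ x ∈ X, vertexDegree (G.induce X).spanningCoe x ≤ 16 ∧ {v ∈ I | G.Adj v x}.ncard ≤ 512 := by
  have hGX := hG.mono (spanningCoe_induce_le G X)
  obtain ⟨x, hx, hdx⟩ := hGX.exists_vertexDegree_le hX (support_spanningCoe_induce_subset G X)
  refine ⟨x, hx, hdx, ?_⟩
  have hT : ∀ v ∈ {v ∈ I | G.Adj v x},
      2 ≤ (G.neighborSet v ∩ (G.induce X).spanningCoe.neighborSet x).ncard := by
    rintro v ⟨hv, hvx⟩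
    have h3 := hI v hv
    have hmem : x ∈ G.neighborSet v ∩ X := ⟨hvx, hx⟩
    rw [← Set.ncard_sdiff_singleton_add_one hmem] at h3
    refine (Nat.le_of_succ_le_succ h3).trans (Set.ncard_le_ncard ?_ (Set.toFinite _))
    rintro w ⟨hw, hwx⟩
    exact ⟨hw.1, adj_spanningCoe_induce.2
      ⟨hclique v hv hmem hw fun h => hwx h.symm, hx, hw.2⟩⟩
  exact (hG.ncard_le_two_mul_sq (x := x) (notMem_neighborSet_self _) (fun v hv => hv.2) hT).trans
    (Nat.mul_le_mul_right 2 (Nat.pow_le_pow_left hdx 2))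

/-- If two neighbours in `X` of some `v ∈ I` are not adjacent, contracting `v` into one of them
creates an edge inside `X`. Otherwise these neighbourhoods are cliques, and a vertex of small degree
in `X` sees only boundedly many elements of `I`. -/
theorem IsPlanar.ncard_add_edgeCount_induce_le (hG : IsPlanar G) {X I : Set V} (hd : Disjoint X I)
    (hI : ∀ v ∈ I, 3 ≤ (G.neighborSet v ∩ X).ncard) :
    I.ncard + edgeCount (G.induce X).spanningCoe ≤ 528 * X.ncard := by
  induction hn : X.ncard + I.ncard using Nat.strong_induction_on generalizing G X I with
  | _ n ih =>
  rcases X.eq_empty_or_nonempty with rfl | hX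
  · have hI0 : I = ∅ := Set.eq_empty_of_forall_notMem fun v hv => by simpa using hI v hv
    have hedges := (hG.mono (spanningCoe_induce_le G ∅)).edgeCount_le
      (support_spanningCoe_induce_subset G ∅)
    simp only [hI0, Set.ncard_empty] at hedges ⊢
    omega
  by_cases hA : ∀ v ∈ I, G.IsClique (G.neighborSet v ∩ X)
  · obtain ⟨x, hx, hdx, hJcard⟩ := hG.exists_ncard_le_of_isClique hX hI hA
    set J := {v ∈ I | G.Adj v x}
    have hXcard : (X \ {x}).ncard + 1 = X.ncard := Set.ncard_sdiff_singleton_add_one hx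
    have hIcard : (I \ J).ncard + J.ncard = I.ncard :=
      Set.ncard_sdiff_add_ncard_of_subset (Set.sep_subset _ _)
    have hedges := edgeCount_induce_sdiff_singleton_add (G := G) X x
    have hdeg : ∀ v ∈ I \ J, 3 ≤ (G.neighborSet v ∩ (X \ {x})).ncard := by
      refine fun v hv => (hI v hv.1).trans (Set.ncard_le_ncard ?_ (Set.toFinite _))
      rintro y ⟨hvy, hy⟩
      refine ⟨hvy, hy, ?_⟩
      rintro rfl
      exact hv.2 ⟨hv.1, hvy⟩
    have := ih ((X \ {x}).ncard + (I \ J).ncard) (by omega) hG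
      (hd.mono Set.sdiff_subset Set.sdiff_subset) hdeg rfl
    omega
  · push Not at hA
    obtain ⟨v, hv, hA⟩ := hA
    simp only [IsClique, Set.Pairwise, not_forall] at hA
    obtain ⟨a, ⟨hva, ha⟩, b, ⟨hvb, hb⟩, hab, hnab⟩ := hA
    have hvX : v ∉ X := fun h => Set.disjoint_left.1 hd h hv
    have hIcard : (I \ {v}).ncard + 1 = I.ncard := Set.ncard_sdiff_singleton_add_one hv
    have hlt := edgeCount_induce_lt_contract hvX ha hb hvb hab hnab
    have hdeg : ∀ w ∈ I \ {v}, 3 ≤ ((_root_.contract G a v).neighborSet w ∩ X).ncard := by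
      refine fun w hw => (hI w hw.1).trans (Set.ncard_le_ncard ?_ (Set.toFinite _))
      exact fun y hy => ⟨(contract_adj hva.ne.symm).2
        ⟨G.ne_of_adj hy.1, hw.2, ne_of_mem_of_not_mem hy.2 hvX, Or.inl hy.1⟩, hy.2⟩
    have := ih (X.ncard + (I \ {v}).ncard) (by omega) (hG.contract hva.symm)
      (hd.mono_right Set.sdiff_subset) hdeg rfl
    omega

end Planar

/-! ### The number of planar graphs -/

/-- The planar graphs on `V` all of whose edges lie inside `S`; letting `S` shrink allows an
induction on the number of vertices in which the vertex type is fixed. -/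
def planarOn {V : Type*} (S : Set V) : Set (SimpleGraph V) := {G | IsPlanar G ∧ G.support ⊆ S}

/-- `v` can be contracted into `u` so that few graphs have the same contraction. An isolated vertex
`v` is paired with itself: `contract G v v = G`. -/
def IsLightPair {V : Type*} (D : ℕ) (G : SimpleGraph V) (u v : V) : Prop :=
  (u = v ∧ G.neighborSet v = ∅) ∨
    G.Adj u v ∧ (vertexDegree G v ≤ 2 ∨ vertexDegree G v ≤ D ∧ vertexDegree G u ≤ D)

section Light

variable {V : Type*} {D : ℕ} {S : Set V} {G G' H : SimpleGraph V} {u v : V}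

theorem contract_self : contract G u u = G := by
  classical
  have hid : Function.update id u u = id := Function.update_eq_self u (id : V → V)
  ext x y
  simp [contract, hid]

theorem IsLightPair.contract_mem_planarOn (h : IsLightPair D G u v) (hG : G ∈ planarOn S) :
    contract G u v ∈ planarOn (S \ {v}) := by
  rcases h with ⟨rfl, h⟩ | ⟨h, -⟩
  · rw [contract_self]
    refine ⟨hG.1, fun x hx => ⟨hG.2 hx, ?_⟩⟩
    rintro rfl
    exact Set.nonempty_iff_ne_empty.1 hx h
  · exact ⟨hG.1.contract h,
      (support_contract_subset h).trans (Set.sdiff_subset_sdiff_left hG.2)⟩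

theorem IsLightPair.contract_adj_iff (h : IsLightPair D G u v) {x y : V} (hxu : x ≠ u)
    (hxv : x ≠ v) (hyu : y ≠ u) (hyv : y ≠ v) : (contract G u v).Adj x y ↔ G.Adj x y := by
  rcases h with ⟨rfl, -⟩ | ⟨h, -⟩
  · rw [contract_self]
  · simpa [contract_adj h.ne, hxu, hxv, hyu, hyv] using Adj.ne

theorem IsLightPair.eq_of_contract_eq (h : IsLightPair D G u v) (h' : IsLightPair D G' u v)
    (hcontract : contract G u v = contract G' u v) (hu : G.neighborSet u = G'.neighborSet u)
    (hv : G.neighborSet v = G'.neighborSet v) : G = G' := by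
  have hadj_u : ∀ y, G.Adj u y ↔ G'.Adj u y := Set.ext_iff.1 hu
  have hadj_v : ∀ y, G.Adj v y ↔ G'.Adj v y := Set.ext_iff.1 hv
  ext x y
  by_cases hxu : x = u
  · exact hxu ▸ hadj_u y
  by_cases hxv : x = v
  · exact hxv ▸ hadj_v y
  by_cases hyu : y = u
  · rw [hyu, G.adj_comm, G'.adj_comm, hadj_u]
  by_cases hyv : y = v
  · rw [hyv, G.adj_comm, G'.adj_comm, hadj_v]
  rw [← h.contract_adj_iff hxu hxv hyu hyv, ← h'.contract_adj_iff hxu hxv hyu hyv, hcontract]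

/-- Contains `(u, N(u), N(v))` for every light pair `(u, v)` of a graph on `S` whose contraction is
`H`. The three sets account for an isolated `v`, for `N(v) = {u, w}` (where `w = u` if `v` has
degree `1`), and for `u`, `v` both of degree at most `D`. -/
def contractionCodes {V : Type*} (D : ℕ) (S : Set V) (H : SimpleGraph V) (v : V) :
    Set (V × Set V × Set V) :=
  {(v, ∅, ∅)} ∪
  {q | ∃ u ∈ S, ∃ w ∈ insert u (H.neighborSet u), q = (u, insert v (H.neighborSet u), {u, w}) ∨
    q = (u, insert v (H.neighborSet u \ {w}), {u, w})} ∪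
  {q | q.1 ∈ {u ∈ S | (H.neighborSet u).ncard ≤ 2 * D} ∧
    q.2 ∈ 𝒫 (insert q.1 (insert v (H.neighborSet q.1))) ×ˢ
      𝒫 (insert q.1 (insert v (H.neighborSet q.1)))}

theorem mem_contractionCodes_of_neighborSet_eq (hu : u ∈ S) (h : G.Adj u v) {w : V}
    (hN : G.neighborSet v = {u, w}) :
    (u, G.neighborSet u, G.neighborSet v) ∈ contractionCodes D S (contract G u v) v := by
  have hvw : G.Adj v w := by simp [← mem_neighborSet, hN]
  refine Or.inl (Or.inr ⟨u, hu, w, ?_, ?_⟩)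
  · rw [Set.mem_insert_iff, mem_neighborSet, contract_adj h.ne]
    have := hvw.ne'
    have := h.ne
    tauto
  · rw [neighborSet_contract h, hN]
    have := h.ne
    have := hvw.ne
    have := G.loopless.irrefl u
    simp only [Prod.mk.injEq, true_and, and_true]
    by_cases huw : G.Adj u w
    on_goal 1 => left
    on_goal 2 => right
    all_goals
      ext y
      simp only [mem_neighborSet, Set.mem_sdiff, Set.mem_union, Set.mem_insert_iff,
        Set.mem_singleton_iff]
      grind

open Classical in
/-- A vertex into which `v` can be contracted, if `v` lies in a light pair, and `v` otherwise. -/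
noncomputable def lightPartner (D : ℕ) (G : SimpleGraph V) (v : V) : V :=
  if h : ∃ u, IsLightPair D G u v then h.choose else v

theorem isLightPair_lightPartner (h : ∃ u, IsLightPair D G u v) :
    IsLightPair D G (lightPartner D G v) v := by
  rw [lightPartner, dif_pos h]
  exact h.choose_spec

variable [Finite V]

/-- Few vertices have degree above the threshold, hence few vertices see only such vertices. -/
theorem ncard_le_two_mul_ncard_isLightPair (hD : 529 * 32 ≤ D) (hG : G ∈ planarOn S) :
    S.ncard ≤ 2 * {v | v ∈ S ∧ ∃ u, IsLightPair D G u v}.ncard := by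
  set heavy := {v | D ≤ vertexDegree G v}
  set I := {v | v ∉ heavy ∧ 3 ≤ vertexDegree G v ∧ G.neighborSet v ⊆ heavy}
  have hheavycard : heavy.ncard * (529 * 32) ≤ 2 * edgeCount G :=
    (Nat.mul_le_mul_left _ hD).trans (ncard_mul_le_two_mul_edgeCount fun v hv => hv)
  have hedges := hG.1.edgeCount_le hG.2
  have hIcard : I.ncard + _ ≤ 528 * heavy.ncard := hG.1.ncard_add_edgeCount_induce_le
    (Set.disjoint_left.2 fun v hv hv' => hv'.1 hv) fun v ⟨_, h3, hsub⟩ => by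
      rwa [Set.inter_eq_left.2 hsub]
  have hsub : S ⊆ {v | v ∈ S ∧ ∃ u, IsLightPair D G u v} ∪ (heavy ∪ I) := by
    intro v hv
    by_cases hvH : v ∈ heavy
    · exact Or.inr (Or.inl hvH)
    by_cases h3 : 3 ≤ vertexDegree G v
    · by_cases hs : G.neighborSet v ⊆ heavy
      · exact Or.inr (Or.inr ⟨hvH, h3, hs⟩)
      · obtain ⟨u, hu, huH⟩ := Set.not_subset.1 hs
        exact Or.inl ⟨hv, u, Or.inr ⟨G.adj_symm hu, Or.inr ⟨(not_le.1 hvH).le, (not_le.1 huH).le⟩⟩⟩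
    · refine Or.inl ⟨hv, ?_⟩
      rcases (G.neighborSet v).eq_empty_or_nonempty with he | ⟨u, hu⟩
      · exact ⟨v, Or.inl ⟨rfl, he⟩⟩
      · exact ⟨u, Or.inr ⟨G.adj_symm hu, Or.inl (by omega)⟩⟩
  have hcover := (Set.ncard_le_ncard hsub (Set.toFinite _)).trans (Set.ncard_union_le _ _)
  have := Set.ncard_union_le heavy I
  omega

theorem ncard_setOf_mem_insert_neighborSet_le (hH : IsPlanar H) (hS : H.support ⊆ S) :
    {p : V × V | p.1 ∈ S ∧ p.2 ∈ insert p.1 (H.neighborSet p.1)}.ncard ≤ 17 * S.ncard := by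
  have hsub : {p : V × V | p.1 ∈ S ∧ p.2 ∈ insert p.1 (H.neighborSet p.1)} ⊆
      (fun u => (u, u)) '' S ∪ {p | H.Adj p.1 p.2} := by
    rintro ⟨u, w⟩ ⟨hu, hw | hw⟩
    exacts [Or.inl ⟨u, hu, Prod.ext rfl hw.symm⟩, Or.inr hw]
  have hcard := (Set.ncard_le_ncard hsub (Set.toFinite _)).trans (Set.ncard_union_le _ _)
  rw [ncard_setOf_adj] at hcard
  have := Set.ncard_image_le (f := fun u : V => (u, u)) (Set.toFinite S)
  have := hH.edgeCount_le hS
  omega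

theorem ncard_contractionCodes_le (hH : IsPlanar H) (hS : H.support ⊆ S) (hne : S.Nonempty) :
    (contractionCodes D S H v).ncard ≤ (35 + 2 ^ (2 * D + 2) * 2 ^ (2 * D + 2)) * S.ncard := by
  set pairs : Set (V × V) := {p | p.1 ∈ S ∧ p.2 ∈ insert p.1 (H.neighborSet p.1)}
  have hpairs : pairs.ncard ≤ 17 * S.ncard := ncard_setOf_mem_insert_neighborSet_le hH hS
  have htwo : {q | ∃ u ∈ S, ∃ w ∈ insert u (H.neighborSet u),
      q = (u, insert v (H.neighborSet u), {u, w}) ∨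
      q = (u, insert v (H.neighborSet u \ {w}), ({u, w} : Set V))}.ncard ≤ 34 * S.ncard := by
    have hsub : {q | ∃ u ∈ S, ∃ w ∈ insert u (H.neighborSet u),
        q = (u, insert v (H.neighborSet u), {u, w}) ∨
        q = (u, insert v (H.neighborSet u \ {w}), ({u, w} : Set V))} ⊆
        (fun p : V × V => (p.1, insert v (H.neighborSet p.1), {p.1, p.2})) '' pairs ∪
        (fun p : V × V => (p.1, insert v (H.neighborSet p.1 \ {p.2}), {p.1, p.2})) '' pairs := by
      rintro q ⟨u, hu, w, hw, rfl | rfl⟩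
      exacts [Or.inl ⟨(u, w), ⟨hu, hw⟩, rfl⟩, Or.inr ⟨(u, w), ⟨hu, hw⟩, rfl⟩]
    refine (Set.ncard_le_ncard hsub (Set.toFinite _)).trans ((Set.ncard_union_le _ _).trans
      ((Nat.add_le_add (Set.ncard_image_le (Set.toFinite _))
        (Set.ncard_image_le (Set.toFinite _))).trans ?_))
    omega
  have hpowerset : ∀ u ∈ {u ∈ S | (H.neighborSet u).ncard ≤ 2 * D},
      (𝒫 (insert u (insert v (H.neighborSet u))) ×ˢ
        𝒫 (insert u (insert v (H.neighborSet u)))).ncard ≤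
      2 ^ (2 * D + 2) * 2 ^ (2 * D + 2) := by
    rintro u ⟨-, hu⟩
    have h₁ := Set.ncard_insert_le v (H.neighborSet u)
    have h₂ := Set.ncard_insert_le u (insert v (H.neighborSet u))
    have hpow : 2 ^ (insert u (insert v (H.neighborSet u))).ncard ≤ 2 ^ (2 * D + 2) :=
      Nat.pow_le_pow_right two_pos (by omega)
    rw [Set.ncard_prod, Set.ncard_powerset _ (Set.toFinite _)]
    exact Nat.mul_le_mul hpow hpow
  have hboth := (ncard_setOf_le_ncard_mul _ _ hpowerset).trans
    (Nat.mul_le_mul_right _ (Set.ncard_le_ncard (Set.sep_subset S _) (Set.toFinite _)))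
  have hone := (Set.ncard_pos (Set.toFinite S)).2 hne
  refine (Set.ncard_union_le _ _).trans ((Nat.add_le_add ((Set.ncard_union_le _ _).trans
    (Nat.add_le_add (Set.ncard_singleton _).le htwo)) hboth).trans ?_)
  nlinarith

theorem exists_neighborSet_eq_pair (h : G.Adj u v) (hd : vertexDegree G v ≤ 2) :
    ∃ w, G.neighborSet v = {u, w} := by
  have hu : u ∈ G.neighborSet v := h.symm
  have hcard := Set.ncard_sdiff_singleton_add_one hu
  rcases (G.neighborSet v \ {u}).eq_empty_or_nonempty with he | ⟨w, hw⟩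
  · exact ⟨u, by rw [Set.pair_eq_singleton, (Set.sdiff_eq_empty.1 he).antisymm (by simpa)]⟩
  · have hone : (G.neighborSet v \ {u}).ncard ≤ 1 := by
      rw [vertexDegree] at hd
      omega
    have hw' := Set.eq_singleton_iff_unique_mem.2
      ⟨hw, fun y hy => (Set.ncard_le_one (Set.toFinite _)).1 hone y hy w hw⟩
    exact ⟨w, by rw [← hw', Set.insert_sdiff_self_of_mem hu]⟩

theorem IsLightPair.mem_contractionCodes (hG : G.support ⊆ S) (h : IsLightPair D G u v) :
    (u, G.neighborSet u, G.neighborSet v) ∈ contractionCodes D S (contract G u v) v := by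
  rcases h with ⟨rfl, h⟩ | ⟨h, hd | ⟨hdv, hdu⟩⟩
  · exact Or.inl (Or.inl (by simp [h]))
  · obtain ⟨w, hw⟩ := exists_neighborSet_eq_pair h hd
    exact mem_contractionCodes_of_neighborSet_eq (hG ⟨v, h⟩) h hw
  · refine Or.inr ⟨⟨hG ⟨v, h⟩, ?_⟩, ?_, ?_⟩
    · have hle := (Set.ncard_le_ncard (neighborSet_contract h).subset (Set.toFinite _)).trans
        ((Set.ncard_le_ncard Set.sdiff_subset (Set.toFinite _)).trans (Set.ncard_union_le _ _))
      rw [vertexDegree] at hdu hdv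
      dsimp only
      omega
    all_goals
      intro y hy
      simp only [neighborSet_contract h, Set.mem_sdiff, Set.mem_union, Set.mem_insert_iff,
        Set.mem_singleton_iff]
      tauto

theorem ncard_planarOn_mul_le (hD : 529 * 32 ≤ D) (hne : S.Nonempty) :
    (planarOn S).ncard * ((S.ncard + 1) / 2) ≤
      {p : V × SimpleGraph V | p.1 ∈ S ∧ p.2 ∈ planarOn (S \ {p.1})}.ncard *
        ((35 + 2 ^ (2 * D + 2) * 2 ^ (2 * D + 2)) * S.ncard) := by
  refine ncard_mul_le_ncard_mul_of_moves (planarOn S)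
    (fun G => {v | v ∈ S ∧ ∃ u, IsLightPair D G u v}) _
    (fun p => contractionCodes D S p.2 p.1)
    (fun G v => (v, contract G (lightPartner D G v) v))
    (fun G v => (lightPartner D G v, G.neighborSet (lightPartner D G v), G.neighborSet v))
    ?_ ?_ ?_ ?_
  · intro G hG
    have := ncard_le_two_mul_ncard_isLightPair hD hG
    omega
  · rintro p ⟨-, hp⟩
    exact ncard_contractionCodes_le hp.1 (hp.2.trans Set.sdiff_subset) hne
  · rintro G hG v ⟨hv, hlight⟩
    have hlight := isLightPair_lightPartner hlight
    exact ⟨⟨hv, hlight.contract_mem_planarOn hG⟩, hlight.mem_contractionCodes hG.2⟩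
  · rintro G - v ⟨-, hlight⟩ G' - v' ⟨-, hlight'⟩ hφ hψ
    simp only [Prod.mk.injEq] at hφ hψ
    obtain ⟨rfl, hφ⟩ := hφ
    have hlight := isLightPair_lightPartner hlight
    have hlight' := isLightPair_lightPartner hlight'
    rw [← hψ.1] at hlight' hφ hψ
    exact ⟨hlight.eq_of_contract_eq hlight' hφ hψ.2.1 hψ.2.2, rfl⟩

end Light

theorem planarOn_empty_subset {V : Type*} : planarOn (∅ : Set V) ⊆ {⊥} := by
  rintro G ⟨-, hG⟩
  exact Set.mem_singleton_iff.2 ((support_eq_bot_iff G).1 (Set.subset_empty_iff.1 hG))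

theorem exists_ncard_planarOn_le : ∃ C : ℕ, 0 < C ∧ ∀ {V : Type*} [Finite V] (S : Set V),
    (planarOn S).ncard ≤ C ^ S.ncard * S.ncard.factorial := by
  obtain ⟨D, hD⟩ : ∃ D, 529 * 32 ≤ D := ⟨_, le_rfl⟩
  obtain ⟨K, hK⟩ : ∃ K, K = 35 + 2 ^ (2 * D + 2) * 2 ^ (2 * D + 2) := ⟨_, rfl⟩
  refine ⟨2 * K, by omega, fun {V} _ S => ?_⟩
  induction hn : S.ncard generalizing S with
  | zero =>
    rw [Set.ncard_eq_zero (Set.toFinite _)] at hn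
    subst hn
    simpa using Set.ncard_le_ncard (planarOn_empty_subset (V := V)) (Set.toFinite _)
  | succ s ih =>
    have hcontracted : {p : V × SimpleGraph V | p.1 ∈ S ∧ p.2 ∈ planarOn (S \ {p.1})}.ncard ≤
        (s + 1) * ((2 * K) ^ s * s.factorial) := by
      rw [← hn]
      refine ncard_setOf_le_ncard_mul S (fun v => planarOn (S \ {v})) fun v hv => ih _ ?_
      rw [Set.ncard_sdiff_singleton_of_mem hv, hn, Nat.add_sub_cancel]
    have hmoves := ncard_planarOn_mul_le hD (S := S) (Set.nonempty_of_ncard_ne_zero (by omega))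
    rw [← hK, hn] at hmoves
    refine Nat.le_of_mul_le_mul_right (c := s + 1) ?_ s.succ_pos
    calc (planarOn S).ncard * (s + 1) ≤ (planarOn S).ncard * (2 * ((s + 1 + 1) / 2)) :=
          Nat.mul_le_mul_left _ (by omega)
      _ = 2 * ((planarOn S).ncard * ((s + 1 + 1) / 2)) := by ring
      _ ≤ 2 * ((s + 1) * ((2 * K) ^ s * s.factorial) * (K * (s + 1))) :=
          Nat.mul_le_mul_left _ (hmoves.trans (Nat.mul_le_mul_right _ hcontracted))
      _ = (2 * K) ^ (s + 1) * (s + 1).factorial * (s + 1) := by rw [Nat.factorial_succ]; ring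

/-! ### Dense connected planar graphs -/

theorem IsMinor.exists_induce_compl_pair {α V : Type*} [Nonempty α] {H : SimpleGraph α}
    {G L : SimpleGraph V} (h : IsMinor H G) (x y : V)
    (hL : ∀ u ∉ ({x, y} : Set V), ∀ v ∉ ({x, y} : Set V), G.Adj u v → L.Adj u v) :
    ∃ p q, IsMinor (H.induce {p, q}ᶜ) L := by
  obtain ⟨f, hconn, hdisj, hadj⟩ := h
  have hown : ∀ z, ∃ p, ∀ a, z ∈ f a → a = p := by
    intro z
    by_cases hz : ∃ p, z ∈ f p
    · obtain ⟨p, hp⟩ := hz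
      exact ⟨p, fun a ha => by_contra fun hap => Set.disjoint_left.1 (hdisj a p hap) ha hp⟩
    · exact ⟨Classical.arbitrary α, fun a ha => absurd ⟨a, ha⟩ hz⟩
  obtain ⟨p, hp⟩ := hown x
  obtain ⟨q, hq⟩ := hown y
  have havoid : ∀ a ∈ ({p, q}ᶜ : Set α), ∀ u ∈ f a, u ∉ ({x, y} : Set V) := by
    rintro a ha u hu (rfl | rfl)
    · exact ha (Or.inl (hp a hu))
    · exact ha (Or.inr (hq a hu))
  refine ⟨p, q, fun a => f a, fun a => ?_, fun a b hab => hdisj a b fun h => hab (Subtype.ext h),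
    fun a b hab => ?_⟩
  · have := connected_induce_image (G' := L) (hconn a) id fun u hu v hv huv =>
      Or.inr (hL u (havoid a a.2 u hu) v (havoid a a.2 v hv) huv)
    rwa [Set.image_id] at this
  · obtain ⟨u, hu, v, hv, huv⟩ := hadj a b hab
    exact ⟨u, hu, v, hv, hL u (havoid a a.2 u hu) v (havoid b b.2 v hv) huv⟩

theorem ordConnected_of_connected_induce_hasse {V : Type*} [LinearOrder V] {s : Set V}
    (hs : ((hasse V).induce s).Connected) : s.OrdConnected := by
  refine ⟨fun x hx y hy z ⟨hxz, hzy⟩ => ?_⟩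
  rcases hxz.eq_or_lt with rfl | hxz
  · exact hx
  obtain ⟨u, -, v, hv, huv, huz, hzv⟩ := exists_adj_of_connected_induce (S := Set.Iio z)
    hs.preconnected hx hxz hy hzy.not_gt
  have hzv : z ≤ v := not_lt.1 hzv
  rcases huv with huv | hvu
  · rwa [hzv.antisymm (huv.ge_of_gt huz)]
  · exact absurd (hvu.lt.trans huz) hzv.not_gt

theorem IsMinor.exists_intervals_of_hasse {α V : Type*} [LinearOrder V] [Finite V]
    {H : SimpleGraph α} (h : IsMinor H (hasse V)) :
    ∃ lo hi : α → V, Function.Injective lo ∧ Function.Injective hi ∧ (∀ a, lo a ≤ hi a) ∧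
      ∀ a b, H.Adj a b → hi a ⋖ lo b ∨ hi b ⋖ lo a := by
  obtain ⟨f, hconn, hdisj, hadj⟩ := h
  have hne : ∀ a, (f a).Nonempty := fun a => Set.nonempty_coe_sort.1 (hconn a).nonempty
  have hord : ∀ a, (f a).OrdConnected := fun a =>
    ordConnected_of_connected_induce_hasse (hconn a)
  have heq : ∀ a b x, x ∈ f a → x ∈ f b → a = b := fun a b x ha hb =>
    by_contra fun hab => Set.disjoint_left.1 (hdisj a b hab) ha hb
  choose lo hlo hlo_le using fun a => Set.exists_min_image (f a) id (Set.toFinite _) (hne a)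
  choose hi hhi hle_hi using fun a => Set.exists_max_image (f a) id (Set.toFinite _) (hne a)
  have hcov : ∀ a b, a ≠ b → ∀ x ∈ f a, ∀ y ∈ f b, x ⋖ y → hi a ⋖ lo b := by
    intro a b hab x hx y hy hxy
    have hxa : hi a = x := by
      refine (not_lt.1 fun hlt => hab (heq a b y ?_ hy)).antisymm (hle_hi a x hx)
      exact (hord a).out hx (hhi a) ⟨hxy.le, hxy.ge_of_gt hlt⟩
    have hyb : lo b = y := by
      refine (hlo_le b y hy).antisymm (not_lt.1 fun hlt => hab (heq a b x hx ?_))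
      exact (hord b).out (hlo b) hy ⟨hxy.le_of_lt hlt, hxy.le⟩
    rwa [hxa, hyb]
  refine ⟨lo, hi, fun a b hab => heq a b _ (hlo a) (hab ▸ hlo b),
    fun a b hab => heq a b _ (hhi a) (hab ▸ hhi b), fun a => hlo_le a _ (hhi a), ?_⟩
  intro a b hab
  obtain ⟨x, hx, y, hy, hxy | hyx⟩ := hadj a b hab
  · exact Or.inl (hcov a b hab.ne x hx y hy hxy)
  · exact Or.inr (hcov b a hab.ne' y hy x hx hyx)

theorem not_isMinor_hasse_of_three_neighbors {α V : Type*} [LinearOrder V] [Finite V]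
    {H : SimpleGraph α} {a b c d : α} (hb : H.Adj a b) (hc : H.Adj a c) (hd : H.Adj a d)
    (hbc : b ≠ c) (hbd : b ≠ d) (hcd : c ≠ d) : ¬ IsMinor H (hasse V) := by
  intro h
  obtain ⟨lo, hi, hlo, hhi, -, hadj⟩ := h.exists_intervals_of_hasse
  have hright : ∀ {x y}, hi a ⋖ lo x → hi a ⋖ lo y → x = y := fun h h' =>
    hlo (h.unique_right h')
  have hleft : ∀ {x y}, hi x ⋖ lo a → hi y ⋖ lo a → x = y := fun h h' =>
    hhi (h.unique_left h')
  rcases hadj a b hb with hb | hb <;> rcases hadj a c hc with hc | hc <;>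
    rcases hadj a d hd with hd | hd
  all_goals first
    | exact hbc (hright hb hc) | exact hbd (hright hb hd) | exact hcd (hright hc hd)
    | exact hbc (hleft hb hc) | exact hbd (hleft hb hd) | exact hcd (hleft hc hd)

theorem not_isMinor_hasse_of_two_neighbors {α V : Type*} [Finite α] [Nonempty α] [LinearOrder V]
    [Finite V] {H : SimpleGraph α} (hH : ∀ a, ∃ b c, b ≠ c ∧ H.Adj a b ∧ H.Adj a c) :
    ¬ IsMinor H (hasse V) := by
  intro h
  obtain ⟨lo, hi, hlo, -, hle, hadj⟩ := h.exists_intervals_of_hasse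
  obtain ⟨a, ha⟩ := Finite.exists_min lo
  have hright : ∀ b, H.Adj a b → hi a ⋖ lo b := fun b hb =>
    (hadj a b hb).resolve_right fun hba => ((ha b).trans (hle b)).not_gt hba.lt
  obtain ⟨b, c, hbc, hb, hc⟩ := hH a
  exact hbc (hlo ((hright b hb).unique_right (hright c hc)))

theorem not_isMinor_induce_completeGraph_five_hasse {V : Type*} [LinearOrder V] [Finite V]
    (p q : Fin 5) : ¬ IsMinor ((completeGraph (Fin 5)).induce {p, q}ᶜ) (hasse V) := by
  have hne : ∀ p q : Fin 5, ∃ a, a ≠ p ∧ a ≠ q := by decide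
  have hpair : ∀ p q a : Fin 5,
      ∃ b c, b ≠ c ∧ (b ≠ p ∧ b ≠ q) ∧ (c ≠ p ∧ c ≠ q) ∧ a ≠ b ∧ a ≠ c := by decide
  obtain ⟨a, ha⟩ := hne p q
  have : Nonempty ({p, q}ᶜ : Set (Fin 5)) := ⟨a, by simpa using ha⟩
  refine not_isMinor_hasse_of_two_neighbors fun a => ?_
  obtain ⟨b, c, hbc, hb, hc, hab, hac⟩ := hpair p q a
  exact ⟨⟨b, by simpa using hb⟩, ⟨c, by simpa using hc⟩, by simpa using hbc, hab, hac⟩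

/-- Deleting two vertices on the same side leaves a vertex of degree three, deleting two on
different sides leaves a 4-cycle. -/
theorem not_isMinor_induce_completeBipartiteGraph_three_hasse {V : Type*} [LinearOrder V]
    [Finite V] (p q : Fin 3 ⊕ Fin 3) :
    ¬ IsMinor ((completeBipartiteGraph (Fin 3) (Fin 3)).induce {p, q}ᶜ) (hasse V) := by
  have hone : ∀ i j : Fin 3, ∃ k, k ≠ i ∧ k ≠ j := by decide
  have htwo : ∀ i : Fin 3, ∃ k l, k ≠ l ∧ k ≠ i ∧ l ≠ i := by decide
  have hcycle : ∀ i j : Fin 3, ∀ s : Set (Fin 3 ⊕ Fin 3), s = {Sum.inl i, Sum.inr j} →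
      ¬ IsMinor ((completeBipartiteGraph (Fin 3) (Fin 3)).induce sᶜ) (hasse V) := by
    rintro i j _ rfl
    obtain ⟨k, l, hkl, hk, hl⟩ := htwo i
    obtain ⟨k', l', hkl', hk', hl'⟩ := htwo j
    have : Nonempty ({Sum.inl i, Sum.inr j}ᶜ : Set (Fin 3 ⊕ Fin 3)) := ⟨Sum.inl k, by simp [hk]⟩
    refine not_isMinor_hasse_of_two_neighbors ?_
    rintro ⟨a | a, ha⟩
    · exact ⟨⟨Sum.inr k', by simp [hk']⟩, ⟨Sum.inr l', by simp [hl']⟩, by simp [hkl']⟩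
    · exact ⟨⟨Sum.inl k, by simp [hk]⟩, ⟨Sum.inl l, by simp [hl]⟩, by simp [hkl]⟩
  rcases p with i | i <;> rcases q with j | j
  · obtain ⟨k, hk⟩ := hone i j
    exact not_isMinor_hasse_of_three_neighbors (a := ⟨Sum.inl k, by simp [hk]⟩)
      (b := ⟨Sum.inr 0, by simp⟩) (c := ⟨Sum.inr 1, by simp⟩) (d := ⟨Sum.inr 2, by simp⟩)
      (by simp) (by simp) (by simp) (by simp) (by simp) (by simp)
  · exact hcycle i j _ rfl
  · exact hcycle j i _ (Set.pair_comm _ _)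
  · obtain ⟨k, hk⟩ := hone i j
    exact not_isMinor_hasse_of_three_neighbors (a := ⟨Sum.inr k, by simp [hk]⟩)
      (b := ⟨Sum.inl 0, by simp⟩) (c := ⟨Sum.inl 1, by simp⟩) (d := ⟨Sum.inl 2, by simp⟩)
      (by simp) (by simp) (by simp) (by simp) (by simp) (by simp)

/-- The path `0, 1, …, n - 1` with the vertices `0` and `1` joined to all others: a planar graph
with nearly the maximal number `3 * n - 6` of edges. -/
def doubleApexPath (n : ℕ) : SimpleGraph (Fin n) :=
  pathGraph n ⊔ fromRel fun x _ => x.val < 2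

theorem doubleApexPath_adj {n : ℕ} {x y : Fin n} : (doubleApexPath n).Adj x y ↔
    (x.val + 1 = y.val ∨ y.val + 1 = x.val) ∨ x ≠ y ∧ (x.val < 2 ∨ y.val < 2) := by
  rw [doubleApexPath, sup_adj, pathGraph_adj, fromRel_adj]

theorem isPlanar_doubleApexPath (n : ℕ) : IsPlanar (doubleApexPath n) := by
  rcases Nat.lt_or_ge n 2 with hn | hn
  · refine isPlanar_of_ncard_support_le_four ?_
    exact (Set.ncard_le_card _).trans (by simp; omega)
  have hpath : ∀ u ∉ ({⟨0, by omega⟩, ⟨1, by omega⟩} : Set (Fin n)),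
      ∀ v ∉ ({⟨0, by omega⟩, ⟨1, by omega⟩} : Set (Fin n)),
      (doubleApexPath n).Adj u v → (hasse (Fin n)).Adj u v := by
    intro u hu v hv huv
    simp only [Set.mem_insert_iff, Set.mem_singleton_iff, Fin.ext_iff] at hu hv
    rw [doubleApexPath_adj] at huv
    change (pathGraph n).Adj u v
    rw [pathGraph_adj]
    omega
  constructor <;> intro h <;> obtain ⟨p, q, hpq⟩ := h.exists_induce_compl_pair _ _ hpath
  · exact not_isMinor_induce_completeGraph_five_hasse p q hpq
  · exact not_isMinor_induce_completeBipartiteGraph_three_hasse p q hpq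

theorem le_edgeCount_doubleApexPath (n : ℕ) : 3 * n - 9 ≤ edgeCount (doubleApexPath n) := by
  rcases Nat.lt_or_ge n 3 with h | h
  · omega
  obtain ⟨k, rfl⟩ : ∃ k, n = k + 3 := ⟨n - 3, by omega⟩
  -- Vertex `j + 3` contributes its edges to `0`, `1` and its predecessor.
  let g : Fin k × Fin 3 → Sym2 (Fin (k + 3)) := fun p =>
    s(⟨p.1 + 3, by omega⟩, ![⟨0, by omega⟩, ⟨1, by omega⟩, ⟨p.1 + 2, by omega⟩] p.2)
  have hg : (Set.univ : Set (Fin k × Fin 3)).ncard ≤ edgeCount (doubleApexPath (k + 3)) := by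
    refine Set.ncard_le_ncard_of_injOn g ?_ ?_
    · rintro ⟨j, t⟩ _
      rw [mem_edgeSet, doubleApexPath_adj]
      fin_cases t <;> simp [Fin.ext_iff]
    · rintro ⟨j, t⟩ _ ⟨j', t'⟩ _ h
      rw [Sym2.eq_iff] at h
      fin_cases t <;> fin_cases t' <;> simp [Fin.ext_iff] at h ⊢ <;> omega
  rw [Set.ncard_univ, Nat.card_prod, Nat.card_fin, Nat.card_fin] at hg
  omega

theorem starGraph_le_doubleApexPath (n : ℕ) :
    starGraph (0 : Fin (n + 1)) ≤ doubleApexPath (n + 1) := by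
  intro x y h
  rw [starGraph_adj] at h
  rw [doubleApexPath_adj]
  exact Or.inr ⟨h.1, h.2.imp (fun h => by simp [h]) (fun h => by simp [h])⟩

/-- The set of connected planar graphs with `m` edges on the vertices `0, …, n - 1`. -/
def connSet (n m : ℕ) : Set (SimpleGraph (Fin n)) :=
  {G | G.Connected ∧ IsPlanar G ∧ edgeCount G = m}

theorem connSet_nonempty {n m : ℕ} (hnm : n ≤ m) (hm : m + 6 ≤ 3 * n) :
    (connSet (n + 1) m).Nonempty := by
  have hstar : edgeCount (starGraph (0 : Fin (n + 1))) ≤ m := by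
    rw [edgeCount_eq_card_edgeFinset]
    have := (isTree_starGraph (0 : Fin (n + 1))).card_edgeFinset
    rw [Fintype.card_fin] at this
    omega
  obtain ⟨E, hstarE, hE, hcard⟩ := Set.exists_subsuperset_card_eq
    (edgeSet_mono (starGraph_le_doubleApexPath n)) hstar
    ((by omega : m ≤ _).trans (le_edgeCount_doubleApexPath (n + 1)))
  have hedges : (fromEdgeSet E).edgeSet = E := by
    rw [edgeSet_fromEdgeSet, sdiff_eq_left, Set.disjoint_left]
    exact fun e he => not_isDiag_of_mem_edgeSet _ (hE he)
  refine ⟨fromEdgeSet E, ?_, ?_, by rw [edgeCount, hedges, hcard]⟩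
  · exact (isTree_starGraph 0).connected.mono (edgeSet_subset_edgeSet.1 (hedges.symm ▸ hstarE))
  · exact (isPlanar_doubleApexPath _).mono (edgeSet_subset_edgeSet.1 (hedges.symm ▸ hE))

/-! ### Joining two connected graphs by an edge -/

theorem edgeCount_sup_edge {V : Type*} [Finite V] {G : SimpleGraph V} {u v : V} (huv : u ≠ v)
    (h : ¬ G.Adj u v) : edgeCount (G ⊔ edge u v) = edgeCount G + 1 := by
  rw [edgeCount, edgeSet_sup, edgeSet_edge_of_ne huv, Set.union_singleton,
    Set.ncard_insert_of_notMem (by simpa using h), edgeCount]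

theorem eq_of_sup_edge_eq {V : Type*} {G G' : SimpleGraph V} {u v : V} (h : ¬ G.Adj u v)
    (h' : ¬ G'.Adj u v) (heq : G ⊔ edge u v = G' ⊔ edge u v) : G = G' := by
  rw [← G.sdiff_edge h, ← sup_sdiff_right_self, heq, sup_sdiff_right_self, G'.sdiff_edge h']

theorem edgeCount_map {V W : Type*} (e : V ↪ W) (G : SimpleGraph V) :
    edgeCount (G.map e) = edgeCount G := by
  rw [edgeCount, edgeSet_map, Set.ncard_image_of_injective _ e.sym2Map.injective, edgeCount]

theorem edgeCount_sum {V₁ V₂ : Type*} [Finite V₁] [Finite V₂] (G₁ : SimpleGraph V₁)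
    (G₂ : SimpleGraph V₂) : edgeCount (G₁ ⊕g G₂) = edgeCount G₁ + edgeCount G₂ := by
  simp only [edgeCount, ← Nat.card_coe_set_eq]
  rw [Nat.card_congr edgeSetSumEquiv, Nat.card_sum]

theorem sum_injective {V₁ V₂ : Type*} {G₁ G₁' : SimpleGraph V₁} {G₂ G₂' : SimpleGraph V₂}
    (h : G₁ ⊕g G₂ = G₁' ⊕g G₂') : G₁ = G₁' ∧ G₂ = G₂' := by
  constructor
  · ext a b
    rw [← sum_adj_inl (G := G₁) (H := G₂), h, sum_adj_inl]
  · ext a b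
    rw [← sum_adj_inr (G := G₁) (H := G₂), h, sum_adj_inr]

theorem IsPlanar.sum {V₁ V₂ : Type*} {G₁ : SimpleGraph V₁} {G₂ : SimpleGraph V₂}
    (h₁ : IsPlanar G₁) (h₂ : IsPlanar G₂) : IsPlanar (G₁ ⊕g G₂) := by
  have hsup : G₁ ⊕g G₂ ≤ G₁.map Function.Embedding.inl ⊔ G₂.map Function.Embedding.inr := by
    rintro (a | a) (b | b) hab
    · exact Or.inl (map_adj_apply.2 hab)
    · simp at hab
    · simp at hab
    · exact Or.inr (map_adj_apply.2 hab)
  refine (IsPlanar.sup (h₁.map_of_injective Sum.inl_injective)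
    (h₂.map_of_injective Sum.inr_injective) ?_).mono hsup
  have hempty : (G₁.map Function.Embedding.inl).support ∩ (G₂.map Function.Embedding.inr).support =
      (∅ : Set (V₁ ⊕ V₂)) := by
    ext z
    rw [support_map, support_map]
    rcases z with a | b <;> simp
  exact hempty ▸ Set.subsingleton_empty

/-- The graph on `W` obtained from the disjoint union of `G₁` and `G₂`, relabelled along `e`, by
adding the edge from `x` to `y`. -/
def joinByEdge {V₁ V₂ W : Type*} (e : V₁ ⊕ V₂ ≃ W) (G₁ : SimpleGraph V₁) (G₂ : SimpleGraph V₂)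
    (x : V₁) (y : V₂) : SimpleGraph W :=
  (G₁ ⊕g G₂).map e ⊔ edge (e (Sum.inl x)) (e (Sum.inr y))

section JoinByEdge

variable {V₁ V₂ W : Type*} (e : V₁ ⊕ V₂ ≃ W) {G₁ : SimpleGraph V₁} {G₂ : SimpleGraph V₂}

theorem not_reachable_map_sum (x : V₁) (y : V₂) :
    ¬ ((G₁ ⊕g G₂).map e).Reachable (e (Sum.inl x)) (e (Sum.inr y)) := fun h =>
  not_reachable_sum_inl_inr x y ((Iso.map e (G₁ ⊕g G₂)).reachable_iff.1 h)

theorem setOf_reachable_map_sum (h₁ : G₁.Connected) (x : V₁) :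
    {w | ((G₁ ⊕g G₂).map e).Reachable (e (Sum.inl x)) w} = Set.range (e ∘ Sum.inl) := by
  ext w
  obtain ⟨a | b, rfl⟩ := e.surjective w
  · refine iff_of_true ?_ ⟨a, rfl⟩
    exact (Iso.map e (G₁ ⊕g G₂)).reachable_iff.2 ((h₁.preconnected x a).map Embedding.sumInl.toHom)
  · refine iff_of_false (not_reachable_map_sum e x b) ?_
    rintro ⟨a, ha⟩
    exact Sum.inl_ne_inr (e.injective ha)

theorem joinByEdge_adj (x : V₁) (y : V₂) :
    (joinByEdge e G₁ G₂ x y).Adj (e (Sum.inl x)) (e (Sum.inr y)) := by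
  rw [joinByEdge, sup_adj, edge_adj]
  exact Or.inr ⟨Or.inl ⟨rfl, rfl⟩, e.injective.ne Sum.inl_ne_inr⟩

theorem connected_joinByEdge (h₁ : G₁.Connected) (h₂ : G₂.Connected) (x : V₁) (y : V₂) :
    (joinByEdge e G₁ G₂ x y).Connected := by
  refine ((Iso.map e _).connected_iff.1 (h₁.sum_sup_edge h₂ (v := x) (w := y))).mono ?_
  rintro _ _ ⟨hne, a, b, hab | hab, rfl, rfl⟩
  · exact Or.inl ⟨hne, a, b, hab, rfl, rfl⟩
  · rw [edge_adj] at hab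
    rcases hab.1 with ⟨rfl, rfl⟩ | ⟨rfl, rfl⟩
    · exact joinByEdge_adj e x y
    · exact (joinByEdge_adj e x y).symm

theorem IsPlanar.joinByEdge [Finite W] (h₁ : IsPlanar G₁) (h₂ : IsPlanar G₂) (x : V₁) (y : V₂) :
    IsPlanar (joinByEdge e G₁ G₂ x y) :=
  ((h₁.sum h₂).map_of_injective e.injective).sup_edge_of_not_reachable
    (not_reachable_map_sum e x y)

theorem edgeCount_joinByEdge [Finite V₁] [Finite V₂] [Finite W] (x : V₁) (y : V₂) :
    edgeCount (joinByEdge e G₁ G₂ x y) = edgeCount G₁ + edgeCount G₂ + 1 := by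
  rw [joinByEdge, edgeCount_sup_edge (e.injective.ne Sum.inl_ne_inr)
    fun h => not_reachable_map_sum e x y h.reachable, ← edgeCount_sum]
  exact congrArg (· + 1) (edgeCount_map e.toEmbedding _)

theorem joinByEdge_cancel {G₁' : SimpleGraph V₁} {G₂' : SimpleGraph V₂} {e' : V₁ ⊕ V₂ ≃ W}
    {x x' : V₁} {y y' : V₂} (hx : e (Sum.inl x) = e' (Sum.inl x'))
    (hy : e (Sum.inr y) = e' (Sum.inr y'))
    (h : joinByEdge e G₁ G₂ x y = joinByEdge e' G₁' G₂' x' y') :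
    (G₁ ⊕g G₂).map e = (G₁' ⊕g G₂').map e' := by
  have hadj := fun h : Adj _ _ _ => not_reachable_map_sum e (G₁ := G₁) (G₂ := G₂) x y h.reachable
  have hadj' := fun h : Adj _ _ _ =>
    not_reachable_map_sum e' (G₁ := G₁') (G₂ := G₂') x' y' h.reachable
  rw [← hx, ← hy] at hadj'
  rw [joinByEdge, joinByEdge, ← hx, ← hy] at h
  exact eq_of_sup_edge_eq hadj hadj' h

end JoinByEdge

theorem exists_sumEquiv_range_inl_eq {n₁ n₂ : ℕ} (S : Finset (Fin (n₁ + n₂))) (hS : S.card = n₁) :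
    ∃ e : Fin n₁ ⊕ Fin n₂ ≃ Fin (n₁ + n₂), Set.range (e ∘ Sum.inl) = (S : Set (Fin (n₁ + n₂))) := by
  have hS' : Sᶜ.card = n₂ := by
    rw [Finset.card_compl, hS, Fintype.card_fin, Nat.add_sub_cancel_left]
  refine ⟨finSumEquivOfFinset hS hS', ?_⟩
  rw [← S.range_orderEmbOfFin hS]
  rfl

/-- The two parts are recovered from the joined graph and the joining edge, which is one of at most
`16 * (n₁ + n₂)` darts. -/
theorem choose_mul_ncard_connSet_mul_le (n₁ n₂ m₁ m₂ : ℕ) :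
    (n₁ + n₂).choose n₁ * ((connSet n₁ m₁).ncard * (connSet n₂ m₂).ncard) * (n₁ * n₂) ≤
      (connSet (n₁ + n₂) (m₁ + m₂ + 1)).ncard * (16 * (n₁ + n₂)) := by
  have : Nonempty (Fin n₁ ⊕ Fin n₂ ≃ Fin (n₁ + n₂)) := ⟨finSumFinEquiv⟩
  choose! e he using exists_sumEquiv_range_inl_eq (n₁ := n₁) (n₂ := n₂)
  have hchoose : {S : Finset (Fin (n₁ + n₂)) | S.card = n₁}.ncard = (n₁ + n₂).choose n₁ := by
    have hcoe : {S : Finset (Fin (n₁ + n₂)) | S.card = n₁} =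
        (Finset.powersetCard n₁ Finset.univ : Finset (Finset (Fin (n₁ + n₂)))) := by ext; simp
    rw [hcoe, Set.ncard_coe_finset, Finset.card_powersetCard, Finset.card_univ, Fintype.card_fin]
  rw [← hchoose, ← Set.ncard_prod, ← Set.ncard_prod]
  refine ncard_mul_le_ncard_mul_of_moves _ (fun _ => (Set.univ : Set (Fin n₁ × Fin n₂))) _
    (fun G => {p | G.Adj p.1 p.2}) (fun a b => joinByEdge (e a.1) a.2.1 a.2.2 b.1 b.2)
    (fun a b => (e a.1 (Sum.inl b.1), e a.1 (Sum.inr b.2))) ?_ ?_ ?_ ?_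
  · intro _ _
    rw [Set.ncard_univ, Nat.card_prod, Nat.card_fin, Nat.card_fin]
  · intro G hG
    have := hG.2.1.edgeCount_le (Set.subset_univ G.support)
    rw [Set.ncard_univ, Nat.card_fin] at this
    rw [ncard_setOf_adj]
    omega
  · rintro ⟨S, G₁, G₂⟩ ⟨_, hG₁, hG₂⟩ ⟨x, y⟩ _
    exact ⟨⟨connected_joinByEdge _ hG₁.1 hG₂.1 x y, hG₁.2.1.joinByEdge _ hG₂.2.1 x y, by
      rw [edgeCount_joinByEdge, hG₁.2.2, hG₂.2.2]⟩, joinByEdge_adj _ x y⟩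
  · rintro ⟨S, G₁, G₂⟩ ⟨hS, hG₁, _⟩ ⟨x, y⟩ _ ⟨S', G₁', G₂'⟩ ⟨hS', hG₁', _⟩ ⟨x', y'⟩ _ h hxy
    obtain ⟨hx, hy⟩ := Prod.mk.inj hxy
    have hmap := joinByEdge_cancel _ hx hy h
    have hSS' : (S : Set (Fin (n₁ + n₂))) = S' := by
      rw [← he S hS, ← he S' hS', ← setOf_reachable_map_sum (G₂ := G₂) _ hG₁.1 x, hmap,
        ← setOf_reachable_map_sum (G₂ := G₂') _ hG₁'.1 x']
      exact congrArg (fun u => {w | SimpleGraph.Reachable _ u w}) hx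
    obtain rfl : S = S' := by exact_mod_cast hSS'
    obtain ⟨rfl, rfl⟩ := sum_injective (SimpleGraph.map_injective (e S).toEmbedding hmap)
    exact ⟨rfl, Prod.ext (Sum.inl_injective ((e S).injective hx))
      (Sum.inr_injective ((e S).injective hy))⟩

/-! ### Supermultiplicative arrays -/

/-- Supermultiplicativity of a two-parameter sequence, on pairs of positive indices. -/
def IsSupermultiplicative (g : ℕ → ℕ → ℝ) : Prop :=
  ∀ ⦃n₁ n₂ m₁ m₂ : ℕ⦄, 0 < n₁ → 0 < n₂ → 0 < m₁ → 0 < m₂ →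
    g n₁ m₁ * g n₂ m₂ ≤ g (n₁ + n₂) (m₁ + m₂)

/-- Fekete's lemma in multiplicative form. -/
theorem exists_exp_rate_of_supermultiplicative {u : ℕ → ℝ} {Λ : ℝ}
    (hmul : ∀ a b, 0 < a → 0 < b → u a * u b ≤ u (a + b)) (hpos : ∀ t, 0 < t → 0 < u t)
    (hup : ∀ t : ℕ, u t ≤ Real.exp (t * Λ)) :
    ∃ L ≤ Λ, (∀ t : ℕ, 0 < t → u t ≤ Real.exp (t * L)) ∧
      ∀ ε > 0, ∀ᶠ t : ℕ in atTop, Real.exp (t * (L - ε)) ≤ u t := by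
  set v : ℕ → ℝ := fun t => if t = 0 then 0 else -Real.log (u t) with hv
  have hv_pos {t : ℕ} (ht : 0 < t) : v t = -Real.log (u t) := if_neg ht.ne'
  have hsub : Subadditive v := by
    intro a b
    rcases a.eq_zero_or_pos with rfl | ha
    · simp [hv]
    rcases b.eq_zero_or_pos with rfl | hb
    · simp [hv]
    rw [hv_pos ha, hv_pos hb, hv_pos (by omega)]
    have := Real.log_le_log (mul_pos (hpos a ha) (hpos b hb)) (hmul a b ha hb)
    rw [Real.log_mul (hpos a ha).ne' (hpos b hb).ne'] at this
    linarith
  have hlower : ∀ᶠ t : ℕ in atTop, -Λ ≤ v t / t := by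
    filter_upwards [eventually_gt_atTop 0] with t ht
    have := (Real.log_le_iff_le_exp (hpos t ht)).2 (hup t)
    rw [le_div_iff₀ (by exact_mod_cast ht), hv_pos ht]
    linarith
  have hbdd : BddBelow (Set.range fun t : ℕ => v t / t) :=
    (isBoundedUnder_of_eventually_ge hlower).bddBelow_range
  refine ⟨-hsub.lim, ?_, fun t ht => ?_, fun ε hε => ?_⟩
  · linarith [ge_of_tendsto (hsub.tendsto_lim hbdd) hlower]
  · have := hsub.lim_le_div hbdd ht.ne'
    rw [le_div_iff₀ (by exact_mod_cast ht), hv_pos ht] at this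
    rw [← Real.log_le_iff_le_exp (hpos t ht)]
    linarith
  · filter_upwards [(tendsto_order.1 (hsub.tendsto_lim hbdd)).2 (hsub.lim + ε) (by linarith),
      eventually_gt_atTop 0] with t h ht
    rw [div_lt_iff₀ (by exact_mod_cast ht), hv_pos ht] at h
    rw [← Real.le_log_iff_exp_le (hpos t ht)]
    linarith

/-- The lattice direction `(M, p)` approximates the direction of `(n, m)`, whose slope `r` keeps a
distance `η` from both sides of the cone `x ≤ y ≤ B x`. The scale `δ` is fine compared with `η`
(through the auxiliary constant `A`), while `M` lies between `1 / δ` and `δ n`. -/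
structure IsApproxDirection (B η A δ r : ℝ) (n m M p : ℕ) : Prop where
  one_le_B : 1 ≤ B
  eta_pos : 0 < η
  A_nonneg : 0 ≤ A
  le_eta_mul_A : B + 4 ≤ η * A
  delta_nonneg : 0 ≤ δ
  mul_delta_le : (A + 2) * δ ≤ 1 / 2
  one_le_delta_mul : 1 ≤ δ * M
  le_delta_mul : M ≤ δ * n
  one_add_le_slope : 1 + η ≤ r
  slope_le : r ≤ B - η
  eq_slope_mul : (m : ℝ) = r * n
  le_slope_mul : p ≤ r * M
  slope_mul_le : r * M ≤ p + 1

namespace IsApproxDirection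

variable {B η A δ r : ℝ} {n m M p : ℕ}

theorem pos_left (h : IsApproxDirection B η A δ r n m M p) : 0 < M :=
  Nat.pos_of_ne_zero fun hM => by linarith [h.one_le_delta_mul, show δ * (M : ℝ) = 0 by simp [hM]]

theorem ceil_le (h : IsApproxDirection B η A δ r n m M p) :
    (⌈A * δ * n⌉₊ : ℝ) + M ≤ (A + 2) * δ * n := by
  have := h.A_nonneg
  have := h.delta_nonneg
  have hM : (1 : ℝ) ≤ M := by exact_mod_cast h.pos_left
  linarith [h.le_delta_mul, Nat.ceil_lt_add_one (by positivity : 0 ≤ A * δ * n)]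

theorem le_half (h : IsApproxDirection B η A δ r n m M p) : (A + 2) * δ * n ≤ n / 2 := by
  linarith [mul_le_mul_of_nonneg_right h.mul_delta_le n.cast_nonneg]

theorem mul_delta_le_eta_mul (h : IsApproxDirection B η A δ r n m M p) {x : ℝ}
    (hx : A * δ * n ≤ x) : (B + 4) * (δ * n) ≤ η * x :=
  calc (B + 4) * (δ * n) ≤ η * A * (δ * n) :=
        mul_le_mul_of_nonneg_right h.le_eta_mul_A (mul_nonneg h.delta_nonneg n.cast_nonneg)
    _ = η * (A * δ * n) := by ring
    _ ≤ η * x := mul_le_mul_of_nonneg_left hx h.eta_pos.le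

theorem le_and_le_mul (h : IsApproxDirection B η A δ r n m M p) {x y : ℕ}
    (hx : A * δ * n ≤ x) (hy : |(y : ℝ) - r * x| ≤ (B + 4) * (δ * n)) :
    x ≤ y ∧ (y : ℝ) ≤ B * x := by
  have hη := h.mul_delta_le_eta_mul hx
  have hlow := mul_le_mul_of_nonneg_right h.one_add_le_slope (x.cast_nonneg : (0 : ℝ) ≤ x)
  have hhigh := mul_le_mul_of_nonneg_right h.slope_le (x.cast_nonneg : (0 : ℝ) ≤ x)
  have hy := abs_le.1 hy
  exact ⟨by exact_mod_cast (by linarith : (x : ℝ) ≤ y), by linarith⟩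

theorem exists_mul_add_eq (h : IsApproxDirection B η A δ r n m M p) :
    ∃ s x y : ℕ, n = s * M + x ∧ m = s * p + y ∧ A * δ * n ≤ x ∧ x ≤ (A + 2) * δ * n ∧
      x ≤ y ∧ (y : ℝ) ≤ B * x := by
  have hδ := h.delta_nonneg
  set l := ⌈A * δ * n⌉₊
  have hln : l ≤ n := by
    exact_mod_cast (by linarith [h.ceil_le, h.le_half] : (l : ℝ) ≤ n)
  obtain ⟨s, x, hnx, hlx, hxl⟩ : ∃ s x, n = s * M + x ∧ l ≤ x ∧ x ≤ l + M :=
    ⟨(n - l) / M, l + (n - l) % M, by have := Nat.div_add_mod' (n - l) M; omega,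
      Nat.le_add_right _ _, by have := Nat.mod_lt (n - l) h.pos_left; omega⟩
  have hnxR : (n : ℝ) = s * M + x := by exact_mod_cast hnx
  have hAx : A * δ * n ≤ x := (Nat.le_ceil _).trans (by exact_mod_cast hlx)
  have hxl : (x : ℝ) ≤ l + M := by exact_mod_cast hxl
  have hs0 : (0 : ℝ) ≤ s := s.cast_nonneg
  have hsδ : (s : ℝ) ≤ δ * n := by
    have hs := mul_le_mul_of_nonneg_left h.one_le_delta_mul hs0
    have hx : 0 ≤ δ * x := by positivity
    linear_combination hs + hx - δ * hnxR
  have hsp := mul_le_mul_of_nonneg_left h.le_slope_mul hs0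
  have hsp' := mul_le_mul_of_nonneg_left h.slope_mul_le hs0
  have hrx : 0 ≤ r * x :=
    mul_nonneg (by linarith [h.one_add_le_slope, h.eta_pos]) x.cast_nonneg
  have hmr : (m : ℝ) = s * (r * M) + r * x := by rw [h.eq_slope_mul, hnxR]; ring
  obtain ⟨y, hy⟩ := Nat.exists_eq_add_of_le
    (by exact_mod_cast (by linarith : (s : ℝ) * p ≤ m) : s * p ≤ m)
  have hyR : (m : ℝ) = s * p + y := by exact_mod_cast hy
  have hBδ := mul_le_mul_of_nonneg_right h.one_le_B (by positivity : 0 ≤ δ * n)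
  have hdev : |(y : ℝ) - r * x| ≤ (B + 4) * (δ * n) :=
    abs_le.2 ⟨by linarith, by linarith⟩
  exact ⟨s, x, y, hnx, hy, hAx, hxl.trans h.ceil_le, h.le_and_le_mul hAx hdev⟩

theorem exists_mul_eq_add (h : IsApproxDirection B η A δ r n m M p) {k j : ℕ}
    (hk : (k : ℝ) ≤ δ * n) (hjk : j ≤ k) :
    ∃ s x y : ℕ, s * M = n + k + x ∧ s * p = m + k + j + y ∧ A * δ * n ≤ x ∧
      x ≤ (A + 2) * δ * n ∧ x ≤ y ∧ (y : ℝ) ≤ B * x := by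
  have hδ := h.delta_nonneg
  set l := ⌈A * δ * n⌉₊
  obtain ⟨s, x, hsx, hlx, hxl⟩ : ∃ s x, s * M = n + k + x ∧ l ≤ x ∧ x ≤ l + M := by
    have hlt := Nat.lt_div_mul_add (a := n + k + l) h.pos_left
    have hle := Nat.div_mul_le_self (n + k + l) M
    refine ⟨(n + k + l) / M + 1, ((n + k + l) / M + 1) * M - (n + k), ?_, ?_, ?_⟩ <;>
      rw [Nat.succ_mul] <;> omega
  have hsxR : (s : ℝ) * M = n + k + x := by exact_mod_cast hsx
  have hAx : A * δ * n ≤ x := (Nat.le_ceil _).trans (by exact_mod_cast hlx)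
  have hxA : (x : ℝ) ≤ (A + 2) * δ * n := (by exact_mod_cast hxl : (x : ℝ) ≤ l + M).trans h.ceil_le
  have hs0 : (0 : ℝ) ≤ s := s.cast_nonneg
  have hnδ : 0 ≤ δ * n := by positivity
  have hsδ : (s : ℝ) ≤ 3 * (δ * n) := by
    have hA : 0 ≤ A * δ * n := mul_nonneg (mul_nonneg h.A_nonneg hδ) n.cast_nonneg
    have hs := mul_le_mul_of_nonneg_left h.one_le_delta_mul hs0
    have hkx : δ * (k + x) ≤ δ * (2 * n) :=
      mul_le_mul_of_nonneg_left (by linarith [h.le_half]) hδ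
    linear_combination hs + hkx + δ * hsxR
  have hsp := mul_le_mul_of_nonneg_left h.le_slope_mul hs0
  have hsp' := mul_le_mul_of_nonneg_left h.slope_mul_le hs0
  have hmr : (s : ℝ) * (r * M) = m + r * k + r * x := by
    rw [h.eq_slope_mul]; linear_combination r * hsxR
  have hr : 1 ≤ r := by linarith [h.one_add_le_slope, h.eta_pos]
  have hrk : 1 * (k : ℝ) ≤ r * k := mul_le_mul_of_nonneg_right hr k.cast_nonneg
  have hrk' : r * k ≤ B * (δ * n) :=
    mul_le_mul (by linarith [h.slope_le, h.eta_pos]) hk k.cast_nonneg (by linarith [h.one_le_B])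
  have hrx : (1 + η) * x ≤ r * x := mul_le_mul_of_nonneg_right h.one_add_le_slope x.cast_nonneg
  have hηx := h.mul_delta_le_eta_mul hAx
  have hjkR : (j : ℝ) ≤ k := by exact_mod_cast hjk
  obtain ⟨y, hy⟩ := Nat.exists_eq_add_of_le
    (by exact_mod_cast
      (by linarith [x.cast_nonneg (α := ℝ), mul_le_mul_of_nonneg_right h.one_le_B hnδ] :
        (m : ℝ) + k + j ≤ s * p) : m + k + j ≤ s * p)
  have hyR : (s : ℝ) * p = m + k + j + y := by exact_mod_cast hy
  have hdev : |(y : ℝ) - r * x| ≤ (B + 4) * (δ * n) :=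
    abs_le.2 ⟨by linarith, by linarith [j.cast_nonneg (α := ℝ)]⟩
  exact ⟨s, x, y, hsx, hy, hAx, hxA, h.le_and_le_mul hAx hdev⟩

variable {g : ℕ → ℕ → ℝ} {L Λ D : ℝ}

theorem mul_add_mul_le (h : IsApproxDirection B η A δ r n m M p) {k s s' x x' : ℕ} (hΛ : 0 ≤ Λ)
    (hD : 0 ≤ D) (hL : L ≤ M * Λ) (hk : (k : ℝ) ≤ δ * n) (hn : n = s * M + x)
    (hn' : s' * M = n + k + x') (hxA : x ≤ (A + 2) * δ * n) (hxA' : x' ≤ (A + 2) * δ * n) :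
    s' * L + D * x' ≤ ((2 * A + 5) * Λ + 1 + 2 * (A + 2) * D) * δ * n +
      (s * (L - δ * M) + -(D * x)) := by
  have hnR : (n : ℝ) = s * M + x := by exact_mod_cast hn
  have hnR' : (s' : ℝ) * M = n + k + x' := by exact_mod_cast hn'
  have hss : ((s' : ℝ) - s) * M ≤ (2 * A + 5) * δ * n := by linarith
  have hss0 : 0 ≤ (s' : ℝ) - s := by
    refine nonneg_of_mul_nonneg_left (b := (M : ℝ)) ?_ (by exact_mod_cast h.pos_left)
    linarith [k.cast_nonneg (α := ℝ), x.cast_nonneg (α := ℝ), x'.cast_nonneg (α := ℝ)]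
  have hsL : ((s' : ℝ) - s) * L ≤ (2 * A + 5) * δ * n * Λ :=
    calc ((s' : ℝ) - s) * L ≤ (s' - s) * (M * Λ) := mul_le_mul_of_nonneg_left hL hss0
      _ = (s' - s) * M * Λ := by ring
      _ ≤ _ := mul_le_mul_of_nonneg_right hss hΛ
  have hDx := mul_le_mul_of_nonneg_left (add_le_add hxA hxA') hD
  have hsM : δ * (s * M) ≤ δ * n :=
    mul_le_mul_of_nonneg_left (by linarith [x.cast_nonneg (α := ℝ)]) h.delta_nonneg
  linarith

theorem ratio_le (h : IsApproxDirection B η A δ r n m M p) {k j T : ℕ}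
    (hg : IsSupermultiplicative g) (hg0 : ∀ x y, 0 ≤ g x y) (hΛ : 0 ≤ Λ) (hD : 0 ≤ D)
    (hAδn : 0 < A * δ * n)
    (hlow : ∀ x y : ℕ, A * δ * n ≤ x → x ≤ y → (y : ℝ) ≤ B * x → Real.exp (-(D * x)) ≤ g x y)
    (hT : 0 < T) (hTn : 2 * (T * M) ≤ n) (hMp : M ≤ p) (hL : L ≤ M * Λ)
    (hgL : ∀ t : ℕ, 0 < t → g (t * M) (t * p) ≤ Real.exp (t * L))
    (hLg : ∀ t : ℕ, T ≤ t → Real.exp (t * (L - δ * M)) ≤ g (t * M) (t * p))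
    (hk : (k : ℝ) ≤ δ * n) (hjk : j ≤ k) :
    g (n + k) (m + k + j) ≤
      Real.exp (((2 * A + 5) * Λ + 1 + 2 * (A + 2) * D) * δ * n) * g n m := by
  obtain ⟨s, x, y, hn, hm, hAx, hxA, hxy, hyB⟩ := h.exists_mul_add_eq
  obtain ⟨s', x', y', hn', hm', hAx', hxA', hxy', hyB'⟩ := h.exists_mul_eq_add hk hjk
  have hx0 : 0 < x := by exact_mod_cast hAδn.trans_le hAx
  have hx0' : 0 < x' := by exact_mod_cast hAδn.trans_le hAx'
  have hM := h.pos_left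
  have hnR : (n : ℝ) = s * M + x := by exact_mod_cast hn
  have hTs : T ≤ s := by
    have := h.le_half
    have hTnR : 2 * ((T : ℝ) * M) ≤ n := by exact_mod_cast hTn
    exact_mod_cast le_of_mul_le_mul_right (by linarith : (T : ℝ) * M ≤ s * M)
      (by exact_mod_cast hM)
  have hs' : 0 < s' := Nat.pos_of_ne_zero fun hs => by simp [hs] at hn'; omega
  have hp : 0 < s * p := Nat.mul_pos (by omega) (by omega)
  have hup : g (n + k) (m + k + j) * Real.exp (-(D * x')) ≤ Real.exp (s' * L) :=
    calc g (n + k) (m + k + j) * Real.exp (-(D * x')) ≤ g (n + k) (m + k + j) * g x' y' :=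
          mul_le_mul_of_nonneg_left (hlow x' y' hAx' hxy' hyB') (hg0 _ _)
      _ ≤ g (s' * M) (s' * p) := by
          rw [hn', hm']; exact hg (by omega) hx0' (by omega) (by omega)
      _ ≤ Real.exp (s' * L) := hgL s' hs'
  have hdown : Real.exp (s * (L - δ * M)) * Real.exp (-(D * x)) ≤ g n m :=
    calc _ ≤ g (s * M) (s * p) * g x y :=
          mul_le_mul (hLg s hTs) (hlow x y hAx hxy hyB) (Real.exp_pos _).le (hg0 _ _)
      _ ≤ g n m := by
          rw [hn, hm]; exact hg (Nat.mul_pos (by omega) hM) hx0 hp (by omega)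
  calc g (n + k) (m + k + j) ≤ Real.exp (s' * L + D * x') := by
        rwa [Real.exp_neg, ← div_eq_mul_inv, div_le_iff₀ (Real.exp_pos _), ← Real.exp_add] at hup
    _ ≤ _ := Real.exp_le_exp.2 (h.mul_add_mul_le hΛ hD hL hk hn hn' hxA hxA')
    _ ≤ _ := by
        rw [Real.exp_add, Real.exp_add (_ * _)]
        exact mul_le_mul_of_nonneg_left hdown (Real.exp_pos _).le

end IsApproxDirection

theorem exists_rate_of_directions {g : ℕ → ℕ → ℝ} {Λ B θ : ℝ} {M : ℕ}
    (hg : IsSupermultiplicative g) (hup : ∀ n m, g n m ≤ Real.exp (n * Λ)) (hM : 0 < M)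
    (hpos : ∀ n m : ℕ, M ≤ n → n ≤ m → (m : ℝ) ≤ B * n → 0 < g n m) (hθ : 0 < θ) :
    ∃ (L : ℕ → ℝ) (T : ℕ), 0 < T ∧ ∀ p : ℕ, M ≤ p → (p : ℝ) ≤ B * M → L p ≤ M * Λ ∧
      (∀ t : ℕ, 0 < t → g (t * M) (t * p) ≤ Real.exp (t * L p)) ∧
      ∀ t : ℕ, T ≤ t → Real.exp (t * (L p - θ)) ≤ g (t * M) (t * p) := by
  have hrate (p : ℕ) (hp : M ≤ p ∧ (p : ℝ) ≤ B * M) : ∃ L ≤ M * Λ,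
      (∀ t : ℕ, 0 < t → g (t * M) (t * p) ≤ Real.exp (t * L)) ∧
      ∀ ε > 0, ∀ᶠ t : ℕ in atTop, Real.exp (t * (L - ε)) ≤ g (t * M) (t * p) := by
    refine exists_exp_rate_of_supermultiplicative (fun a b ha hb => ?_) (fun t ht => ?_)
      fun t => by simpa [mul_assoc] using hup (t * M) (t * p)
    · have hp0 : 0 < p := hM.trans_le hp.1
      rw [add_mul, add_mul]
      exact hg (Nat.mul_pos ha hM) (Nat.mul_pos hb hM) (Nat.mul_pos ha hp0) (Nat.mul_pos hb hp0)
    · refine hpos _ _ (Nat.le_mul_of_pos_left _ ht) (Nat.mul_le_mul_left _ hp.1) ?_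
      push_cast
      linarith [mul_le_mul_of_nonneg_left hp.2 t.cast_nonneg]
  choose! L hL hgL hLg using hrate
  have hfin : {p : ℕ | M ≤ p ∧ (p : ℝ) ≤ B * M}.Finite :=
    (Set.finite_Iic ⌊B * M⌋₊).subset fun p hp => Nat.le_floor hp.2
  obtain ⟨T, hT⟩ := eventually_atTop.1
    ((eventually_all_finite hfin).2 fun p hp => hLg p hp θ hθ)
  exact ⟨L, T + 1, T.succ_pos, fun p hp hpB =>
    ⟨hL p ⟨hp, hpB⟩, hgL p ⟨hp, hpB⟩, fun t ht => hT t (by omega) p ⟨hp, hpB⟩⟩⟩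

/-- Both `(n, m)` and `(n + k, m + k + j)` are compared with multiples of a common lattice
direction `(M, p)` with `M = ⌈1 / δ⌉`, along which Fekete's lemma gives an exponential rate. -/
theorem IsSupermultiplicative.exists_ratio_le {g : ℕ → ℕ → ℝ} {B η Λ D : ℝ} {x₀ : ℕ}
    (hg : IsSupermultiplicative g) (hg0 : ∀ x y, 0 ≤ g x y) (hΛ : 0 ≤ Λ)
    (hup : ∀ n m, g n m ≤ Real.exp (n * Λ)) (hD : 0 ≤ D)
    (hlow : ∀ x y : ℕ, x₀ ≤ x → x ≤ y → (y : ℝ) ≤ B * x → Real.exp (-(D * x)) ≤ g x y)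
    (hB : 1 ≤ B) (hη : 0 < η) :
    ∃ K > 0, ∃ δ₀ > 0, ∀ δ : ℝ, 0 < δ → δ ≤ δ₀ → ∀ᶠ n : ℕ in atTop, ∀ m k j : ℕ,
      (1 + η) * n ≤ m → (m : ℝ) ≤ (B - η) * n → (k : ℝ) ≤ δ * n → j ≤ k →
      g (n + k) (m + k + j) ≤ Real.exp (K * δ * n) * g n m := by
  set A := (B + 4) / η
  have hA0 : 0 < A := by positivity
  refine ⟨(2 * A + 5) * Λ + 1 + 2 * (A + 2) * D, by positivity,
    min (1 / (2 * (A + 2))) (1 / (x₀ + 1)), by positivity, fun δ hδ hδ₀ => ?_⟩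
  obtain ⟨hδA, hδx⟩ := le_min_iff.1 hδ₀
  rw [le_div_iff₀ (by positivity)] at hδA hδx
  set M := ⌈1 / δ⌉₊
  have hδM : 1 ≤ δ * M := by
    rw [mul_comm, ← div_le_iff₀ hδ]; exact Nat.le_ceil _
  have hM : 0 < M := Nat.ceil_pos.2 (by positivity)
  have hxM : x₀ ≤ M := by
    exact_mod_cast (le_of_mul_le_mul_left (by linarith) hδ : (x₀ : ℝ) ≤ M)
  obtain ⟨L, T, hT, hLT⟩ := exists_rate_of_directions (θ := δ * M) hg hup hM
    (fun n m hn hnm hm => (Real.exp_pos _).trans_le (hlow n m (hxM.trans hn) hnm hm))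
    (by positivity)
  have htend {c : ℝ} (hc : 0 < c) : Tendsto (fun n : ℕ => c * (n : ℝ)) atTop atTop :=
    tendsto_natCast_atTop_atTop.const_mul_atTop hc
  filter_upwards [(htend hδ).eventually_ge_atTop (M : ℝ), eventually_ge_atTop (2 * (T * M)),
    (htend (by positivity : 0 < A * δ)).eventually_ge_atTop (x₀ : ℝ), eventually_gt_atTop 0]
    with n hMn hTn hxn hn m k j hm hmB hk hjk
  have hnR : (0 : ℝ) < n := by exact_mod_cast hn
  have hslope : 1 + η ≤ (m : ℝ) / n ∧ (m : ℝ) / n ≤ B - η :=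
    ⟨(le_div_iff₀ hnR).2 hm, (div_le_iff₀ hnR).2 hmB⟩
  have hrM : (M : ℝ) ≤ m / n * M := le_mul_of_one_le_left M.cast_nonneg (by linarith)
  have hp : (⌊m / n * (M : ℝ)⌋₊ : ℝ) ≤ m / n * M := Nat.floor_le (by positivity)
  have hMp : M ≤ ⌊m / n * (M : ℝ)⌋₊ := Nat.le_floor hrM
  have hdir : IsApproxDirection B η A δ (m / n) n m M ⌊m / n * (M : ℝ)⌋₊ :=
    ⟨hB, hη, hA0.le, (mul_div_cancel₀ _ hη.ne').ge, hδ.le, by linarith, hδM, hMn, hslope.1,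
      hslope.2, (div_mul_cancel₀ _ hnR.ne').symm, hp, (Nat.lt_floor_add_one _).le⟩
  obtain ⟨hL, hgL, hLg⟩ := hLT _ hMp
    (hp.trans (mul_le_mul_of_nonneg_right (by linarith) M.cast_nonneg))
  exact hdir.ratio_le hg hg0 hΛ hD (by positivity)
    (fun x y hx => hlow x y (by exact_mod_cast hxn.trans hx)) hT hTn hMp hL hgL hLg hk hjk

/-! ### Growth of the number of connected planar graphs -/

/-- The number of connected planar graphs with `n` vertices and `m - 1` edges, normalised so as to
become supermultiplicative: joining two graphs by an edge adds up vertices and, after the shift,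
edges, and the constant absorbs the loss `16 * (n₁ + n₂) / (n₁ * n₂) ≤ 32`. -/
noncomputable def normConnCount (n m : ℕ) : ℝ :=
  (connSet n (m - 1)).ncard / (32 * n.factorial)

theorem normConnCount_nonneg (n m : ℕ) : 0 ≤ normConnCount n m := by
  unfold normConnCount
  positivity

theorem isSupermultiplicative_normConnCount : IsSupermultiplicative normConnCount := by
  intro n₁ n₂ m₁ m₂ hn₁ hn₂ hm₁ hm₂
  have h := choose_mul_ncard_connSet_mul_le n₁ n₂ (m₁ - 1) (m₂ - 1)
  rw [show m₁ - 1 + (m₂ - 1) + 1 = m₁ + m₂ - 1 by omega] at h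
  unfold normConnCount
  set c₁ := (connSet n₁ (m₁ - 1)).ncard
  set c₂ := (connSet n₂ (m₂ - 1)).ncard
  set c := (connSet (n₁ + n₂) (m₁ + m₂ - 1)).ncard
  have hchoose : (n₁ + n₂).choose n₁ * (c₁ * c₂) ≤ 32 * c := by
    have hn : n₁ + n₂ ≤ 2 * (n₁ * n₂) := by nlinarith
    refine le_of_mul_le_mul_right (h.trans ?_) (Nat.mul_pos hn₁ hn₂)
    calc c * (16 * (n₁ + n₂)) ≤ c * (16 * (2 * (n₁ * n₂))) := by gcongr
      _ = 32 * c * (n₁ * n₂) := by ring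
  have hfact := Nat.choose_mul_factorial_mul_factorial (Nat.le_add_right n₁ n₂)
  rw [Nat.add_sub_cancel_left] at hfact
  rw [div_mul_div_comm, div_le_div_iff₀ (by positivity) (by positivity), ← hfact]
  have := Nat.mul_le_mul_right (32 * (n₁.factorial * n₂.factorial)) hchoose
  norm_cast
  linarith

theorem one_div_factorial_le_normConnCount {n m : ℕ} (hn : 0 < n) (hnm : n ≤ m)
    (hm : m + 8 ≤ 3 * n) : 1 / (32 * (n.factorial : ℝ)) ≤ normConnCount n m := by
  obtain ⟨n, rfl⟩ := Nat.exists_eq_add_of_lt hn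
  rw [zero_add] at *
  have : 1 ≤ (connSet (n + 1) (m - 1)).ncard :=
    (Set.ncard_pos (Set.toFinite _)).2 (connSet_nonempty (by omega) (by omega))
  unfold normConnCount
  gcongr
  exact_mod_cast this

/-- Cut off blocks of size `a` with at most `2 * a - 8` excess edges each. -/
theorem pow_le_normConnCount_of_le {a : ℕ} (ha : 8 ≤ a) {x y : ℕ} (hax : a ≤ x) (hxy : x ≤ y)
    (hy : y ≤ x + (2 * a - 8) * (x / a)) :
    (1 / (32 * ((2 * a).factorial : ℝ))) ^ x ≤ normConnCount x y := by
  set c := 1 / (32 * ((2 * a).factorial : ℝ))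
  have hc0 : 0 < c := by positivity
  have hfact : (1 : ℝ) ≤ (2 * a).factorial := by exact_mod_cast (2 * a).factorial_pos
  have hc1 : c ≤ 1 := (div_le_one (by positivity)).2 (by linarith)
  have hblock {i j : ℕ} (hi : 0 < i) (hia : i ≤ 2 * a) (hij : i ≤ j) (hj : j + 8 ≤ 3 * i) :
      c ≤ normConnCount i j :=
    (one_div_le_one_div_of_le (by positivity) (by gcongr)).trans
      (one_div_factorial_le_normConnCount hi hij hj)
  induction x using Nat.strong_induction_on generalizing y with
  | _ x ih =>
    rcases lt_or_ge x (2 * a) with hx | hx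
    · rw [Nat.div_eq_of_lt_le (k := 1) (by omega) (by omega)] at hy
      exact (pow_le_of_le_one hc0.le hc1 (by omega)).trans
        (hblock (by omega) hx.le hxy (by omega))
    · obtain ⟨z, rfl⟩ := Nat.exists_eq_add_of_le hax
      rw [Nat.add_div_left z (by omega), Nat.mul_succ] at hy
      obtain ⟨d, w, hd, hw, hzw, rfl⟩ : ∃ d w, d ≤ 2 * a - 8 ∧ w ≤ z + (2 * a - 8) * (z / a) ∧
          z ≤ w ∧ y = a + d + w := by
        rcases le_total (y - (a + z)) (2 * a - 8) with h | h
        · exact ⟨y - (a + z), z, h, by omega, le_rfl, by omega⟩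
        · exact ⟨2 * a - 8, y - (a + (2 * a - 8)), le_rfl, by omega, by omega, by omega⟩
      calc c ^ (a + z) = c ^ a * c ^ z := pow_add ..
        _ ≤ c * c ^ z := by gcongr; exact pow_le_of_le_one hc0.le hc1 (by omega)
        _ ≤ normConnCount a (a + d) * normConnCount z w :=
            mul_le_mul (hblock (by omega) (by omega) (by omega) (by omega))
              (ih z (by omega) (by omega) hzw hw) (by positivity) (normConnCount_nonneg _ _)
        _ ≤ normConnCount (a + z) (a + d + w) :=
            isSupermultiplicative_normConnCount (by omega) (by omega) (by omega) (by omega)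

theorem le_add_mul_div_of_le_mul {B : ℝ} {a x y : ℕ} (ha : 8 ≤ a) (haB : 16 ≤ (3 - B) * a)
    (hx : 4 * a ≤ (3 - B) * x) (hy : (y : ℝ) ≤ B * x) : y ≤ x + (2 * a - 8) * (x / a) := by
  have hxa : (x : ℝ) ≤ a * ((x / a : ℕ) + 1) := by
    exact_mod_cast (Nat.lt_mul_div_succ x (by omega)).le
  have ha8 : (8 : ℝ) ≤ a := by exact_mod_cast ha
  have hmul : a * (y : ℝ) ≤ a * (x + (2 * a - 8) * (x / a : ℕ)) :=
    calc a * (y : ℝ) ≤ a * (B * x) := by gcongr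
      _ ≤ a * x + (2 * a - 8) * (x - a) := by
          linarith [mul_le_mul_of_nonneg_right haB x.cast_nonneg,
            mul_le_mul_of_nonneg_left hx a.cast_nonneg]
      _ ≤ a * x + (2 * a - 8) * (a * (x / a : ℕ)) := by
          gcongr
          · linarith
          · linarith
      _ = _ := by ring
  have := le_of_mul_le_mul_left hmul (by linarith)
  rw [← Nat.cast_le (α := ℝ)]
  push_cast [Nat.cast_sub (by omega : 8 ≤ 2 * a)]
  exact this

theorem exists_exp_le_normConnCount {B : ℝ} (hB : B < 3) : ∃ D ≥ 0, ∃ x₀ : ℕ, ∀ x y : ℕ, x₀ ≤ x →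
    x ≤ y → (y : ℝ) ≤ B * x → Real.exp (-(D * x)) ≤ normConnCount x y := by
  have h3 : 0 < 3 - B := by linarith
  obtain ⟨a, ha⟩ := exists_nat_ge (max 8 (16 / (3 - B)))
  obtain ⟨ha8, haB⟩ := max_le_iff.1 ha
  rw [div_le_iff₀' h3] at haB
  obtain ⟨x₀, hx₀⟩ := exists_nat_ge (4 * a / (3 - B))
  rw [div_le_iff₀' h3] at hx₀
  set F : ℝ := 32 * (2 * a).factorial
  have hF : 1 ≤ F := by
    have : (1 : ℝ) ≤ (2 * a).factorial := by exact_mod_cast (2 * a).factorial_pos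
    linarith
  refine ⟨Real.log F, Real.log_nonneg hF, max a x₀, fun x y hx hxy hy => ?_⟩
  obtain ⟨hax, hx⟩ := max_le_iff.1 hx
  have hxB : 4 * a ≤ (3 - B) * x := hx₀.trans (by gcongr)
  calc Real.exp (-(Real.log F * x)) = (1 / F) ^ x := by
        rw [← neg_mul, ← Real.log_inv, mul_comm, Real.exp_nat_mul,
          Real.exp_log (by positivity), one_div]
    _ ≤ normConnCount x y := pow_le_normConnCount_of_le (by exact_mod_cast ha8) hax hxy
        (le_add_mul_div_of_le_mul (by exact_mod_cast ha8) haB hxB hy)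

theorem exists_ncard_planarOn_univ_le : ∃ C : ℕ, 0 < C ∧ ∀ n : ℕ,
    (planarOn (Set.univ : Set (Fin n))).ncard ≤ C ^ n * n.factorial := by
  obtain ⟨C, hC0, hC⟩ := exists_ncard_planarOn_le
  refine ⟨C, hC0, fun n => ?_⟩
  simpa [Set.ncard_univ] using hC (Set.univ : Set (Fin n))

theorem exists_normConnCount_le : ∃ Λ ≥ 0, ∀ n m : ℕ, normConnCount n m ≤ Real.exp (n * Λ) := by
  obtain ⟨C, hC0, hC⟩ := exists_ncard_planarOn_univ_le
  have hC1 : (1 : ℝ) ≤ C := by exact_mod_cast hC0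
  refine ⟨Real.log C, Real.log_nonneg hC1, fun n m => ?_⟩
  rw [Real.exp_nat_mul, Real.exp_log (by positivity), normConnCount, div_le_iff₀ (by positivity)]
  have hle : (connSet n (m - 1)).ncard ≤ C ^ n * n.factorial :=
    (Set.ncard_le_ncard (t := planarOn Set.univ) (fun G hG => ⟨hG.2.1, Set.subset_univ _⟩)
      (Set.toFinite _)).trans (hC n)
  have hleR : ((connSet n (m - 1)).ncard : ℝ) ≤ C ^ n * n.factorial := by exact_mod_cast hle
  linarith [(by positivity : (0 : ℝ) ≤ C ^ n * n.factorial)]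

theorem exists_normConnCount_ratio_le {B ε : ℝ} (hB : B < 3) (hε : 0 < ε) :
    ∃ K > 0, ∃ δ₀ > 0, ∀ δ : ℝ, 0 < δ → δ ≤ δ₀ → ∀ᶠ n : ℕ in atTop, ∀ m k j : ℕ,
      (1 + ε) * n ≤ m → (m : ℝ) ≤ B * n → (k : ℝ) ≤ δ * n → j ≤ k →
      normConnCount (n + k) (m + k + j) ≤ Real.exp (K * δ * n) * normConnCount n m := by
  set B' := (max B 1 + 3) / 2 with hB'
  have hmax : max B 1 < 3 := max_lt hB (by norm_num)
  have hη : 0 < min ε (B' - max B 1) := lt_min hε (by linarith)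
  obtain ⟨D, hD, x₀, hlow⟩ := exists_exp_le_normConnCount (by linarith : B' < 3)
  obtain ⟨Λ, hΛ, hup⟩ := exists_normConnCount_le
  obtain ⟨K, hK, δ₀, hδ₀, h⟩ := isSupermultiplicative_normConnCount.exists_ratio_le
    normConnCount_nonneg hΛ hup hD hlow (by linarith [le_max_right B 1] : 1 ≤ B') hη
  refine ⟨K, hK, δ₀, hδ₀, fun δ hδ hδδ₀ => (h δ hδ hδδ₀).mono fun n h m k j hm hmB hk hj =>
    h m k j (le_trans ?_ hm) (hmB.trans ?_) hk hj⟩ <;>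
  · gcongr
    linarith [min_le_left ε (B' - max B 1), min_le_right ε (B' - max B 1), le_max_left B 1]

/-! ### From connected to arbitrary planar graphs -/

section Components

variable {V : Type*} {G : SimpleGraph V} {u v : V}

theorem reachable_of_reachable_sup_edge (h : ¬ G.Reachable u v) {x y : V}
    (hx : ¬ G.Reachable x v) (hy : ¬ G.Reachable y v) (hxy : (G ⊔ edge u v).Reachable x y) :
    G.Reachable x y := by
  classical
  -- collapsing the component of `v` to `u` maps the new edge to a point
  let φ : V → V := fun z => if G.Reachable z v then u else z
  have hφ : ∀ z w, (G ⊔ edge u v).Adj z w → G.Reachable (φ z) (φ w) := by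
    intro z w hzw
    rw [sup_adj, edge_adj] at hzw
    rcases hzw with hzw | ⟨⟨rfl, rfl⟩ | ⟨rfl, rfl⟩, -⟩
    · have hiff : G.Reachable z v ↔ G.Reachable w v :=
        ⟨hzw.reachable.symm.trans, hzw.reachable.trans⟩
      by_cases hw : G.Reachable w v
      · simp [φ, hiff, hw]
      · simpa [φ, hiff, hw] using hzw.reachable
    · simp [φ]
    · simp [φ]
  simpa [φ, hx, hy] using reachable_map_of_forall_adj φ hφ hxy

theorem card_connectedComponent_sup_edge_add_one [Finite V] (h : ¬ G.Reachable u v) :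
    Nat.card (G ⊔ edge u v).ConnectedComponent + 1 = Nat.card G.ConnectedComponent := by
  have hle : G ≤ G ⊔ edge u v := le_sup_left
  have huv : (G ⊔ edge u v).Reachable u v := by
    have hne : u ≠ v := fun e => h (e ▸ Reachable.refl _)
    exact Adj.reachable (by simp [edge_adj, hne])
  rw [← Set.ncard_univ G.ConnectedComponent,
    ← Set.ncard_sdiff_singleton_add_one (Set.mem_univ (G.connectedComponentMk v)),
    ← Set.ncard_univ]
  congr 1
  symm
  refine Set.ncard_congr (fun c _ => c.map (Hom.ofLE hle)) (fun _ _ => Set.mem_univ _) ?_ ?_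
  · intro c d hc hd hcd
    induction c using ConnectedComponent.ind with | _ x => ?_
    induction d using ConnectedComponent.ind with | _ y => ?_
    exact ConnectedComponent.sound (reachable_of_reachable_sup_edge h
      (fun hx => hc.2 (ConnectedComponent.sound hx)) (fun hy => hd.2 (ConnectedComponent.sound hy))
      (ConnectedComponent.exact hcd))
  · intro c _
    induction c using ConnectedComponent.ind with | _ x => ?_
    by_cases hx : G.Reachable x v
    · exact ⟨G.connectedComponentMk u, ⟨Set.mem_univ _, fun e => h (ConnectedComponent.exact e)⟩,
        ConnectedComponent.sound (huv.trans (hx.mono hle).symm)⟩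
    · exact ⟨G.connectedComponentMk x,
        ⟨Set.mem_univ _, fun e => hx (ConnectedComponent.exact e)⟩, rfl⟩

theorem card_connectedComponent_mul_le [Finite V] (G : SimpleGraph V) :
    Nat.card G.ConnectedComponent * (Nat.card G.ConnectedComponent - 1) ≤
      {p : V × V | ¬ G.Reachable p.1 p.2}.ncard := by
  classical
  have : Fintype G.ConnectedComponent := Fintype.ofFinite _
  have h : (Finset.univ : Finset G.ConnectedComponent).offDiag.card =
      Nat.card G.ConnectedComponent * (Nat.card G.ConnectedComponent - 1) := by
    rw [Finset.offDiag_card, Finset.card_univ, Nat.card_eq_fintype_card, Nat.mul_sub, mul_one]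
  have hout (c : G.ConnectedComponent) : G.connectedComponentMk c.out = c := Quot.out_eq c
  rw [← h, ← Set.ncard_coe_finset]
  refine Set.ncard_le_ncard_of_injOn (fun p => (p.1.out, p.2.out)) ?_ ?_ (Set.toFinite _)
  · rintro ⟨c, d⟩ hcd hr
    have hcd : c ≠ d := by simpa using hcd
    rw [← hout c, ← hout d] at hcd
    exact hcd (ConnectedComponent.sound hr)
  · rintro ⟨c, d⟩ _ ⟨c', d'⟩ _ he
    simp only [Prod.mk.injEq] at he
    rw [← hout c, ← hout d, ← hout c', ← hout d', he.1, he.2]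

end Components

/-- The planar graphs on `n` labelled vertices with `m` edges and `κ` components. -/
def compSet (κ n m : ℕ) : Set (SimpleGraph (Fin n)) :=
  {G | IsPlanar G ∧ edgeCount G = m ∧ Nat.card G.ConnectedComponent = κ}

theorem compSet_one (n m : ℕ) : compSet 1 n m = connSet n m := by
  ext G
  have : Nat.card G.ConnectedComponent = 1 ↔ G.Connected := by
    rw [Nat.card_eq_one_iff_unique, connected_iff]
    constructor
    · rintro ⟨_, ⟨c⟩⟩
      exact ⟨fun x y => ConnectedComponent.exact (Subsingleton.elim _ _), ⟨c.out⟩⟩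
    · rintro ⟨h, ⟨x⟩⟩
      exact ⟨h.subsingleton_connectedComponent, ⟨G.connectedComponentMk x⟩⟩
  simp only [compSet, connSet, Set.mem_ofPred_eq, this]
  tauto

theorem ncard_compSet_succ_mul_le (κ n m : ℕ) :
    (compSet (κ + 1) n m).ncard * ((κ + 1) * κ) ≤ (compSet κ n (m + 1)).ncard * (2 * (m + 1)) := by
  refine ncard_mul_le_ncard_mul_of_moves (compSet (κ + 1) n m)
    (fun G => {p : Fin n × Fin n | ¬ G.Reachable p.1 p.2}) (compSet κ n (m + 1))
    (fun H => {p : Fin n × Fin n | H.Adj p.1 p.2}) (fun G p => G ⊔ edge p.1 p.2) (fun _ p => p)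
    ?_ ?_ ?_ ?_
  · rintro G ⟨-, -, hG⟩
    have h := card_connectedComponent_mul_le G
    rwa [hG, Nat.add_sub_cancel] at h
  · rintro H ⟨-, hH, -⟩
    rw [ncard_setOf_adj, hH]
  · rintro G ⟨hp, hm, hc⟩ ⟨u, v⟩ (huv : ¬ G.Reachable u v)
    have hne : u ≠ v := fun e => huv (e ▸ Reachable.refl _)
    refine ⟨⟨hp.sup_edge_of_not_reachable huv, ?_, ?_⟩, ?_⟩
    · rw [edgeCount_sup_edge hne (fun h => huv h.reachable), hm]
    · exact Nat.add_right_cancel ((card_connectedComponent_sup_edge_add_one huv).trans hc)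
    · simp [edge_adj, hne]
  · rintro G - ⟨u, v⟩ (huv : ¬ G.Reachable u v) G' - p' hp' he (rfl : (u, v) = p')
    exact ⟨eq_of_sup_edge_eq (fun h => huv h.reachable) (fun h => hp' h.reachable) he, rfl⟩

theorem ncard_compSet_mul_factorial_sq_le {n R : ℕ} (j : ℕ) : ∀ {m : ℕ}, 2 * (m + j) ≤ R →
    (compSet (j + 1) n m).ncard * j.factorial ^ 2 ≤ R ^ j * (connSet n (m + j)).ncard := by
  induction j with
  | zero => intro m _; simp [compSet_one]
  | succ j ih =>
    intro m hm
    have hstep := ncard_compSet_succ_mul_le (j + 1) n m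
    have hrec := ih (m := m + 1) (by omega)
    rw [show m + 1 + j = m + (j + 1) by omega] at hrec
    calc (compSet (j + 1 + 1) n m).ncard * (j + 1).factorial ^ 2
        = (compSet (j + 1 + 1) n m).ncard * ((j + 1) * (j + 1)) * j.factorial ^ 2 := by
          rw [Nat.factorial_succ]; ring
      _ ≤ (compSet (j + 1 + 1) n m).ncard * ((j + 1 + 1) * (j + 1)) * j.factorial ^ 2 := by
          gcongr; omega
      _ ≤ (compSet (j + 1) n (m + 1)).ncard * (2 * (m + 1)) * j.factorial ^ 2 := by gcongr
      _ = (2 * (m + 1)) * ((compSet (j + 1) n (m + 1)).ncard * j.factorial ^ 2) := by ring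
      _ ≤ R * (R ^ j * (connSet n (m + (j + 1))).ncard) := by
          gcongr; omega
      _ = _ := by ring

theorem ncard_planarSet_le_sum (n m : ℕ) (hn : 1 ≤ n) :
    (planarSet n m).ncard ≤ ∑ j ∈ Finset.range n, (compSet (j + 1) n m).ncard := by
  have hsub : planarSet n m ⊆ ⋃ j ∈ Finset.range n, compSet (j + 1) n m := by
    intro G hG
    have hle : Nat.card G.ConnectedComponent ≤ n := by
      simpa using Nat.card_le_card_of_surjective G.connectedComponentMk Quot.mk_surjective
    have : Nonempty G.ConnectedComponent := ⟨G.connectedComponentMk ⟨0, hn⟩⟩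
    have hpos : 0 < Nat.card G.ConnectedComponent := Nat.card_pos
    simp only [Set.mem_iUnion, Finset.mem_range]
    exact ⟨Nat.card G.ConnectedComponent - 1, by omega, hG.1, hG.2, by omega⟩
  exact (Set.ncard_le_ncard hsub (Set.toFinite _)).trans (Finset.set_ncard_biUnion_le _ _)

theorem pow_div_factorial_sq_le_exp {R : ℝ} (hR : 0 ≤ R) (a : ℝ) (j : ℕ) :
    R ^ j / (j.factorial : ℝ) ^ 2 ≤ Real.exp (-(2 * a * j)) * Real.exp (2 * Real.exp a * √R) := by
  have h : (Real.exp a * √R) ^ j / j.factorial ≤ Real.exp (Real.exp a * √R) :=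
    Real.pow_div_factorial_le_exp _ (by positivity) j
  have hsq : Real.exp (2 * a * j) * (R ^ j / (j.factorial : ℝ) ^ 2) ≤
      Real.exp (2 * Real.exp a * √R) :=
    calc Real.exp (2 * a * j) * (R ^ j / (j.factorial : ℝ) ^ 2)
        = ((Real.exp a * √R) ^ j / j.factorial) ^ 2 := by
          rw [div_pow, mul_pow, mul_pow, ← pow_mul √R, mul_comm j 2, pow_mul √R, Real.sq_sqrt hR,
            ← Real.exp_nat_mul, ← Real.exp_nat_mul, mul_div_assoc]
          congr 2
          push_cast
          ring
      _ ≤ Real.exp (Real.exp a * √R) ^ 2 := by gcongr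
      _ = Real.exp (2 * Real.exp a * √R) := by
          rw [← Real.exp_nat_mul, mul_assoc]
          norm_cast
  rwa [Real.exp_neg, inv_mul_eq_div, le_div_iff₀' (Real.exp_pos _)]

theorem ncard_connSet_eq (n m : ℕ) :
    ((connSet n m).ncard : ℝ) = n.factorial * (32 * normConnCount n (m + 1)) := by
  have : (n.factorial : ℝ) ≠ 0 := by positivity
  rw [normConnCount, Nat.add_sub_cancel]
  field_simp

/-- The factor `exp (-2aj)` expresses that graphs with many components are rare: joining them up
in all possible ways produces superexponentially many connected graphs. -/
theorem ncard_compSet_le {n m j R : ℕ} (hR : 2 * (m + j) ≤ R) (a : ℝ) :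
    ((compSet (j + 1) n m).ncard : ℝ) ≤ Real.exp (2 * Real.exp a * √R) * n.factorial *
      (32 * (Real.exp (-(2 * a * j)) * normConnCount n (m + j + 1))) := by
  have h : ((compSet (j + 1) n m).ncard : ℝ) * (j.factorial : ℝ) ^ 2 ≤
      (R : ℝ) ^ j * (connSet n (m + j)).ncard := by
    exact_mod_cast ncard_compSet_mul_factorial_sq_le j hR
  calc ((compSet (j + 1) n m).ncard : ℝ)
      ≤ (R : ℝ) ^ j / (j.factorial : ℝ) ^ 2 * (connSet n (m + j)).ncard := by
        rwa [div_mul_eq_mul_div, le_div_iff₀ (by positivity)]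
    _ ≤ Real.exp (-(2 * a * j)) * Real.exp (2 * Real.exp a * √R) *
          (n.factorial * (32 * normConnCount n (m + j + 1))) := by
        rw [← ncard_connSet_eq]
        gcongr
        exact pow_div_factorial_sq_le_exp R.cast_nonneg a j
    _ = _ := by ring

theorem mul_normConnCount_le (n m : ℕ) :
    32 * normConnCount n (m + 1) ≤ (planarSet n m).ncard / n.factorial := by
  have hle : ((connSet n m).ncard : ℝ) ≤ (planarSet n m).ncard := by
    exact_mod_cast Set.ncard_le_ncard (fun _ (hG : _ ∧ _) => hG.2) (Set.toFinite _)
  rwa [le_div_iff₀ (by positivity), mul_comm, ← ncard_connSet_eq]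

theorem eventually_mul_exp_sqrt_le (Y : ℝ) {δ : ℝ} (hδ : 0 < δ) :
    ∀ᶠ n : ℕ in atTop, 2 * n * Real.exp (Y * √n) ≤ Real.exp (δ * n) := by
  have hlin : ∀ᶠ x : ℝ in atTop, 2 * x ≤ Real.exp (δ / 2 * x) := by
    have h := (isLittleO_pow_exp_pos_mul_atTop 1 (half_pos hδ)).bound one_half_pos
    filter_upwards [h, eventually_ge_atTop 0] with x hx hx0
    simp only [pow_one, Real.norm_eq_abs, abs_of_nonneg hx0, Real.abs_exp] at hx
    linarith
  have hsqrt : ∀ᶠ x : ℝ in atTop, Y * √x ≤ δ / 2 * x := by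
    filter_upwards [Real.tendsto_sqrt_atTop.eventually_ge_atTop (Y / (δ / 2)),
      eventually_ge_atTop 0] with x hx hx0
    rw [div_le_iff₀' (half_pos hδ)] at hx
    nlinarith [Real.mul_self_sqrt hx0, mul_le_mul_of_nonneg_right hx (Real.sqrt_nonneg x)]
  filter_upwards [tendsto_natCast_atTop_atTop.eventually (hlin.and hsqrt)] with n ⟨h₁, h₂⟩
  calc 2 * n * Real.exp (Y * √n) ≤ Real.exp (δ / 2 * n) * Real.exp (δ / 2 * n) := by gcongr
    _ = Real.exp (δ * n) := by rw [← Real.exp_add]; ring_nf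

/-- For `j ≤ k` the growth estimate `hratio` applies; for `j > k` the weight `exp (-2aj)` beats
the trivial upper and lower bounds on the counts. -/
theorem exp_mul_normConnCount_le {Λ D K δ a : ℝ} {n m k j : ℕ} (hΛ : 0 ≤ Λ) (hKδ : 0 ≤ K * δ)
    (ha : 0 ≤ a) (haδ : 2 * Λ + D = 2 * a * δ)
    (hup : normConnCount (n + k) (m + k + j) ≤ Real.exp ((n + k : ℕ) * Λ))
    (hlow : Real.exp (-(D * n)) ≤ normConnCount n m)
    (hratio : j ≤ k →
      normConnCount (n + k) (m + k + j) ≤ Real.exp (K * δ * n) * normConnCount n m)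
    (hkn : k ≤ n) (hδk : δ * n ≤ k + 1) :
    Real.exp (-(2 * a * j)) * normConnCount (n + k) (m + k + j) ≤
      Real.exp (K * δ * n) * normConnCount n m := by
  rcases le_or_gt j k with hjk | hjk
  · refine (mul_le_of_le_one_left (normConnCount_nonneg _ _) ?_).trans (hratio hjk)
    exact Real.exp_le_one_iff.2 (by linarith [(by positivity : 0 ≤ 2 * a * j)])
  · have hj : δ * n ≤ j := hδk.trans (by exact_mod_cast hjk)
    have hkn' : ((n + k : ℕ) : ℝ) ≤ 2 * n := by exact_mod_cast (by omega : n + k ≤ 2 * n)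
    have hexp : -(2 * a * j) + (n + k : ℕ) * Λ ≤ -(D * n) := by
      have h₁ : 2 * a * (δ * n) ≤ 2 * a * j := by gcongr
      have h₂ : ((n + k : ℕ) : ℝ) * Λ ≤ 2 * n * Λ := by gcongr
      have h₃ : 2 * a * (δ * n) = (2 * Λ + D) * n := by rw [haδ]; ring
      linarith
    calc Real.exp (-(2 * a * j)) * normConnCount (n + k) (m + k + j)
        ≤ Real.exp (-(2 * a * j)) * Real.exp ((n + k : ℕ) * Λ) := by gcongr
      _ ≤ Real.exp (-(D * n)) := by rw [← Real.exp_add]; gcongr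
      _ ≤ normConnCount n m := hlow
      _ ≤ _ := le_mul_of_one_le_left (normConnCount_nonneg _ _) (Real.one_le_exp (by positivity))

theorem ncard_planarSet_div_le {n m k : ℕ} {a E : ℝ} (hn : 1 ≤ n) (hm : m ≤ 3 * n) (hk : k ≤ n)
    (hE : 0 ≤ E) (h : ∀ j : ℕ, Real.exp (-(2 * a * j)) * normConnCount (n + k) (m + 1 + k + j) ≤
      E * normConnCount n (m + 1)) :
    ((planarSet (n + k) (m + k)).ncard : ℝ) / (n + k).factorial ≤
      2 * n * Real.exp (8 * Real.exp a * √n) * (E * ((planarSet n m).ncard / n.factorial)) := by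
  have hterm : ∀ j ∈ Finset.range (n + k), ((compSet (j + 1) (n + k) (m + k)).ncard : ℝ) ≤
      Real.exp (8 * Real.exp a * √n) * (n + k).factorial *
        (E * ((planarSet n m).ncard / n.factorial)) := by
    intro j hj
    rw [Finset.mem_range] at hj
    have hsqrt : 2 * Real.exp a * √((16 * n : ℕ) : ℝ) = 8 * Real.exp a * √n := by
      rw [Nat.cast_mul, Real.sqrt_mul (by positivity), show ((16 : ℕ) : ℝ) = 4 ^ 2 by norm_num,
        Real.sqrt_sq (by norm_num)]
      ring
    refine (ncard_compSet_le (R := 16 * n) (by omega) a).trans ?_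
    rw [hsqrt]
    refine mul_le_mul_of_nonneg_left ?_ (by positivity)
    calc 32 * (Real.exp (-(2 * a * j)) * normConnCount (n + k) (m + k + j + 1))
        ≤ 32 * (E * normConnCount n (m + 1)) := by
          have := h j
          rw [show m + 1 + k + j = m + k + j + 1 by omega] at this
          gcongr
      _ = E * (32 * normConnCount n (m + 1)) := by ring
      _ ≤ E * ((planarSet n m).ncard / n.factorial) := by
          gcongr
          exact mul_normConnCount_le n m
  have hsum : ((planarSet (n + k) (m + k)).ncard : ℝ) ≤
      ∑ j ∈ Finset.range (n + k), ((compSet (j + 1) (n + k) (m + k)).ncard : ℝ) := by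
    exact_mod_cast ncard_planarSet_le_sum (n + k) (m + k) (by omega)
  have hnk : ((n + k : ℕ) : ℝ) ≤ 2 * n := by exact_mod_cast (by omega : n + k ≤ 2 * n)
  rw [div_le_iff₀ (by positivity)]
  refine (hsum.trans (Finset.sum_le_sum hterm)).trans ?_
  rw [Finset.sum_const, Finset.card_range, nsmul_eq_mul]
  refine (mul_le_mul_of_nonneg_right hnk (by positivity)).trans_eq ?_
  ring

theorem exists_ncard_planarSet_div_le {B ε : ℝ} (hB : B < 3) (hε : 0 < ε) :
    ∃ K > 0, ∃ δ₀ > 0, ∀ δ : ℝ, 0 < δ → δ ≤ δ₀ → ∀ᶠ n : ℕ in atTop, ∀ m k : ℕ,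
      (1 + ε) * n ≤ m → (m : ℝ) ≤ B * n → (k : ℝ) ≤ δ * n → δ * n ≤ k + 1 →
      ((planarSet (n + k) (m + k)).ncard : ℝ) / (n + k).factorial ≤
        Real.exp (K * δ * n) * ((planarSet n m).ncard / n.factorial) := by
  obtain ⟨B', hBB', hB'⟩ := exists_between hB
  obtain ⟨D, hD, x₀, hlow⟩ := exists_exp_le_normConnCount hB'
  obtain ⟨Λ, hΛ, hup⟩ := exists_normConnCount_le
  obtain ⟨K, hK, δ₀, hδ₀, hratio⟩ := exists_normConnCount_ratio_le hB' hε
  refine ⟨K + 1, by positivity, min δ₀ 1, by positivity, fun δ hδ hδ₁ => ?_⟩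
  set a : ℝ := (2 * Λ + D) / (2 * δ) with ha
  have haδ : 2 * Λ + D = 2 * a * δ := by rw [ha]; field_simp
  filter_upwards [hratio δ hδ (hδ₁.trans (min_le_left _ _)),
    eventually_mul_exp_sqrt_le (8 * Real.exp a) hδ, eventually_ge_atTop (x₀ + 1),
    (tendsto_natCast_atTop_atTop (R := ℝ)).eventually_ge_atTop (1 / (B' - B))]
    with n hratio hsub hn hnB m k hm hmB hk hδk
  have hn₀ : (0 : ℝ) ≤ n := n.cast_nonneg
  have hmB' : ((m + 1 : ℕ) : ℝ) ≤ B' * n := by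
    rw [div_le_iff₀' (by linarith)] at hnB
    push_cast
    linarith
  have hkn : k ≤ n := by
    have : (k : ℝ) ≤ n := by nlinarith [hδ₁.trans (min_le_right _ _)]
    exact_mod_cast this
  have hm₃ : m ≤ 3 * n := by
    have : (m : ℝ) ≤ 3 * n := by nlinarith
    exact_mod_cast this
  have hnm : n ≤ m + 1 := by
    have : (n : ℝ) ≤ (m + 1 : ℕ) := by push_cast; nlinarith
    exact_mod_cast this
  have hterm (j : ℕ) := exp_mul_normConnCount_le (j := j) hΛ (by positivity) (by positivity) haδ
    (hup (n + k) (m + 1 + k + j)) (hlow n (m + 1) (by omega) hnm hmB')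
    (hratio (m + 1) k j (by push_cast; linarith) hmB' hk) hkn hδk
  refine (ncard_planarSet_div_le (by omega) hm₃ hkn (Real.exp_nonneg _) hterm).trans ?_
  calc _ ≤ Real.exp (δ * n) * (Real.exp (K * δ * n) * ((planarSet n m).ncard / n.factorial)) := by
        gcongr
    _ = _ := by rw [← mul_assoc, ← Real.exp_add]; ring_nf

/-! ### Leaves -/

theorem ncard_pair_le_two {α : Type*} (a b : α) : ({a, b} : Set α).ncard ≤ 2 := by
  simpa using Set.ncard_insert_le a {b}

/-- The set of vertices of degree one. -/
def leaves {V : Type*} (G : SimpleGraph V) : Set V := {v | vertexDegree G v = 1}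

section Leaves

variable {V : Type*} {G G' : SimpleGraph V} {u v x x' : V}

theorem mem_leaves : v ∈ leaves G ↔ vertexDegree G v = 1 := Iff.rfl

theorem mem_leaves_of_neighborSet_eq (h : G.neighborSet v = {x}) : v ∈ leaves G :=
  Set.ncard_eq_one.2 ⟨x, h⟩

theorem IsPlanar.sup_edge_of_isIsolated [Finite V] (hG : IsPlanar G) (hv : G.IsIsolated v)
    (hvx : v ≠ x) : IsPlanar (G ⊔ edge v x) := by
  refine hG.sup_edge_of_not_reachable ?_
  rintro ⟨p⟩
  cases p with
  | nil => exact hvx rfl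
  | cons h _ => exact hv _ h

theorem neighborSet_sup_edge (hu : x ≠ u) (hv : x ≠ v) :
    (G ⊔ edge u v).neighborSet x = G.neighborSet x := by
  ext y
  simp [edge_adj, hu, hv]

theorem neighborSet_sup_edge_of_isIsolated (hv : G.IsIsolated v) (hvx : v ≠ x) :
    (G ⊔ edge v x).neighborSet v = {x} := by
  ext y
  simp only [mem_neighborSet, sup_adj, hv y, edge_adj, Set.mem_singleton_iff]
  grind

theorem eq_and_eq_of_sup_edge_eq (hv : G.IsIsolated v) (hv' : G'.IsIsolated v) (hx : v ≠ x)
    (hx' : v ≠ x') (h : G ⊔ edge v x = G' ⊔ edge v x') : x = x' ∧ G = G' := by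
  obtain rfl : x = x' := by
    rw [← Set.singleton_eq_singleton_iff, ← neighborSet_sup_edge_of_isIsolated hv hx, h,
      neighborSet_sup_edge_of_isIsolated hv' hx']
  exact ⟨rfl, eq_of_sup_edge_eq (hv x) (hv' x) h⟩

theorem leaves_map {W : Type*} (e : V ↪ W) : leaves (G.map e) = e '' leaves G := by
  ext w
  constructor
  · intro hw
    obtain ⟨z, hz⟩ := Set.ncard_eq_one.1 hw
    obtain ⟨-, y, -, -, rfl, -⟩ : (G.map e).Adj w z := by
      rw [← mem_neighborSet, hz]
      rfl
    refine ⟨y, ?_, rfl⟩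
    rwa [mem_leaves, vertexDegree, neighborSet_map,
      Set.ncard_image_of_injective _ e.injective] at hw
  · rintro ⟨y, hy, rfl⟩
    rwa [mem_leaves, vertexDegree, neighborSet_map,
      Set.ncard_image_of_injective _ e.injective]

variable [Finite V]

theorem ncard_leaves_le_add_two (u v : V)
    (h : ∀ x ∈ leaves G', x ≠ u → x ≠ v → G'.neighborSet x = G.neighborSet x) :
    (leaves G').ncard ≤ (leaves G).ncard + 2 := by
  refine (Set.ncard_le_ncard (fun x hx => ?_) (Set.toFinite _)).trans
    ((Set.ncard_union_le (leaves G) {u, v}).trans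
      (Nat.add_le_add_left (ncard_pair_le_two u v) _))
  by_cases hxS : x ∈ ({u, v} : Set V)
  · exact Or.inr hxS
  · left
    rw [Set.mem_insert_iff, Set.mem_singleton_iff, not_or] at hxS
    rwa [mem_leaves, vertexDegree, ← h x hx hxS.1 hxS.2]

theorem ncard_leaves_sup_edge_le : (leaves (G ⊔ edge u v)).ncard ≤ (leaves G).ncard + 2 :=
  ncard_leaves_le_add_two u v fun _ _ => neighborSet_sup_edge

theorem ncard_leaves_le_two_mul_pendantCount (G : SimpleGraph V) :
    (leaves G).ncard ≤ 2 * pendantCount G := by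
  have h := ncard_mul_le_ncard_mul_of_moves (leaves G) G.incidenceSet
    {e ∈ G.edgeSet | ∃ v ∈ e, vertexDegree G v = 1} (fun e => (e : Set V)) (fun _ e => e)
    (fun v _ => v) (F := 1) (R := 2) ?_ ?_ ?_ ?_
  · rwa [mul_one, mul_comm] at h
  · intro v hv
    obtain ⟨w, hw⟩ := Set.ncard_eq_one.1 hv
    have hvw : G.Adj v w := by
      rw [← mem_neighborSet, hw]
      rfl
    exact (Set.ncard_pos (Set.toFinite _)).2 ⟨s(v, w), G.mk'_mem_incidenceSet_left_iff.2 hvw⟩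
  · intro e _
    induction e with
    | _ a b => simpa using ncard_pair_le_two a b
  · exact fun v hv e he => ⟨⟨he.1, v, he.2, hv⟩, he.2⟩
  · exact fun v _ e _ v' _ e' _ he hv => ⟨hv, he⟩

end Leaves

/-- The planar graphs on `n` vertices with `m` edges and at most `q` leaves. -/
def fewLeavesSet (n m q : ℕ) : Set (SimpleGraph (Fin n)) :=
  {G | IsPlanar G ∧ edgeCount G = m ∧ (leaves G).ncard ≤ q}

theorem ncard_fewLeavesSet_le_ncard_planarSet (n m q : ℕ) :
    (fewLeavesSet n m q).ncard ≤ (planarSet n m).ncard :=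
  Set.ncard_le_ncard (fun _ hG => ⟨hG.1, hG.2.1⟩) (Set.toFinite _)

theorem sup_edge_mem_fewLeavesSet {n m q : ℕ} {G : SimpleGraph (Fin n)} {v x : Fin n}
    (hG : IsPlanar G) (hm : edgeCount G + 1 = m) (hq : (leaves G).ncard + 2 ≤ q)
    (hv : G.IsIsolated v) (hvx : v ≠ x) : G ⊔ edge v x ∈ fewLeavesSet n m q :=
  ⟨hG.sup_edge_of_isIsolated hv hvx, (edgeCount_sup_edge hvx (hv x)).trans hm,
    ncard_leaves_sup_edge_le.trans hq⟩

/-! ### Attaching leaves to dense graphs -/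

theorem isIsolated_map_succAboveEmb {n : ℕ} (G : SimpleGraph (Fin n)) (v : Fin (n + 1)) :
    (G.map v.succAboveEmb).IsIsolated v := by
  rintro _ ⟨-, a, _, -, ha, -⟩
  exact Fin.succAbove_ne v a ha

/-- Insert a new vertex at any of the `n + 1` label positions and attach it to any old vertex; the
new vertex is one of the at most `q + 2` leaves of the result. -/
theorem ncard_fewLeavesSet_mul_le (n m q : ℕ) :
    (fewLeavesSet n m q).ncard * ((n + 1) * n) ≤
      (fewLeavesSet (n + 1) (m + 1) (q + 2)).ncard * (q + 2) := by
  have hne (v : Fin (n + 1)) (x : Fin n) : v ≠ v.succAboveEmb x := (Fin.succAbove_ne v x).symm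
  refine ncard_mul_le_ncard_mul_of_moves (fewLeavesSet n m q)
    (fun _ => (Set.univ : Set (Fin (n + 1) × Fin n))) (fewLeavesSet (n + 1) (m + 1) (q + 2)) leaves
    (fun G p => G.map p.1.succAboveEmb ⊔ edge p.1 (p.1.succAboveEmb p.2)) (fun _ p => p.1)
    (fun _ _ => by simp [Set.ncard_univ]) (fun H hH => hH.2.2) ?_ ?_
  · rintro G ⟨hG, hm, hq⟩ ⟨v, x⟩ -
    have hv := isIsolated_map_succAboveEmb G v
    refine ⟨sup_edge_mem_fewLeavesSet (hG.map_of_injective v.succAboveEmb.injective) ?_ ?_ hv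
      (hne v x), mem_leaves_of_neighborSet_eq (neighborSet_sup_edge_of_isIsolated hv (hne v x))⟩
    · rw [edgeCount_map, hm]
    · rw [leaves_map, Set.ncard_image_of_injective _ v.succAboveEmb.injective]
      omega
  · rintro G - ⟨v, x⟩ - G' - ⟨v', x'⟩ - h (rfl : v = v')
    obtain ⟨hx, hG⟩ := eq_and_eq_of_sup_edge_eq (isIsolated_map_succAboveEmb G v)
      (isIsolated_map_succAboveEmb G' v) (hne v x) (hne v x') h
    exact ⟨SimpleGraph.map_injective _ hG, Prod.ext rfl (v.succAboveEmb.injective hx)⟩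

theorem ncard_fewLeavesSet_mul_factorial_mul_pow_le (n m q k : ℕ) {i : ℕ} (hi : i ≤ k) :
    (fewLeavesSet n m q).ncard * ((n + i).factorial * n ^ i) ≤
      (fewLeavesSet (n + i) (m + i) (q + 2 * i)).ncard * ((q + 2 * k) ^ i * n.factorial) := by
  induction i with
  | zero => simp
  | succ i ih =>
    have hstep : (fewLeavesSet (n + i) (m + i) (q + 2 * i)).ncard * ((n + i + 1) * n) ≤
        (fewLeavesSet (n + i + 1) (m + i + 1) (q + 2 * (i + 1))).ncard * (q + 2 * k) := by
      refine le_trans (Nat.mul_le_mul_left _ (Nat.mul_le_mul_left _ (Nat.le_add_right n i)))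
        ((ncard_fewLeavesSet_mul_le _ _ _).trans ?_)
      exact Nat.mul_le_mul_left _ (by omega)
    calc (fewLeavesSet n m q).ncard * ((n + (i + 1)).factorial * n ^ (i + 1))
        = (fewLeavesSet n m q).ncard * ((n + i).factorial * n ^ i) * ((n + i + 1) * n) := by
          rw [← add_assoc, Nat.factorial_succ]; ring
      _ ≤ (fewLeavesSet (n + i) (m + i) (q + 2 * i)).ncard * ((q + 2 * k) ^ i * n.factorial) *
            ((n + i + 1) * n) := Nat.mul_le_mul_right _ (ih (by omega))
      _ = (fewLeavesSet (n + i) (m + i) (q + 2 * i)).ncard * ((n + i + 1) * n) *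
            ((q + 2 * k) ^ i * n.factorial) := by ring
      _ ≤ (fewLeavesSet (n + i + 1) (m + i + 1) (q + 2 * (i + 1))).ncard * (q + 2 * k) *
            ((q + 2 * k) ^ i * n.factorial) := Nat.mul_le_mul_right _ hstep
      _ = _ := by rw [← add_assoc n, ← add_assoc m, pow_succ]; ring

theorem ncard_fewLeavesSet_mul_le_ncard_planarSet_mul {n m q k : ℕ} (hq : q ≤ k) :
    (fewLeavesSet n m q).ncard * ((n + k).factorial * n ^ k) ≤
      (planarSet (n + k) (m + k)).ncard * ((3 * k) ^ k * n.factorial) := by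
  refine (ncard_fewLeavesSet_mul_factorial_mul_pow_le n m q k le_rfl).trans ?_
  have := ncard_fewLeavesSet_le_ncard_planarSet (n + k) (m + k) (q + 2 * k)
  gcongr
  omega

theorem three_mul_pow_le_exp_mul_pow {c δ : ℝ} {n k : ℕ} (hδ : 3 * δ ≤ Real.exp (-c))
    (hk : k ≤ δ * n) : (3 * (k : ℝ)) ^ k ≤ Real.exp (-(c * k)) * (n : ℝ) ^ k := by
  calc (3 * (k : ℝ)) ^ k ≤ (Real.exp (-c) * n) ^ k := by
        refine pow_le_pow_left₀ (by positivity) ?_ _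
        calc 3 * (k : ℝ) ≤ 3 * δ * n := by linarith
          _ ≤ _ := by gcongr
    _ = _ := by rw [mul_pow, ← Real.exp_nat_mul]; ring_nf

theorem ncard_fewLeavesSet_le_exp_mul {n m q k : ℕ} {c δ E : ℝ} (hn : 0 < n) (hq : q ≤ k)
    (hδ : 3 * δ ≤ Real.exp (-c)) (hk : k ≤ δ * n) (hE : 0 ≤ E)
    (hratio : ((planarSet (n + k) (m + k)).ncard : ℝ) / (n + k).factorial ≤
      E * ((planarSet n m).ncard / n.factorial)) :
    ((fewLeavesSet n m q).ncard : ℝ) ≤ E * Real.exp (-(c * k)) * (planarSet n m).ncard := by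
  have hmoves : ((fewLeavesSet n m q).ncard : ℝ) * ((n + k).factorial * n ^ k) ≤
      (planarSet (n + k) (m + k)).ncard * ((3 * k) ^ k * n.factorial) := by
    exact_mod_cast ncard_fewLeavesSet_mul_le_ncard_planarSet_mul (m := m) hq
  have hpos : (0 : ℝ) < (n + k).factorial * n ^ k := by positivity
  refine le_of_mul_le_mul_right (hmoves.trans ?_) hpos
  calc ((planarSet (n + k) (m + k)).ncard : ℝ) * ((3 * k) ^ k * n.factorial)
      = (planarSet (n + k) (m + k)).ncard / (n + k).factorial *
          ((n + k).factorial * n.factorial * (3 * k) ^ k) := by field_simp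
    _ ≤ E * ((planarSet n m).ncard / n.factorial) *
          ((n + k).factorial * n.factorial * (Real.exp (-(c * k)) * n ^ k)) := by
        gcongr
        exact three_mul_pow_le_exp_mul_pow hδ hk
    _ = _ := by field_simp

theorem exists_ncard_fewLeavesSet_le_of_dense {B ε : ℝ} (hB : B < 3) (hε : 0 < ε) :
    ∃ α : ℝ, 0 < α ∧ ∀ᶠ n : ℕ in atTop, ∀ m q : ℕ, (1 + ε) * n ≤ m → m ≤ B * n → q ≤ α * n →
      ((fewLeavesSet n m q).ncard : ℝ) ≤ Real.exp (-(α * n)) * (planarSet n m).ncard := by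
  obtain ⟨K, hK, δ₀, hδ₀, hratio⟩ := exists_ncard_planarSet_div_le hB hε
  set δ : ℝ := min δ₀ (Real.exp (-(K + 3)) / 3)
  have hδ : 0 < δ := by positivity
  have hδ3 : 3 * δ ≤ Real.exp (-(K + 3)) := by
    linarith [min_le_right δ₀ (Real.exp (-(K + 3)) / 3)]
  refine ⟨δ / 2, by positivity, ?_⟩
  filter_upwards [hratio δ hδ (min_le_left _ _), eventually_gt_atTop 0,
    tendsto_natCast_atTop_atTop.eventually_ge_atTop ((K + 3) / δ)] with n hn hn0 hnK m q hm hmB hq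
  rw [div_le_iff₀ hδ, mul_comm] at hnK
  set k : ℕ := ⌊δ * n⌋₊
  have hk : k ≤ δ * n := Nat.floor_le (by positivity)
  have hk' : δ * n < k + 1 := Nat.lt_floor_add_one _
  have hqk : q ≤ k := Nat.le_floor (by linarith)
  refine (ncard_fewLeavesSet_le_exp_mul hn0 hqk hδ3 hk (Real.exp_nonneg _)
    (hn m k hm hmB hk hk'.le)).trans ?_
  gcongr
  rw [← Real.exp_add, Real.exp_le_exp]
  have : (K + 3) * (δ * n - 1) ≤ (K + 3) * k := by gcongr; linarith
  linarith

/-! ### Switchings in sparse graphs -/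

section DeleteEdge

variable {V : Type*} {G G' : SimpleGraph V} {u v x : V}

theorem sdiff_edge_sup_edge (h : G.Adj u v) : G \ edge u v ⊔ edge u v = G :=
  sdiff_sup_cancel ((edge_le_iff G).2 (Or.inr h))

theorem not_adj_sdiff_edge (u v : V) : ¬ (G \ edge u v).Adj u v := by
  rintro ⟨h, h'⟩
  exact h' ((edge_adj _ _ _ _).2 ⟨Or.inl ⟨rfl, rfl⟩, h.ne⟩)

theorem edgeCount_sdiff_edge_add_one [Finite V] (h : G.Adj u v) :
    edgeCount (G \ edge u v) + 1 = edgeCount G := by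
  rw [← edgeCount_sup_edge h.ne (not_adj_sdiff_edge u v), sdiff_edge_sup_edge h]

theorem eq_of_sdiff_edge_eq (h : G.Adj u v) (h' : G'.Adj u v)
    (heq : G \ edge u v = G' \ edge u v) : G = G' := by
  rw [← sdiff_edge_sup_edge h, heq, sdiff_edge_sup_edge h']

theorem neighborSet_sdiff_edge (hu : x ≠ u) (hv : x ≠ v) :
    (G \ edge u v).neighborSet x = G.neighborSet x := by
  ext y
  simp [edge_adj, hu, hv]

theorem isIsolated_sdiff_edge (hx : G.IsIsolated x) : (G \ edge u v).IsIsolated x :=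
  fun y h => hx y h.1

theorem ncard_leaves_sdiff_edge_le [Finite V] :
    (leaves (G \ edge u v)).ncard ≤ (leaves G).ncard + 2 :=
  ncard_leaves_le_add_two u v fun _ _ => neighborSet_sdiff_edge

end DeleteEdge

theorem sub_le_ncard_compl {n c : ℕ} {s : Set (Fin n)} (hs : s.ncard ≤ c) :
    n - c ≤ sᶜ.ncard := by
  rw [Set.ncard_compl, Nat.card_fin]
  exact Nat.sub_le_sub_left hs n

/-- Switching: delete any edge `bc` and attach an isolated vertex `v` to any other vertex `x`. The
result together with its leaf `v` and the pair `(b, c)` determines everything. -/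
theorem ncard_isIsolated_mul_le (n m q a : ℕ) :
    {G ∈ fewLeavesSet n m q | a ≤ {v | G.IsIsolated v}.ncard}.ncard *
        (a * (n - 1) * (2 * m)) ≤
      (fewLeavesSet n m (q + 4)).ncard * ((q + 4) * (n * n)) := by
  refine ncard_mul_le_ncard_mul_of_moves _
    (fun G => {p : Fin n × Fin n | G.IsIsolated p.1 ∧ p.2 ∈ ({p.1} : Set (Fin n))ᶜ} ×ˢ
      {p : Fin n × Fin n | G.Adj p.1 p.2}) _
    (fun H => leaves H ×ˢ (Set.univ : Set (Fin n × Fin n)))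
    (fun G p => G \ edge p.2.1 p.2.2 ⊔ edge p.1.1 p.1.2) (fun _ p => (p.1.1, p.2)) ?_ ?_ ?_ ?_
  · rintro G ⟨⟨-, hm, -⟩, ha⟩
    rw [Set.ncard_prod, ncard_setOf_adj, hm]
    refine Nat.mul_le_mul_right _ ((Nat.mul_le_mul_right _ ha).trans ?_)
    exact ncard_mul_le_ncard_setOf {v | G.IsIsolated v} (fun v => {v}ᶜ) fun v _ =>
      sub_le_ncard_compl (Set.ncard_singleton v).le
  · rintro H ⟨-, -, hl⟩
    rw [Set.ncard_prod, Set.ncard_univ, Nat.card_prod, Nat.card_fin]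
    exact Nat.mul_le_mul_right _ hl
  · rintro G ⟨⟨hG, hm, hq⟩, -⟩ ⟨⟨v, x⟩, ⟨b, c⟩⟩ ⟨⟨hv, hvx⟩, hbc⟩
    have hv' : (G \ edge b c).IsIsolated v := isIsolated_sdiff_edge hv
    have hvx' : v ≠ x := Ne.symm hvx
    refine ⟨sup_edge_mem_fewLeavesSet (hG.mono sdiff_le)
      ((edgeCount_sdiff_edge_add_one hbc).trans hm) ?_ hv' hvx',
      mem_leaves_of_neighborSet_eq (neighborSet_sup_edge_of_isIsolated hv' hvx'), Set.mem_univ _⟩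
    exact (Nat.add_le_add_right ncard_leaves_sdiff_edge_le 2).trans
      (Nat.add_le_add_right hq 4)
  · rintro G - ⟨⟨v, x⟩, ⟨b, c⟩⟩ ⟨⟨hv, hvx⟩, hbc⟩ G' - ⟨⟨v', x'⟩, ⟨b', c'⟩⟩ ⟨⟨hv', hvx'⟩, hbc'⟩
      heq hcode
    simp only [Prod.mk.injEq] at hcode
    obtain ⟨rfl, rfl, rfl⟩ := hcode
    obtain ⟨rfl, hdel⟩ := eq_and_eq_of_sup_edge_eq (isIsolated_sdiff_edge hv)
      (isIsolated_sdiff_edge hv') (Ne.symm hvx) (Ne.symm hvx') heq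
    exact ⟨eq_of_sdiff_edge_eq hbc hbc' hdel, rfl⟩

/-- The vertex `v` has exactly the two neighbours `u` and `w`, and these are not adjacent, so that
contracting `vu` replaces the path `u v w` by the edge `uw`. -/
structure IsPathCenter {V : Type*} (G : SimpleGraph V) (v u w : V) : Prop where
  ne : u ≠ w
  neighborSet_eq : G.neighborSet v = {u, w}
  not_adj : ¬ G.Adj u w

/-- The vertices that are the centre of a path as in `IsPathCenter`. -/
def pathCenters {V : Type*} (G : SimpleGraph V) : Set V := {v | ∃ u w, IsPathCenter G v u w}

theorem eq_of_deleteIncidenceSet_eq {V : Type*} {G G' : SimpleGraph V} {v : V}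
    (hN : G.neighborSet v = G'.neighborSet v)
    (hdel : G.deleteIncidenceSet v = G'.deleteIncidenceSet v) : G = G' := by
  have hv (y : V) : G.Adj v y ↔ G'.Adj v y := Set.ext_iff.1 hN y
  ext x y
  by_cases hx : x = v
  · rw [hx, hv]
  by_cases hy : y = v
  · rw [hy, adj_comm, hv, adj_comm]
  have hxy := congrArg (fun H : SimpleGraph V => H.Adj x y) hdel
  simpa [deleteIncidenceSet_adj, hx, hy] using hxy

namespace IsPathCenter

variable {V : Type*} {G G' : SimpleGraph V} {u v w : V}

theorem adj_iff (h : IsPathCenter G v u w) {y : V} : G.Adj v y ↔ y = u ∨ y = w := by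
  rw [← mem_neighborSet, h.neighborSet_eq, Set.mem_insert_iff, Set.mem_singleton_iff]

theorem adj_left (h : IsPathCenter G v u w) : G.Adj u v := (h.adj_iff.2 (Or.inl rfl)).symm

theorem adj_right (h : IsPathCenter G v u w) : G.Adj v w := h.adj_iff.2 (Or.inr rfl)

theorem contract_eq (h : IsPathCenter G v u w) :
    contract G u v = G.deleteIncidenceSet v ⊔ edge u w := by
  ext x y
  have := h.ne
  have := h.adj_left.ne
  have := h.adj_right.ne
  have hne : G.Adj x y → x ≠ y := fun hxy => hxy.ne
  rw [contract_adj h.adj_left.ne, h.adj_iff, h.adj_iff, sup_adj, deleteIncidenceSet_adj, edge_adj]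
  grind

theorem not_adj_deleteIncidenceSet (h : IsPathCenter G v u w) :
    ¬ (G.deleteIncidenceSet v).Adj u w :=
  fun huw => h.not_adj (deleteIncidenceSet_le G v huw)

theorem edgeCount_contract_add_one [Finite V] (h : IsPathCenter G v u w) :
    edgeCount (contract G u v) + 1 = edgeCount G := by
  rw [h.contract_eq, edgeCount_sup_edge h.ne h.not_adj_deleteIncidenceSet,
    ← edgeCount_deleteIncidenceSet_add (G := G) v, vertexDegree, h.neighborSet_eq,
    Set.ncard_pair h.ne]

theorem contract_inj (h : IsPathCenter G v u w) (h' : IsPathCenter G' v u w)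
    (heq : contract G u v = contract G' u v) : G = G' := by
  rw [h.contract_eq, h'.contract_eq] at heq
  exact eq_of_deleteIncidenceSet_eq (h.neighborSet_eq.trans h'.neighborSet_eq.symm)
    (eq_of_sup_edge_eq h.not_adj_deleteIncidenceSet h'.not_adj_deleteIncidenceSet heq)

theorem neighborSet_contract (h : IsPathCenter G v u w) {x : V} (hxv : x ≠ v) (hxu : x ≠ u)
    (hxw : x ≠ w) : (contract G u v).neighborSet x = G.neighborSet x := by
  have hx : ¬ G.Adj v x := by simp [h.adj_iff, hxu, hxw]
  rw [h.contract_eq, neighborSet_sup_edge hxu hxw]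
  ext y
  rw [mem_neighborSet, mem_neighborSet, deleteIncidenceSet_adj]
  exact ⟨fun hxy => hxy.1, fun hxy => ⟨hxy, hxv, fun hy => hx (hy ▸ hxy.symm)⟩⟩

end IsPathCenter

theorem isIsolated_contract {V : Type*} {G : SimpleGraph V} {u v : V} (huv : G.Adj u v) :
    (contract G u v).IsIsolated v :=
  fun y hvy => (support_contract_subset huv ⟨y, hvy⟩).2 rfl

theorem IsPathCenter.ncard_leaves_contract_le {V : Type*} [Finite V] {G : SimpleGraph V}
    {u v w : V} (h : IsPathCenter G v u w) :
    (leaves (contract G u v)).ncard ≤ (leaves G).ncard + 2 := by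
  refine ncard_leaves_le_add_two u w fun x hx hxu hxw => h.neighborSet_contract ?_ hxu hxw
  rintro rfl
  rw [mem_leaves, vertexDegree, (isIsolated_contract h.adj_left).neighborSet_eq_empty] at hx
  simp at hx

/-- Switching: contract the centre `v` of a path `u v w` into `u` and reattach it to any other
vertex `x`. The result together with its leaf `v` and its edge `uw` determines everything. -/
theorem ncard_pathCenters_mul_le (n m q a : ℕ) :
    {G ∈ fewLeavesSet n m q | a ≤ (pathCenters G).ncard}.ncard * (a * (n - 1)) ≤
      (fewLeavesSet n m (q + 4)).ncard * ((q + 4) * (2 * m)) := by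
  refine ncard_mul_le_ncard_mul_of_moves _
    (fun G => {p : Fin n × (Fin n × Fin n × Fin n) | p.1 ∈ pathCenters G ∧
      p.2 ∈ ({p.1} : Set (Fin n))ᶜ ×ˢ {e : Fin n × Fin n | IsPathCenter G p.1 e.1 e.2}}) _
    (fun H => leaves H ×ˢ {e : Fin n × Fin n | H.Adj e.1 e.2})
    (fun G p => contract G p.2.2.1 p.1 ⊔ edge p.1 p.2.1) (fun _ p => (p.1, p.2.2)) ?_ ?_ ?_ ?_
  · rintro G ⟨-, ha⟩
    refine (Nat.mul_le_mul_right _ ha).trans (ncard_mul_le_ncard_setOf (pathCenters G)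
      (fun v => ({v} : Set (Fin n))ᶜ ×ˢ {e : Fin n × Fin n | IsPathCenter G v e.1 e.2}) ?_)
    rintro v ⟨u, w, h⟩
    rw [Set.ncard_prod]
    exact (sub_le_ncard_compl (Set.ncard_singleton v).le).trans
      (Nat.le_mul_of_pos_right _ ((Set.ncard_pos (Set.toFinite _)).2 ⟨(u, w), h⟩))
  · rintro H ⟨-, hm, hq⟩
    rw [Set.ncard_prod, ncard_setOf_adj, hm]
    exact Nat.mul_le_mul_right _ hq
  · rintro G ⟨⟨hG, hm, hq⟩, -⟩ ⟨v, x, u, w⟩ ⟨-, hvx, (h : IsPathCenter G v u w)⟩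
    have hv := isIsolated_contract h.adj_left
    have hvx' : v ≠ x := Ne.symm hvx
    refine ⟨sup_edge_mem_fewLeavesSet (hG.contract h.adj_left)
      (h.edgeCount_contract_add_one.trans hm) ?_ hv hvx',
      mem_leaves_of_neighborSet_eq (neighborSet_sup_edge_of_isIsolated hv hvx'), ?_⟩
    · exact (Nat.add_le_add_right h.ncard_leaves_contract_le 2).trans (Nat.add_le_add_right hq 4)
    · refine Or.inl ((contract_adj h.adj_left.ne).2 ?_)
      exact ⟨h.ne, h.adj_left.ne, h.adj_right.ne.symm, Or.inr (Or.inl ⟨rfl, h.adj_right⟩)⟩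
  · rintro G - ⟨v, x, u, w⟩ ⟨-, hvx, (h : IsPathCenter G v u w)⟩
      G' - ⟨v', x', u', w'⟩ ⟨-, hvx', (h' : IsPathCenter G' v' u' w')⟩ heq hcode
    simp only [Prod.mk.injEq] at hcode
    obtain ⟨rfl, rfl, rfl⟩ := hcode
    obtain ⟨rfl, hcontract⟩ := eq_and_eq_of_sup_edge_eq (isIsolated_contract h.adj_left)
      (isIsolated_contract h'.adj_left) (Ne.symm hvx) (Ne.symm hvx') heq
    exact ⟨h.contract_inj h' hcontract, rfl⟩

/-- The vertices `v`, `u` and `w` form a component of `G` which is a triangle. -/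
structure IsTriangleComponent {V : Type*} (G : SimpleGraph V) (v u w : V) : Prop where
  neighborSet_eq : G.neighborSet v = {u, w}
  neighborSet_left_eq : G.neighborSet u = {v, w}
  neighborSet_right_eq : G.neighborSet w = {v, u}

/-- The vertices lying in a component which is a triangle. -/
def triangleVerts {V : Type*} (G : SimpleGraph V) : Set V :=
  {v | ∃ u w, IsTriangleComponent G v u w}

namespace IsTriangleComponent

variable {V : Type*} {G : SimpleGraph V} {v u w x : V}

theorem adj_left (h : IsTriangleComponent G v u w) : G.Adj v u := by
  simp [← mem_neighborSet, h.neighborSet_eq]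

theorem adj_right (h : IsTriangleComponent G v u w) : G.Adj v w := by
  simp [← mem_neighborSet, h.neighborSet_eq]

theorem adj_left_right (h : IsTriangleComponent G v u w) : G.Adj u w := by
  simp [← mem_neighborSet, h.neighborSet_left_eq]

theorem not_reachable (h : IsTriangleComponent G v u w) (hx : x ∉ ({v, u, w} : Set V)) :
    ¬ G.Reachable v x := by
  rintro ⟨p⟩
  obtain ⟨⟨⟨a, b⟩, hab⟩, -, ha, hb⟩ := p.exists_boundary_dart {v, u, w} (Or.inl rfl) hx
  rw [← mem_neighborSet] at hab
  rcases ha with rfl | rfl | rfl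
  · exact hb (Or.inr (h.neighborSet_eq ▸ hab))
  · rw [h.neighborSet_left_eq] at hab
    exact hb (hab.imp_right Or.inr)
  · rw [h.neighborSet_right_eq] at hab
    exact hb (hab.imp_right Or.inl)

theorem not_reachable_sdiff_edge (h : IsTriangleComponent G v u w)
    (hx : x ∉ ({v, u, w} : Set V)) : ¬ (G \ edge u w).Reachable v x :=
  fun hvx => h.not_reachable hx (hvx.mono sdiff_le)

theorem neighborSet_switch_left (h : IsTriangleComponent G v u w)
    (hx : x ∉ ({v, u, w} : Set V)) : (G \ edge u w ⊔ edge v x).neighborSet u = {v} := by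
  simp only [Set.mem_insert_iff, Set.mem_singleton_iff, not_or] at hx
  have huw := h.adj_left_right.ne
  have hvw := h.adj_right.ne
  rw [neighborSet_sup_edge h.adj_left.ne.symm (Ne.symm hx.2.1)]
  ext y
  simp only [mem_neighborSet, sdiff_adj, edge_adj, ← G.mem_neighborSet, h.neighborSet_left_eq,
    Set.mem_insert_iff, Set.mem_singleton_iff]
  grind

theorem neighborSet_switch_right (h : IsTriangleComponent G v u w)
    (hx : x ∉ ({v, u, w} : Set V)) : (G \ edge u w ⊔ edge v x).neighborSet w = {v} := by
  rw [edge_comm]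
  refine neighborSet_switch_left ⟨?_, h.neighborSet_right_eq, h.neighborSet_left_eq⟩ ?_
  · rw [h.neighborSet_eq, Set.pair_comm]
  · rwa [Set.pair_comm]

theorem neighborSet_switch (h : IsTriangleComponent G v u w) (hx : x ∉ ({v, u, w} : Set V)) :
    (G \ edge u w ⊔ edge v x).neighborSet v = {u, w, x} := by
  simp only [Set.mem_insert_iff, Set.mem_singleton_iff, not_or] at hx
  have hvu := h.adj_left.ne
  have hvw := h.adj_right.ne
  ext y
  simp only [mem_neighborSet, sup_adj, sdiff_adj, edge_adj, ← G.mem_neighborSet, h.neighborSet_eq,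
    Set.mem_insert_iff, Set.mem_singleton_iff]
  grind

/-- The vertex `v` is recovered as the neighbour of the leaf `u`, and then `x` as the third
neighbour of `v`. -/
theorem switch_inj {G' : SimpleGraph V} {v' x' : V} (h : IsTriangleComponent G v u w)
    (h' : IsTriangleComponent G' v' u w) (hx : x ∉ ({v, u, w} : Set V))
    (hx' : x' ∉ ({v', u, w} : Set V))
    (heq : G \ edge u w ⊔ edge v x = G' \ edge u w ⊔ edge v' x') : G = G' ∧ v = v' ∧ x = x' := by
  obtain rfl : v = v' := by
    rw [← Set.singleton_eq_singleton_iff, ← h.neighborSet_switch_left hx, heq,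
      h'.neighborSet_switch_left hx']
  obtain rfl : x = x' := by
    have hmem : x ∈ ({u, w, x'} : Set V) := by
      rw [← h'.neighborSet_switch hx', ← heq, h.neighborSet_switch hx]
      simp
    simp only [Set.mem_insert_iff, Set.mem_singleton_iff, not_or] at hx hmem
    tauto
  refine ⟨eq_of_sdiff_edge_eq h.adj_left_right h'.adj_left_right (eq_of_sup_edge_eq
    (fun hvx => h.not_reachable_sdiff_edge hx hvx.reachable)
    (fun hvx => h'.not_reachable_sdiff_edge hx' hvx.reachable) heq), rfl, rfl⟩

theorem switch_mem_fewLeavesSet {n m q : ℕ} {G : SimpleGraph (Fin n)} {v u w x : Fin n}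
    (h : IsTriangleComponent G v u w) (hx : x ∉ ({v, u, w} : Set (Fin n)))
    (hG : G ∈ fewLeavesSet n m q) : G \ edge u w ⊔ edge v x ∈ fewLeavesSet n m (q + 4) := by
  obtain ⟨hG, hm, hq⟩ := hG
  have hvx : v ≠ x := fun hvx => hx (Or.inl hvx.symm)
  have hr := h.not_reachable_sdiff_edge hx
  refine ⟨(hG.mono sdiff_le).sup_edge_of_not_reachable hr, ?_, ?_⟩
  · rw [edgeCount_sup_edge hvx (fun hadj => hr hadj.reachable),
      edgeCount_sdiff_edge_add_one h.adj_left_right, hm]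
  · exact ncard_leaves_sup_edge_le.trans ((Nat.add_le_add_right ncard_leaves_sdiff_edge_le 2).trans
      (Nat.add_le_add_right hq 4))

end IsTriangleComponent

/-- Switching: in a triangle component `v u w` delete the edge `uw` and join `v` to a vertex of
another component. The result together with its two leaves `u` and `w` determines everything. -/
theorem ncard_triangleVerts_mul_le (n m q a : ℕ) :
    {G ∈ fewLeavesSet n m q | a ≤ (triangleVerts G).ncard}.ncard * (a * (n - 3)) ≤
      (fewLeavesSet n m (q + 4)).ncard * ((q + 4) * (q + 4)) := by
  refine ncard_mul_le_ncard_mul_of_moves _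
    (fun G => {p : Fin n × (Fin n × Fin n × Fin n) | p.1 ∈ triangleVerts G ∧
      p.2 ∈ {t : Fin n × Fin n × Fin n | IsTriangleComponent G p.1 t.2.1 t.2.2 ∧
        t.1 ∉ ({p.1, t.2.1, t.2.2} : Set (Fin n))}}) _
    (fun H => leaves H ×ˢ leaves H)
    (fun G p => G \ edge p.2.2.1 p.2.2.2 ⊔ edge p.1 p.2.1) (fun _ p => p.2.2) ?_ ?_ ?_ ?_
  · rintro G ⟨-, ha⟩
    refine (Nat.mul_le_mul_right _ ha).trans (ncard_mul_le_ncard_setOf (triangleVerts G)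
      (fun v => {t : Fin n × Fin n × Fin n | IsTriangleComponent G v t.2.1 t.2.2 ∧
        t.1 ∉ ({v, t.2.1, t.2.2} : Set (Fin n))}) ?_)
    rintro v ⟨u, w, h⟩
    have hcard : ({v, u, w} : Set (Fin n)).ncard ≤ 3 :=
      (Set.ncard_insert_le v _).trans (Nat.add_le_add_right (ncard_pair_le_two u w) 1)
    exact (sub_le_ncard_compl hcard).trans (Set.ncard_le_ncard_of_injOn (fun x => (x, u, w))
      (fun x hx => ⟨h, hx⟩) (fun x _ y _ hxy => congrArg Prod.fst hxy) (Set.toFinite _))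
  · rintro H ⟨-, -, hq⟩
    rw [Set.ncard_prod]
    exact Nat.mul_le_mul hq hq
  · rintro G ⟨hG, -⟩ ⟨v, x, u, w⟩ ⟨-, (h : IsTriangleComponent G v u w), hx⟩
    exact ⟨h.switch_mem_fewLeavesSet hx hG,
      mem_leaves_of_neighborSet_eq (h.neighborSet_switch_left hx),
      mem_leaves_of_neighborSet_eq (h.neighborSet_switch_right hx)⟩
  · rintro G - ⟨v, x, u, w⟩ ⟨-, (h : IsTriangleComponent G v u w), hx⟩
      G' - ⟨v', x', u', w'⟩ ⟨-, (h' : IsTriangleComponent G' v' u' w'), hx'⟩ heq hcode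
    simp only [Prod.mk.injEq] at hcode
    obtain ⟨rfl, rfl⟩ := hcode
    obtain ⟨rfl, rfl, rfl⟩ := h.switch_inj h' hx hx' heq
    exact ⟨rfl, rfl⟩

/-- The vertices of degree two all of whose neighbours have degree two as well. Each of them is a
path centre or lies in a triangle component, and there are many when the graph is sparse and has few
leaves and isolated vertices. -/
def deepTwo {V : Type*} (G : SimpleGraph V) : Set V :=
  {v | vertexDegree G v = 2 ∧ ∀ u, G.Adj v u → vertexDegree G u = 2}

theorem neighborSet_eq_pair {V : Type*} {G : SimpleGraph V} {a b c : V} (hb : G.Adj a b)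
    (hc : G.Adj a c) (hbc : b ≠ c) (ha : vertexDegree G a = 2) : G.neighborSet a = {b, c} := by
  refine (Set.eq_of_subset_of_ncard_le ?_ ?_ (Set.finite_of_ncard_ne_zero ?_)).symm
  · rintro y (rfl | rfl)
    exacts [hb, hc]
  · rw [Set.ncard_pair hbc]
    exact ha.le
  · rw [← vertexDegree, ha]
    exact two_ne_zero

theorem deepTwo_subset {V : Type*} (G : SimpleGraph V) :
    deepTwo G ⊆ pathCenters G ∪ triangleVerts G := by
  rintro v ⟨hv, hnbr⟩
  obtain ⟨u, w, hne, hN⟩ := Set.ncard_eq_two.1 hv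
  have hu : G.Adj v u := by simp [← mem_neighborSet, hN]
  have hw : G.Adj v w := by simp [← mem_neighborSet, hN]
  by_cases huw : G.Adj u w
  · exact Or.inr ⟨u, w, hN, neighborSet_eq_pair hu.symm huw hw.ne (hnbr u hu),
      neighborSet_eq_pair hw.symm huw.symm hu.ne (hnbr w hw)⟩
  · exact Or.inl ⟨u, w, hne, hN, huw⟩

theorem setOf_isIsolated {V : Type*} [Finite V] (G : SimpleGraph V) :
    {v | G.IsIsolated v} = {v | vertexDegree G v = 0} := by
  ext v
  simp [vertexDegree, Set.ncard_eq_zero (Set.toFinite _)]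

section

variable {V : Type*} [Fintype V]

theorem ncard_setOf_eq_sum (p : V → Prop) [DecidablePred p] :
    {v | p v}.ncard = ∑ v, if p v then 1 else 0 := by
  rw [← Finset.card_filter, ← Set.ncard_coe_finset, Finset.coe_filter_univ]

/-- A vertex outside `deepTwo G` is, or is adjacent to, a vertex of degree other than two. -/
theorem ncard_compl_deepTwo_le_sum (G : SimpleGraph V) :
    (deepTwo G)ᶜ.ncard ≤ ∑ z, if vertexDegree G z = 2 then 0 else vertexDegree G z + 1 := by
  have hsub : (deepTwo G)ᶜ ⊆
      ⋃ z, if vertexDegree G z = 2 then ∅ else insert z (G.neighborSet z) := by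
    intro v hv
    rw [Set.mem_iUnion]
    by_cases hv2 : vertexDegree G v = 2
    · obtain ⟨u, hu, hu2⟩ : ∃ u, G.Adj v u ∧ vertexDegree G u ≠ 2 := by
        simpa [deepTwo, hv2] using hv
      exact ⟨u, by simp [hu2, hu.symm]⟩
    · exact ⟨v, by simp [hv2]⟩
  refine (Set.ncard_le_ncard hsub (Set.toFinite _)).trans
    ((Set.ncard_iUnion_le_of_fintype _).trans (Finset.sum_le_sum fun z _ => ?_))
  split_ifs
  · simp
  · exact Set.ncard_insert_le _ _

theorem ncard_compl_deepTwo_add_le (G : SimpleGraph V) :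
    (deepTwo G)ᶜ.ncard + 8 * Fintype.card V ≤
      8 * edgeCount G + 9 * {v | G.IsIsolated v}.ncard + 6 * (leaves G).ncard := by
  calc (deepTwo G)ᶜ.ncard + 8 * Fintype.card V
      ≤ ∑ z, ((if vertexDegree G z = 2 then 0 else vertexDegree G z + 1) + 8) := by
        rw [Finset.sum_add_distrib, Finset.sum_const, Finset.card_univ, smul_eq_mul, mul_comm 8]
        exact Nat.add_le_add_right (ncard_compl_deepTwo_le_sum G) _
    _ ≤ ∑ z, (4 * vertexDegree G z + 9 * (if vertexDegree G z = 0 then 1 else 0) +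
          6 * (if vertexDegree G z = 1 then 1 else 0)) := by
        refine Finset.sum_le_sum fun z _ => ?_
        split_ifs <;> omega
    _ = _ := by
        rw [Finset.sum_add_distrib, Finset.sum_add_distrib, ← Finset.mul_sum, ← Finset.mul_sum,
          ← Finset.mul_sum, sum_vertexDegree, setOf_isIsolated, leaves, ncard_setOf_eq_sum,
          ncard_setOf_eq_sum]
        ring

end

theorem exists_many_switchings {n : ℕ} {G : SimpleGraph (Fin n)}
    (hm : 100 * edgeCount G ≤ 101 * n) (hq : 100 * (leaves G).ncard ≤ n) :
    n / 100 ≤ {v | G.IsIsolated v}.ncard ∨ n / 4 ≤ (pathCenters G).ncard ∨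
      n / 4 ≤ (triangleVerts G).ncard := by
  have hcompl := ncard_compl_deepTwo_add_le G
  have hcard := Set.ncard_add_ncard_compl (deepTwo G)
  have hunion := (Set.ncard_le_ncard (deepTwo_subset G)).trans (Set.ncard_union_le _ _)
  rw [Fintype.card_fin] at hcompl
  rw [Nat.card_fin] at hcard
  omega

theorem ncard_fewLeavesSet_le_add {n m q : ℕ} (hm : 100 * m ≤ 101 * n) (hq : 100 * q ≤ n) :
    (fewLeavesSet n m q).ncard ≤
      {G ∈ fewLeavesSet n m q | n / 100 ≤ {v | G.IsIsolated v}.ncard}.ncard +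
        ({G ∈ fewLeavesSet n m q | n / 4 ≤ (pathCenters G).ncard}.ncard +
          {G ∈ fewLeavesSet n m q | n / 4 ≤ (triangleVerts G).ncard}.ncard) := by
  refine (Set.ncard_le_ncard (fun G hG => ?_) (Set.toFinite _)).trans
    ((Set.ncard_union_le _ _).trans (Nat.add_le_add_left (Set.ncard_union_le _ _) _))
  have hmany := exists_many_switchings (G := G) (hG.2.1.symm ▸ hm)
    ((Nat.mul_le_mul_left 100 hG.2.2).trans hq)
  exact hmany.imp (⟨hG, ·⟩) (Or.imp (⟨hG, ·⟩) (⟨hG, ·⟩))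

section Iteration

variable {b : ℝ} {n m q : ℕ}

theorem ncard_isIsolated_mul_cast_le (hb : 0 < b) (hn : 1000 ≤ n) (hbm : b * n ≤ m) :
    ({G ∈ fewLeavesSet n m q | n / 100 ≤ {v | G.IsIsolated v}.ncard}.ncard : ℝ) * n ≤
      200 / b * ((q + 4 : ℕ) * (fewLeavesSet n m (q + 4)).ncard) := by
  have hmoves := ncard_isIsolated_mul_le n m q (n / 100)
  generalize {G ∈ fewLeavesSet n m q | n / 100 ≤ {v | G.IsIsolated v}.ncard}.ncard = x at *
  generalize (fewLeavesSet n m (q + 4)).ncard = y at *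
  have hfactor : (n : ℝ) * (n * n * b) ≤ 200 * ((n / 100 : ℕ) * (n - 1 : ℕ) * (2 * m)) := by
    have h₁ : (n : ℝ) ≤ 150 * (n / 100 : ℕ) := by exact_mod_cast (by omega : n ≤ 150 * (n / 100))
    have h₂ : (n : ℝ) ≤ 2 * (n - 1 : ℕ) := by exact_mod_cast (by omega : n ≤ 2 * (n - 1))
    calc (n : ℝ) * (n * n * b) = n * n * (b * n) := by ring
      _ ≤ 150 * (n / 100 : ℕ) * (2 * (n - 1 : ℕ)) * m := by gcongr
      _ ≤ _ := by linarith [show (0 : ℝ) ≤ (n / 100 : ℕ) * (n - 1 : ℕ) * m by positivity]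
  have : (0 : ℝ) < n := by exact_mod_cast (by omega : 0 < n)
  refine le_of_mul_le_mul_right ?_ (by positivity : 0 < n * n * b)
  calc (x : ℝ) * n * (n * n * b) = x * (n * (n * n * b)) := by ring
    _ ≤ x * (200 * ((n / 100 : ℕ) * (n - 1 : ℕ) * (2 * m))) := by gcongr
    _ = 200 * ((x * (n / 100 * (n - 1) * (2 * m)) : ℕ) : ℝ) := by push_cast; ring
    _ ≤ 200 * ((y * ((q + 4) * (n * n)) : ℕ) : ℝ) := by gcongr
    _ = 200 / b * ((q + 4 : ℕ) * y) * (n * n * b) := by push_cast; field_simp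

theorem ncard_pathCenters_mul_cast_le (hn : 1000 ≤ n) (hm : 100 * m ≤ 101 * n) :
    ({G ∈ fewLeavesSet n m q | n / 4 ≤ (pathCenters G).ncard}.ncard : ℝ) * n ≤
      20 * ((q + 4 : ℕ) * (fewLeavesSet n m (q + 4)).ncard) := by
  have hmoves := ncard_pathCenters_mul_le n m q (n / 4)
  generalize {G ∈ fewLeavesSet n m q | n / 4 ≤ (pathCenters G).ncard}.ncard = x at *
  generalize (fewLeavesSet n m (q + 4)).ncard = y at *
  have hfactor : n * n ≤ 9 * (n / 4 * (n - 1)) :=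
    calc n * n ≤ n * (2 * (n - 1)) := by gcongr; omega
      _ = 2 * n * (n - 1) := by ring
      _ ≤ 9 * (n / 4) * (n - 1) := Nat.mul_le_mul_right _ (by omega)
      _ = _ := by ring
  norm_cast
  refine Nat.le_of_mul_le_mul_right (c := n) ?_ (by omega)
  calc x * n * n = x * (n * n) := by ring
    _ ≤ x * (9 * (n / 4 * (n - 1))) := by gcongr
    _ = 9 * (x * (n / 4 * (n - 1))) := by ring
    _ ≤ 9 * (y * ((q + 4) * (2 * m))) := by gcongr
    _ = (q + 4) * y * (18 * m) := by ring
    _ ≤ (q + 4) * y * (20 * n) := Nat.mul_le_mul_left _ (by omega)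
    _ = _ := by ring

theorem ncard_triangleVerts_mul_cast_le (hn : 1000 ≤ n) (hq : 100 * (q + 4) ≤ n) :
    ({G ∈ fewLeavesSet n m q | n / 4 ≤ (triangleVerts G).ncard}.ncard : ℝ) * n ≤
      20 * ((q + 4 : ℕ) * (fewLeavesSet n m (q + 4)).ncard) := by
  have hmoves := ncard_triangleVerts_mul_le n m q (n / 4)
  generalize {G ∈ fewLeavesSet n m q | n / 4 ≤ (triangleVerts G).ncard}.ncard = x at *
  generalize (fewLeavesSet n m (q + 4)).ncard = y at *
  have hfactor : n * n ≤ 10 * (n / 4 * (n - 3)) :=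
    calc n * n ≤ n * (2 * (n - 3)) := by gcongr; omega
      _ ≤ 5 * (n / 4) * (2 * (n - 3)) := by gcongr; omega
      _ = _ := by ring
  norm_cast
  refine Nat.le_of_mul_le_mul_right (c := n) ?_ (by omega)
  calc x * n * n = x * (n * n) := by ring
    _ ≤ x * (10 * (n / 4 * (n - 3))) := by gcongr
    _ = 10 * (x * (n / 4 * (n - 3))) := by ring
    _ ≤ 10 * (y * ((q + 4) * (q + 4))) := by gcongr
    _ = (q + 4) * y * (10 * (q + 4)) := by ring
    _ ≤ (q + 4) * y * (20 * n) := Nat.mul_le_mul_left _ (by omega)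
    _ = _ := by ring

theorem exists_ncard_fewLeavesSet_mul_le (hb : 0 < b) :
    ∃ C : ℝ, 0 < C ∧ ∀ n m q : ℕ, 1000 ≤ n → b * n ≤ m → 100 * m ≤ 101 * n →
      100 * (q + 4) ≤ n → ((fewLeavesSet n m q).ncard : ℝ) * n ≤
        C * ((q + 4 : ℕ) * (fewLeavesSet n m (q + 4)).ncard) := by
  refine ⟨200 / b + 20 + 20, by positivity, fun n m q hn hbm hm hq => ?_⟩
  have hcover := ncard_fewLeavesSet_le_add hm (by omega : 100 * q ≤ n)
  calc ((fewLeavesSet n m q).ncard : ℝ) * n ≤ _ * n :=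
        mul_le_mul_of_nonneg_right (Nat.cast_le.2 hcover) n.cast_nonneg
    _ ≤ _ := by
      rw [Nat.cast_add, Nat.cast_add]
      linarith [ncard_isIsolated_mul_cast_le (q := q) hb hn hbm,
        ncard_pathCenters_mul_cast_le (q := q) hn hm,
        ncard_triangleVerts_mul_cast_le (m := m) hn hq]

theorem exists_ncard_fewLeavesSet_le_pow_mul (hb : 0 < b) :
    ∃ C : ℝ, 0 < C ∧ ∀ n m q k : ℕ, 1000 ≤ n → b * n ≤ m → 100 * m ≤ 101 * n →
      100 * (q + 4 * k) ≤ n → ((fewLeavesSet n m q).ncard : ℝ) ≤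
        (C * (q + 4 * k : ℕ) / n) ^ k * (planarSet n m).ncard := by
  obtain ⟨C, hC, hstep⟩ := exists_ncard_fewLeavesSet_mul_le hb
  refine ⟨C, hC, fun n m q k hn hbm hm => ?_⟩
  have hn0 : (0 : ℝ) < n := by exact_mod_cast (by omega : 0 < n)
  induction k generalizing q with
  | zero => simpa using fun _ => ncard_fewLeavesSet_le_ncard_planarSet n m q
  | succ k ih =>
    intro hq
    rw [show q + 4 * (k + 1) = q + 4 + 4 * k by ring]
    calc ((fewLeavesSet n m q).ncard : ℝ)
        ≤ C * (q + 4 : ℕ) / n * (fewLeavesSet n m (q + 4)).ncard := by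
          rw [div_mul_eq_mul_div, le_div_iff₀ hn0, mul_assoc]
          exact hstep n m q hn hbm hm (by omega)
      _ ≤ C * (q + 4 + 4 * k : ℕ) / n *
          ((C * (q + 4 + 4 * k : ℕ) / n) ^ k * (planarSet n m).ncard) := by
          gcongr ?_ * ?_ / _ * ?_
          · exact Nat.cast_le.2 (Nat.le_add_right _ _)
          · exact ih (q + 4) (by omega)
      _ = _ := by ring

theorem exists_ncard_fewLeavesSet_le_of_sparse (hb : 0 < b) :
    ∃ α : ℝ, 0 < α ∧ ∀ᶠ n : ℕ in atTop, ∀ m q : ℕ, b * n ≤ m → m ≤ (1 + 1 / 100 : ℝ) * n →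
      q ≤ α * n →
      ((fewLeavesSet n m q).ncard : ℝ) ≤ Real.exp (-(α * n)) * (planarSet n m).ncard := by
  obtain ⟨C, hC, hpow⟩ := exists_ncard_fewLeavesSet_le_pow_mul hb
  set δ : ℝ := min (1 / 500) (Real.exp (-2) / (5 * C))
  have hδ : 0 < δ := by positivity
  have hδ_le : δ ≤ 1 / 500 := min_le_left _ _
  have hCδ : C * (5 * δ) ≤ Real.exp (-2) := by
    have : δ ≤ Real.exp (-2) / (5 * C) := min_le_right _ _
    rw [le_div_iff₀ (by positivity)] at this
    linarith
  refine ⟨δ / 2, by positivity, ?_⟩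
  have hlarge := (tendsto_natCast_atTop_atTop (R := ℝ)).const_mul_atTop hδ
  filter_upwards [eventually_ge_atTop 1000, hlarge.eventually_ge_atTop 2]
    with n hn hδn m q hbm hm hq
  set k := ⌊δ * n⌋₊
  have hk : (k : ℝ) ≤ δ * n := Nat.floor_le (by positivity)
  have hk' : δ * n < k + 1 := Nat.lt_floor_add_one _
  have hqk : ((q + 4 * k : ℕ) : ℝ) ≤ 5 * δ * n := by push_cast; linarith
  have hqk' : 100 * (q + 4 * k) ≤ n := by
    have : 100 * ((q + 4 * k : ℕ) : ℝ) ≤ n := by nlinarith [n.cast_nonneg (α := ℝ)]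
    exact_mod_cast this
  have hm' : 100 * m ≤ 101 * n := by
    have : 100 * (m : ℝ) ≤ 101 * n := by linarith
    exact_mod_cast this
  have hbase : C * (q + 4 * k : ℕ) / n ≤ Real.exp (-2) := by
    rw [div_le_iff₀ (by exact_mod_cast (by omega : 0 < n))]
    calc C * (q + 4 * k : ℕ) ≤ C * (5 * δ * n) := by gcongr
      _ = C * (5 * δ) * n := by ring
      _ ≤ _ := by gcongr
  calc ((fewLeavesSet n m q).ncard : ℝ)
      ≤ (C * (q + 4 * k : ℕ) / n) ^ k * (planarSet n m).ncard := hpow n m q k hn hbm hm' hqk'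
    _ ≤ Real.exp (-2) ^ k * (planarSet n m).ncard := by gcongr
    _ = Real.exp (k * -2) * (planarSet n m).ncard := by rw [Real.exp_nat_mul]
    _ ≤ _ := by gcongr; linarith

end Iteration

theorem exists_ncard_fewLeavesSet_le {b B : ℝ} (hb : 0 < b) (hB : B < 3) :
    ∃ α : ℝ, 0 < α ∧ ∀ᶠ n : ℕ in atTop, ∀ m q : ℕ, b * n ≤ m → m ≤ B * n → q ≤ α * n →
      ((fewLeavesSet n m q).ncard : ℝ) ≤ Real.exp (-(α * n)) * (planarSet n m).ncard := by
  obtain ⟨α₁, hα₁, hdense⟩ :=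
    exists_ncard_fewLeavesSet_le_of_dense hB (by norm_num : (0 : ℝ) < 1 / 100)
  obtain ⟨α₂, hα₂, hsparse⟩ := exists_ncard_fewLeavesSet_le_of_sparse hb
  refine ⟨min α₁ α₂, lt_min hα₁ hα₂, ?_⟩
  filter_upwards [hdense, hsparse] with n hdense hsparse m q hbm hmB hq
  rcases le_total ((1 + 1 / 100) * (n : ℝ)) m with hm | hm
  · refine (hdense m q hm hmB (hq.trans ?_)).trans ?_ <;> gcongr <;> exact min_le_left _ _
  · refine (hsparse m q hbm hm (hq.trans ?_)).trans ?_ <;> gcongr <;> exact min_le_right _ _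

theorem ncard_pendantCount_lt_le_ncard_fewLeavesSet (n m : ℕ) {x : ℝ} :
    {G ∈ planarSet n m | (pendantCount G : ℝ) < x / 2}.ncard ≤
      (fewLeavesSet n m ⌊x⌋₊).ncard := by
  refine Set.ncard_le_ncard ?_ (Set.toFinite _)
  rintro G ⟨⟨hplanar, hm⟩, hlt⟩
  have : ((leaves G).ncard : ℝ) ≤ 2 * pendantCount G := by
    exact_mod_cast ncard_leaves_le_two_mul_pendantCount G
  exact ⟨hplanar, hm, Nat.le_floor (by linarith)⟩

theorem pendant_edges_linear (b B : ℝ) (hb : 0 < b) (hB : B < 3) :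
    ∃ α : ℝ, 0 < α ∧
      ∀ m : ℕ → ℕ,
        (∀ᶠ n : ℕ in atTop, b * (n : ℝ) ≤ (m n : ℝ) ∧ (m n : ℝ) ≤ B * (n : ℝ)) →
        ∀ᶠ n : ℕ in atTop,
          planarProb n (m n) (fun G => (pendantCount G : ℝ) < α * n) <
            Real.exp (-(α * n)) := by
  obtain ⟨α, hα, hrare⟩ := exists_ncard_fewLeavesSet_le hb hB
  refine ⟨α / 2, by positivity, fun m hm => ?_⟩
  filter_upwards [hm, hrare, eventually_gt_atTop 0] with n ⟨hbm, hmB⟩ hrare hn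
  have hαn : 0 < α * n := by positivity
  have hsub := ncard_pendantCount_lt_le_ncard_fewLeavesSet n (m n) (x := α * n)
  simp only [planarProb, div_mul_eq_mul_div]
  calc ({G ∈ planarSet n (m n) | (pendantCount G : ℝ) < α * n / 2}.ncard : ℝ) /
        (planarSet n (m n)).ncard ≤ Real.exp (-(α * n)) :=
        div_le_of_le_mul₀ (Nat.cast_nonneg _) (Real.exp_pos _).le
          ((Nat.cast_le.2 hsub).trans (hrare _ _ hbm hmB (Nat.floor_le hαn.le)))
    _ < Real.exp (-(α * n / 2)) := Real.exp_lt_exp.2 (by linarith)
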